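/- arXiv:2004.07593 — 5 statements merged into one kernel-verified Lean document; each statement's English description precedes it below -/
import Mathlib

section
/- (Self-decomposability of stable laws, α ∈ (0,1).) Let α ∈ (0,1), m₁, m₂ ∈ [0,∞) with m₁ + m₂ > 0, and β ∈ ℝ. Then for every η ∈ (0,1) and every t ∈ ℝ, ψ_α(t)/ψ_α(ηt) = exp(it(1-η)Γ_α + (1-η^α) ∫_ℝ (e^{itu} - 1) ν_α(du)); in particular the quotient is again of the same stable exponential form, with location parameter (1-η)Γ_α and Lévy measure (1-η^α)ν_α. -/
open MeasureTheory

/-- The α-stable Lévy measure on ℝ with density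
`u ↦ m₁ u^(-α-1) 1_{(0,∞)}(u) + m₂ |u|^(-α-1) 1_{(-∞,0)}(u)` w.r.t. Lebesgue measure. -/
noncomputable def nuStable (α m₁ m₂ : ℝ) : Measure ℝ :=
  (volume : Measure ℝ).withDensity fun u =>
    ENNReal.ofReal (if 0 < u then m₁ * u ^ (-α - 1) else if u < 0 then m₂ * |u| ^ (-α - 1) else 0)

/-- Location parameter `Γ_α = β - (m₁ - m₂) ∫₀^∞ u^{-α}(1+u²)^{-1} du` for `α ∈ (0,1)`. -/
noncomputable def Gamma01 (α m₁ m₂ β : ℝ) : ℝ :=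
  β - (m₁ - m₂) * ∫ u in Set.Ioi (0 : ℝ), u ^ (-α) / (1 + u ^ 2)

/-- Characteristic function of the `α`-stable law, `α ∈ (0,1)`:
`ψ_α(t) = exp(itΓ_α + ∫_ℝ (e^{itu} - 1) ν_α(du))`. -/
noncomputable def psi01 (α m₁ m₂ β : ℝ) (t : ℝ) : ℂ :=
  Complex.exp (Complex.I * t * (Gamma01 α m₁ m₂ β) +
    ∫ u : ℝ, (Complex.exp (Complex.I * t * u) - 1) ∂(nuStable α m₁ m₂))

noncomputable def kStable (α m₁ m₂ : ℝ) (u : ℝ) : ℝ :=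
  if 0 < u then m₁ * u ^ (-α - 1) else if u < 0 then m₂ * |u| ^ (-α - 1) else 0

lemma kStable_nonneg (α m₁ m₂ : ℝ) (hm₁ : 0 ≤ m₁) (hm₂ : 0 ≤ m₂) (u : ℝ) :
    0 ≤ kStable α m₁ m₂ u := by
  unfold kStable
  split_ifs <;> positivity

lemma kStable_measurable (α m₁ m₂ : ℝ) : Measurable (kStable α m₁ m₂) := by
  unfold kStable
  refine Measurable.ite measurableSet_Ioi (by fun_prop) ?_
  exact Measurable.ite measurableSet_Iio (by fun_prop) (by fun_prop)

lemma kStable_scale (α m₁ m₂ η : ℝ) (hη : 0 < η) (u : ℝ) :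
    η ^ (α + 1) * kStable α m₁ m₂ (η * u) = kStable α m₁ m₂ u := by
  have e : η ^ (α + 1) * η ^ (-α - 1) = 1 := by
    rw [← Real.rpow_add hη]
    ring_nf
    exact Real.rpow_zero η
  unfold kStable
  rcases lt_trichotomy u 0 with h | h | h
  · have h2 : η * u < 0 := mul_neg_of_pos_of_neg hη h
    rw [if_neg h.not_gt, if_neg h2.not_gt, if_pos h, if_pos h2, abs_mul, abs_of_pos hη,
      Real.mul_rpow hη.le (abs_nonneg u)]
    linear_combination (m₂ * |u| ^ (-α - 1)) * e
  · simp [h]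
  · have h2 : 0 < η * u := mul_pos hη h
    rw [if_pos h, if_pos h2, Real.mul_rpow hη.le h.le]
    linear_combination (m₁ * u ^ (-α - 1)) * e

lemma integral_nuStable (α m₁ m₂ : ℝ) (hm₁ : 0 ≤ m₁) (hm₂ : 0 ≤ m₂) (g : ℝ → ℂ) :
    ∫ u, g u ∂(nuStable α m₁ m₂) = ∫ u, (kStable α m₁ m₂ u : ℂ) * g u := by
  have : nuStable α m₁ m₂ =
      (volume : Measure ℝ).withDensity fun u => ENNReal.ofReal (kStable α m₁ m₂ u) := rfl
  rw [this, integral_withDensity_eq_integral_toReal_smul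
    (kStable_measurable α m₁ m₂).ennreal_ofReal (by simp)]
  refine integral_congr_ae (Filter.Eventually.of_forall fun u => ?_)
  simp [ENNReal.toReal_ofReal (kStable_nonneg α m₁ m₂ hm₁ hm₂ u)]

lemma integral_scale (α m₁ m₂ : ℝ) (hm₁ : 0 ≤ m₁) (hm₂ : 0 ≤ m₂) (η : ℝ) (hη : 0 < η)
    (g : ℝ → ℂ) :
    ∫ u, g (η * u) ∂(nuStable α m₁ m₂) =
      ((η ^ α : ℝ) : ℂ) * ∫ u, g u ∂(nuStable α m₁ m₂) := by
  rw [integral_nuStable α m₁ m₂ hm₁ hm₂, integral_nuStable α m₁ m₂ hm₁ hm₂]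
  have h : ∀ u : ℝ, (kStable α m₁ m₂ u : ℂ) * g (η * u) =
      ((η ^ (α + 1) : ℝ) : ℂ) * ((kStable α m₁ m₂ (η * u) : ℂ) * g (η * u)) := by
    intro u
    rw [← kStable_scale α m₁ m₂ η hη u]
    push_cast
    ring
  simp_rw [h]
  rw [integral_const_mul,
    Measure.integral_comp_mul_left (fun u => (kStable α m₁ m₂ u : ℂ) * g u) η,
    Complex.real_smul, ← mul_assoc, ← Complex.ofReal_mul, abs_of_pos (inv_pos.2 hη),
    Real.rpow_add_one hη.ne', mul_assoc, mul_inv_cancel₀ hη.ne', mul_one]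

theorem stmt_2 (α m₁ m₂ β : ℝ) (hα : 0 < α) (hα1 : α < 1)
    (hm₁ : 0 ≤ m₁) (hm₂ : 0 ≤ m₂) (hm : 0 < m₁ + m₂)
    (η : ℝ) (hη : 0 < η) (hη1 : η < 1) (t : ℝ) :
    psi01 α m₁ m₂ β t / psi01 α m₁ m₂ β (η * t) =
      Complex.exp (Complex.I * t * (((1 - η) * Gamma01 α m₁ m₂ β : ℝ) : ℂ) +
        ((1 - η ^ α : ℝ) : ℂ) *
          ∫ u : ℝ, (Complex.exp (Complex.I * t * u) - 1) ∂(nuStable α m₁ m₂)) := by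
  have h := integral_scale α m₁ m₂ hm₁ hm₂ η hη (fun u => Complex.exp (Complex.I * t * u) - 1)
  have h2 : ∫ u : ℝ, (Complex.exp (Complex.I * ((η * t : ℝ) : ℂ) * u) - 1) ∂(nuStable α m₁ m₂) =
      ((η ^ α : ℝ) : ℂ) *
        ∫ u : ℝ, (Complex.exp (Complex.I * t * u) - 1) ∂(nuStable α m₁ m₂) := by
    rw [← h]
    congr 1
    ext u
    push_cast
    ring_nf
  unfold psi01
  rw [h2, ← Complex.exp_sub]
  congr 1
  push_cast
  ring
end

section
/- (Stein identity for infinitely divisible laws of type C.) Let ν be a Borel measure on ℝ with ν({0}) = 0, ∫_ℝ min(1,u²) ν(du) < ∞ and ∫_{|u|>1} |u| ν(du) < ∞, let β ∈ ℝ, and let μ be a Borel probability measure on ℝ whose characteristic function satisfies ∫_ℝ e^{itx} dμ(x) = exp(itβ + ∫_ℝ (e^{itu} - 1 - itu·1_{|u|≤1}) ν(du)) for all t ∈ ℝ. Then for every real-valued Schwartz function g on ℝ, ∫_ℝ (x - β) g(x) dμ(x) = ∫_ℝ ∫_ℝ u (g(x+u) - g(x)·1_{|u|≤1}) ν(du)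 dμ(x), all integrals being absolutely convergent. -/
open MeasureTheory

noncomputable def stE (t x : ℝ) : ℂ := Complex.exp (Complex.I * t * x)

noncomputable def stk (u : ℝ) : ℝ := if |u| ≤ 1 then u ^ 2 else |u|

noncomputable def stq (t u : ℝ) : ℂ := u * (stE t u - if |u| ≤ 1 then 1 else 0)

lemma norm_stE (t x : ℝ) : ‖stE t x‖ = 1 := by
  rw [stE, Complex.norm_exp]; simp

lemma stE_add (t x u : ℝ) : stE t (x + u) = stE t x * stE t u := by
  rw [stE, stE, stE, ← Complex.exp_add]; congr 1; push_cast; ring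

lemma norm_stE_sub_one (t u : ℝ) : ‖stE t u - 1‖ ≤ |t| * |u| := by
  have := Real.norm_exp_I_mul_ofReal_sub_one_le (x := t * u)
  rw [Real.norm_eq_abs, abs_mul] at this
  rw [stE]; convert this using 4; push_cast; ring

lemma stE_cont : Continuous (fun p : ℝ × ℝ => stE p.1 p.2) := by
  unfold stE; fun_prop

lemma stk_nonneg (u : ℝ) : 0 ≤ stk u := by
  unfold stk; split_ifs <;> positivity

lemma norm_stq (t u : ℝ) : ‖stq t u‖ ≤ (|t| + 1) * stk u := by
  unfold stq stk
  rw [norm_mul, Complex.norm_real, Real.norm_eq_abs]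
  split_ifs with h
  · have := norm_stE_sub_one t u
    calc |u| * ‖stE t u - 1‖ ≤ |u| * (|t| * |u|) := by gcongr
      _ = |t| * u ^ 2 := by rw [← sq_abs u]; ring
      _ ≤ _ := by nlinarith [sq_nonneg u]
  · rw [sub_zero, norm_stE]; nlinarith [abs_nonneg u, abs_nonneg t, mul_nonneg (abs_nonneg t) (abs_nonneg u)]

lemma stk_meas : Measurable stk := by
  unfold stk
  exact Measurable.ite (measurableSet_le (by fun_prop) (by fun_prop)) (by fun_prop) (by fun_prop)

lemma stq_meas : Measurable (fun p : ℝ × ℝ => stq p.1 p.2) := by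
  unfold stq
  refine Measurable.mul (by fun_prop) (stE_cont.measurable.sub ?_)
  exact Measurable.ite (measurableSet_le (by fun_prop) (by fun_prop)) (by fun_prop) (by fun_prop)

lemma stk_integrable (ν : Measure ℝ) (hν : Integrable (fun u : ℝ => min 1 (u ^ 2)) ν)
    (hν' : Integrable (fun u : ℝ => |u|) (ν.restrict {u : ℝ | 1 < |u|})) : Integrable stk ν := by
  have hs : MeasurableSet {u : ℝ | 1 < |u|} := measurableSet_lt (by fun_prop) (by fun_prop)
  have h2 : Integrable (Set.indicator {u : ℝ | 1 < |u|} (fun u : ℝ => |u|)) ν :=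
    (integrable_indicator_iff hs).2 hν'
  refine (hν.add h2).mono' stk_meas.aestronglyMeasurable (Filter.Eventually.of_forall fun u => ?_)
  rw [Real.norm_eq_abs, abs_of_nonneg (stk_nonneg u)]
  simp only [stk, Pi.add_apply, Set.indicator, Set.mem_ofPred_eq]
  by_cases h : |u| ≤ 1
  · have : u ^ 2 ≤ 1 := by rw [← sq_abs]; nlinarith [abs_nonneg u]
    simp [h, not_lt.2 h, this]
  · have : 0 ≤ min 1 (u ^ 2) := by positivity
    simp [h, not_le.1 h]; positivity

lemma st_sigmaFinite (ν : Measure ℝ) (hν0 : ν {0} = 0) (hk : Integrable stk ν) :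
    SigmaFinite ν := by
  refine ⟨⟨⟨fun n : ℕ => {u | 1 / ((n : ℝ) + 1) ≤ ‖stk u‖} ∪ {0}, fun _ => trivial, fun n => ?_, ?_⟩⟩⟩
  · refine (measure_union_le _ _).trans_lt ?_
    rw [hν0, add_zero]
    exact hk.measure_norm_ge_lt_top (by positivity)
  · refine Set.eq_univ_of_forall fun u => ?_
    rw [Set.mem_iUnion]
    by_cases hu : u = 0
    · exact ⟨0, Or.inr hu⟩
    · have : 0 < stk u := by unfold stk; split_ifs <;> positivity
      obtain ⟨n, hn⟩ := exists_nat_one_div_lt this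
      exact ⟨n, Or.inl (hn.le.trans (le_abs_self _))⟩

noncomputable def stD (ν : Measure ℝ) (t : ℝ) : ℂ := ∫ u, stq t u ∂ν

lemma stq_integrable {ν : Measure ℝ} (hk : Integrable stk ν) (t : ℝ) : Integrable (stq t) ν :=
  (hk.const_mul (|t| + 1)).mono'
    (stq_meas.comp (measurable_const.prodMk measurable_id)).aestronglyMeasurable
    (Filter.Eventually.of_forall fun u => norm_stq t u)

lemma norm_stD {ν : Measure ℝ} (hk : Integrable stk ν) (t : ℝ) :
    ‖stD ν t‖ ≤ (|t| + 1) * ∫ u, stk u ∂ν := by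
  rw [← integral_const_mul]
  exact norm_integral_le_of_norm_le (hk.const_mul _) (Filter.Eventually.of_forall fun u => norm_stq t u)

noncomputable def stp (t u : ℝ) : ℂ := stE t u - 1 - (if |u| ≤ 1 then Complex.I * t * u else 0)

lemma stE_hasDeriv (t u : ℝ) : HasDerivAt (fun s => stE s u) (Complex.I * u * stE t u) t := by
  unfold stE
  have h : HasDerivAt (fun s : ℝ => Complex.I * (s : ℂ) * (u : ℂ)) (Complex.I * 1 * u) t :=
    ((Complex.ofRealCLM.hasDerivAt (x := t)).const_mul Complex.I).mul_const _
  convert h.cexp using 1; ring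

lemma stp_hasDeriv (t u : ℝ) : HasDerivAt (fun s => stp s u) (Complex.I * stq t u) t := by
  unfold stp stq
  have h : HasDerivAt (fun s : ℝ => Complex.I * (s : ℂ) * (u : ℂ)) (Complex.I * 1 * u) t :=
    ((Complex.ofRealCLM.hasDerivAt (x := t)).const_mul Complex.I).mul_const _
  have h1 := (stE_hasDeriv t u).sub_const 1
  split_ifs
  · exact (h1.fun_sub h).congr_deriv (by ring)
  · exact (h1.sub_const 0).congr_deriv (by ring)

lemma stp_meas (t : ℝ) : Measurable (stp t) := by
  unfold stp
  refine Measurable.sub (by unfold stE; fun_prop) ?_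
  exact Measurable.ite (measurableSet_le (by fun_prop) (by fun_prop)) (by fun_prop) (by fun_prop)

lemma norm_stp (t u : ℝ) : ‖stp t u‖ ≤ (|t| + 1) * stk u * |t| := by
  have := (convex_closedBall (0 : ℝ) |t|).norm_image_sub_le_of_norm_hasDerivWithin_le
    (f := fun s => stp s u) (f' := fun s => Complex.I * stq s u) (C := (|t| + 1) * stk u)
    (x := 0) (y := t)
    (fun s _ => (stp_hasDeriv s u).hasDerivWithinAt) (fun s hs => ?_) (by simp) (by simp)
  · have h0 : stp 0 u = 0 := by simp [stp, stE]
    simpa [h0] using this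
  · rw [norm_mul, Complex.norm_I, one_mul]
    refine (norm_stq s u).trans ?_
    have : |s| ≤ |t| := by simpa using hs
    have := stk_nonneg u
    gcongr

lemma stpsi_hasDeriv {ν : Measure ℝ} (hk : Integrable stk ν) (t : ℝ) :
    HasDerivAt (fun s => ∫ u, stp s u ∂ν) (Complex.I * stD ν t) t := by
  rw [stD, ← integral_const_mul]
  refine (hasDerivAt_integral_of_dominated_loc_of_deriv_le (F := stp)
    (F' := fun s u => Complex.I * stq s u)
    (bound := fun u => (|t| + 1 + 1) * stk u) (Metric.ball_mem_nhds t one_pos)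
    (Filter.Eventually.of_forall fun s => (stp_meas s).aestronglyMeasurable) ?_ ?_ ?_ ?_ ?_).2
  · exact ((hk.const_mul (|t| + 1)).mul_const |t|).mono' (stp_meas t).aestronglyMeasurable
      (Filter.Eventually.of_forall fun u => norm_stp t u)
  · exact ((stq_integrable hk t).const_mul _).aestronglyMeasurable
  · refine Filter.Eventually.of_forall fun u s hs => ?_
    rw [norm_mul, Complex.norm_I, one_mul]
    refine (norm_stq s u).trans ?_
    rw [Metric.mem_ball, Real.dist_eq] at hs
    have : |s| ≤ |t| + 1 := by
      have := abs_sub_abs_le_abs_sub s t; linarith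
    have := stk_nonneg u
    gcongr
  · exact hk.const_mul _
  · exact Filter.Eventually.of_forall fun u s _ => stp_hasDeriv s u

noncomputable def stPhi (μ : Measure ℝ) (t : ℝ) : ℂ := ∫ x, stE t x ∂μ

lemma stPhi_hasDeriv {ν μ : Measure ℝ} (hk : Integrable stk ν) (β : ℝ)
    (hcf : ∀ t : ℝ, stPhi μ t = Complex.exp (Complex.I * t * β + ∫ u, stp t u ∂ν)) (t : ℝ) :
    HasDerivAt (stPhi μ) (Complex.I * (stPhi μ t * (β + stD ν t))) t := by
  have h : HasDerivAt (fun s : ℝ => Complex.I * (s : ℂ) * (β : ℂ)) (Complex.I * 1 * β) t :=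
    ((Complex.ofRealCLM.hasDerivAt (x := t)).const_mul Complex.I).mul_const _
  have h2 := (h.fun_add (stpsi_hasDeriv hk t)).cexp
  rw [show stPhi μ = fun t : ℝ => Complex.exp (Complex.I * t * β + ∫ u, stp t u ∂ν) from funext hcf]
  exact h2.congr_deriv (by ring)

lemma norm_stPhi (μ : Measure ℝ) [IsProbabilityMeasure μ] (t : ℝ) : ‖stPhi μ t‖ ≤ 1 := by
  have := norm_integral_le_of_norm_le_const (μ := μ) (f := stE t) (C := 1)
    (Filter.Eventually.of_forall fun x => (norm_stE t x).le)
  simpa [stPhi] using this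

lemma stE_meas2 (x : ℝ) : Measurable (fun w : ℝ => stE (2 * Real.pi * w) x) := by
  unfold stE; fun_prop

/-- Fubini for the outer integral. -/
lemma st_fubini (μ : Measure ℝ) [IsProbabilityMeasure μ] {H : ℝ → ℂ} (hH : Integrable H) :
    ∫ x, (∫ w, H w * stE (2 * Real.pi * w) x) ∂μ = ∫ w, H w * stPhi μ (2 * Real.pi * w) := by
  rw [integral_integral_swap]
  · simp only [integral_const_mul, stPhi]
  · have h1 : Integrable (fun z : ℝ × ℝ => H z.2) (μ.prod volume) := by
      simpa using (integrable_const (1 : ℂ) (μ := μ)).mul_prod hH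
    refine h1.mul_bdd (c := 1) ?_ (Filter.Eventually.of_forall fun z => (norm_stE _ _).le)
    exact (Measurable.aestronglyMeasurable (by unfold stE; fun_prop))

lemma st_weight (h : SchwartzMap ℝ ℂ) :
    Integrable (fun w : ℝ => ‖h w‖ * (2 * Real.pi * |w| + 1)) := by
  have h1 := h.integrable_pow_mul volume 1
  have h2 := h.integrable (μ := volume) |>.norm
  refine ((h1.const_mul (2 * Real.pi)).add h2).congr (Filter.Eventually.of_forall fun w => ?_)
  simp; ring

lemma abs_two_pi_mul (w : ℝ) : |2 * Real.pi * w| = 2 * Real.pi * |w| := by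
  rw [abs_mul, abs_of_pos (by positivity)]

lemma st_inversion (f : SchwartzMap ℝ ℂ) : ∃ h : SchwartzMap ℝ ℂ,
    ∀ x, f x = ∫ w, h w * stE (2 * Real.pi * w) x := by
  refine ⟨FourierTransform.fourier f, fun x => ?_⟩
  have h1 : FourierTransformInv.fourierInv (FourierTransform.fourier f) = f :=
    FourierTransform.fourierInv_fourier_eq f
  have h2 := congrArg (fun F : SchwartzMap ℝ ℂ => F x) h1
  simp only [SchwartzMap.fourierInv_coe] at h2
  rw [← h2, Real.fourierInv_eq']
  refine integral_congr_ae (Filter.Eventually.of_forall fun w => ?_)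
  simp only [smul_eq_mul, stE]
  rw [mul_comm]
  congr 2
  simp
  ring

lemma st_inner {ν : Measure ℝ} [SigmaFinite ν] (hk : Integrable stk ν) (f h : SchwartzMap ℝ ℂ)
    (hf : ∀ x, f x = ∫ w, h w * stE (2 * Real.pi * w) x) (x : ℝ) :
    ∫ u : ℝ, (u : ℂ) * (f (x + u) - if |u| ≤ 1 then f x else 0) ∂ν =
      ∫ w, (h w * stD ν (2 * Real.pi * w)) * stE (2 * Real.pi * w) x := by
  have hint : ∀ x, Integrable (fun w => h w * stE (2 * Real.pi * w) x) := fun x =>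
    h.integrable.mul_bdd (c := 1) (stE_meas2 x).aestronglyMeasurable
      (Filter.Eventually.of_forall fun z => (norm_stE _ _).le)
  have e1 : ∀ u : ℝ, (u : ℂ) * (f (x + u) - if |u| ≤ 1 then f x else 0) =
      ∫ w, (h w * stE (2 * Real.pi * w) x) * stq (2 * Real.pi * w) u := by
    intro u
    unfold stq
    split_ifs
    · rw [hf, hf, ← integral_sub (hint _) (hint _), ← integral_const_mul]
      refine integral_congr_ae (Filter.Eventually.of_forall fun w => ?_)
      simp only [stE_add]; ring
    · rw [hf, sub_zero, ← integral_const_mul]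
      refine integral_congr_ae (Filter.Eventually.of_forall fun w => ?_)
      simp only [stE_add]; ring
  simp only [e1]
  rw [integral_integral_swap]
  · refine integral_congr_ae (Filter.Eventually.of_forall fun w => ?_)
    simp only [integral_const_mul, stD]; ring
  · refine (hk.mul_prod (st_weight h)).mono' ?_ (Filter.Eventually.of_forall fun z => ?_)
    · refine Measurable.aestronglyMeasurable ?_
      refine Measurable.mul (Measurable.mul ?_ ?_) ?_
      · exact h.continuous.measurable.comp measurable_snd
      · exact (stE_meas2 x).comp measurable_snd
      · exact stq_meas.comp ((measurable_snd.const_mul _).prodMk measurable_fst)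
    · simp only [Function.uncurry, norm_mul, norm_stE, mul_one]
      have := norm_stq (2 * Real.pi * z.2) z.1
      rw [abs_two_pi_mul] at this
      calc _ ≤ ‖h z.2‖ * ((2 * Real.pi * |z.2| + 1) * stk z.1) := by gcongr
        _ = _ := by ring

lemma stE_hasDeriv2 (w x : ℝ) : HasDerivAt (fun w => stE (2 * Real.pi * w) x)
    (2 * Real.pi * (Complex.I * x * stE (2 * Real.pi * w) x)) w := by
  have h1 := stE_hasDeriv (2 * Real.pi * w) x
  have h2 : HasDerivAt (fun w : ℝ => 2 * Real.pi * w) (2 * Real.pi) w := by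
    simpa using (hasDerivAt_id w).const_mul (2 * Real.pi)
  have := h1.scomp w h2
  refine this.congr_deriv ?_
  rw [Complex.real_smul]; push_cast; ring

lemma st_mul (f h : SchwartzMap ℝ ℂ)
    (hf : ∀ x, f x = ∫ w, h w * stE (2 * Real.pi * w) x) (x : ℝ) :
    (x : ℂ) * f x = Complex.I / (2 * Real.pi) * ∫ w, deriv h w * stE (2 * Real.pi * w) x := by
  have hint : ∀ h : SchwartzMap ℝ ℂ, Integrable (fun w => h w * stE (2 * Real.pi * w) x) := fun h =>
    h.integrable.mul_bdd (c := 1) (stE_meas2 x).aestronglyMeasurable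
      (Filter.Eventually.of_forall fun z => (norm_stE _ _).le)
  have key := integral_mul_deriv_eq_deriv_mul_of_integrable (u := h) (u' := deriv h)
    (v := fun w => stE (2 * Real.pi * w) x)
    (v' := fun w => 2 * Real.pi * (Complex.I * x * stE (2 * Real.pi * w) x))
    (fun w _ => h.differentiableAt.hasDerivAt) (fun w _ => stE_hasDeriv2 w x) ?_ ?_ (hint h)
  · have e : ∀ w, h w * (2 * Real.pi * (Complex.I * x * stE (2 * Real.pi * w) x)) =
        (2 * Real.pi * Complex.I * x) * (h w * stE (2 * Real.pi * w) x) := fun w => by ring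
    simp only [e] at key
    rw [integral_const_mul, ← hf] at key
    have hpi : (Real.pi : ℂ) ≠ 0 := by exact_mod_cast Real.pi_ne_zero
    rw [← neg_neg (∫ w, deriv h w * stE (2 * Real.pi * w) x), ← key]
    field_simp
    linear_combination (x * f x : ℂ) * Complex.I_sq
  · refine ((hint h).const_mul (2 * Real.pi * Complex.I * x)).congr
      (Filter.Eventually.of_forall fun w => ?_)
    simp only [Pi.mul_apply]; ring
  · exact hint (SchwartzMap.derivCLM ℂ ℂ h)

lemma st_complex {ν μ : Measure ℝ} [SigmaFinite ν] [IsProbabilityMeasure μ]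
    (hk : Integrable stk ν) (β : ℝ)
    (hcf : ∀ t : ℝ, stPhi μ t = Complex.exp (Complex.I * t * β + ∫ u, stp t u ∂ν))
    (f : SchwartzMap ℝ ℂ) :
    ∫ x : ℝ, (x : ℂ) * f x ∂μ = β * ∫ x : ℝ, f x ∂μ +
      ∫ x : ℝ, ∫ u : ℝ, (u : ℂ) * (f (x + u) - if |u| ≤ 1 then f x else 0) ∂ν ∂μ := by
  obtain ⟨h, hf⟩ := st_inversion f
  have hΦ := stPhi_hasDeriv hk β hcf
  have hΦc : Continuous (stPhi μ) := continuous_iff_continuousAt.2 fun t => (hΦ t).continuousAt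
  have hΦm : AEStronglyMeasurable (fun w : ℝ => stPhi μ (2 * Real.pi * w)) volume :=
    (hΦc.comp (continuous_const.mul continuous_id)).aestronglyMeasurable
  have hDm : AEStronglyMeasurable (fun w : ℝ => stD ν (2 * Real.pi * w)) volume := by
    have : StronglyMeasurable (stD ν) :=
      StronglyMeasurable.integral_prod_right (f := fun t u => stq t u) stq_meas.stronglyMeasurable
    exact (this.comp_measurable (by fun_prop)).aestronglyMeasurable
  have hhD : Integrable (fun w => h w * stD ν (2 * Real.pi * w)) := by
    refine ((st_weight h).mul_const (∫ u, stk u ∂ν)).mono'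
      (h.continuous.aestronglyMeasurable.mul hDm) (Filter.Eventually.of_forall fun w => ?_)
    have := norm_stD hk (2 * Real.pi * w)
    rw [abs_two_pi_mul] at this
    calc _ = ‖h w‖ * ‖stD ν (2 * Real.pi * w)‖ := norm_mul _ _
      _ ≤ ‖h w‖ * ((2 * Real.pi * |w| + 1) * ∫ u, stk u ∂ν) := by gcongr
      _ = _ := by ring
  have mulΦ : ∀ {H : ℝ → ℂ}, Integrable H → Integrable (fun w => H w * stPhi μ (2 * Real.pi * w)) :=
    fun hH => hH.mul_bdd (c := 1) hΦm (Filter.Eventually.of_forall fun z => norm_stPhi μ _)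
  have hd : Integrable (deriv h) := (SchwartzMap.derivCLM ℂ ℂ h).integrable
  have hpi : (Real.pi : ℂ) ≠ 0 := by exact_mod_cast Real.pi_ne_zero
  simp only [st_inner hk f h hf, st_mul f h hf]
  rw [integral_const_mul, st_fubini μ hhD, st_fubini μ hd]
  simp only [hf]
  rw [st_fubini μ h.integrable]
  have hv : ∀ w : ℝ, HasDerivAt (fun w : ℝ => stPhi μ (2 * Real.pi * w))
      (2 * Real.pi * (Complex.I * (stPhi μ (2 * Real.pi * w) * (β + stD ν (2 * Real.pi * w))))) w := by
    intro w
    have h2 : HasDerivAt (fun w : ℝ => 2 * Real.pi * w) (2 * Real.pi) w := by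
      simpa using (hasDerivAt_id w).const_mul (2 * Real.pi)
    refine ((hΦ (2 * Real.pi * w)).scomp w h2).congr_deriv ?_
    rw [Complex.real_smul]; push_cast; ring
  have i1 := (mulΦ h.integrable).const_mul (β : ℂ)
  have i2 := mulΦ hhD
  have e : ∀ w : ℝ, h w * (2 * Real.pi * (Complex.I *
      (stPhi μ (2 * Real.pi * w) * (β + stD ν (2 * Real.pi * w))))) =
      (2 * Real.pi * Complex.I) * (β * (h w * stPhi μ (2 * Real.pi * w)) +
        h w * stD ν (2 * Real.pi * w) * stPhi μ (2 * Real.pi * w)) := fun w => by ring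
  have key := integral_mul_deriv_eq_deriv_mul_of_integrable (u := h) (u' := deriv h)
    (v := fun w : ℝ => stPhi μ (2 * Real.pi * w))
    (v' := fun w : ℝ => 2 * Real.pi * (Complex.I *
      (stPhi μ (2 * Real.pi * w) * (β + stD ν (2 * Real.pi * w)))))
    (fun w _ => h.differentiableAt.hasDerivAt) (fun w _ => hv w) ?_ (mulΦ hd) (mulΦ h.integrable)
  · simp only [e] at key
    rw [integral_const_mul, integral_add i1 i2, integral_const_mul] at key
    rw [← neg_neg (∫ w, deriv h w * stPhi μ (2 * Real.pi * w)), ← key]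
    field_simp
    rw [Complex.I_sq]; ring
  · refine ((i1.add i2).const_mul (2 * Real.pi * Complex.I)).congr
      (Filter.Eventually.of_forall fun w => ?_)
    simp only [Pi.mul_apply, Pi.add_apply]; ring

theorem stmt_5 (ν : Measure ℝ) (hν0 : ν {0} = 0)
    (hν : Integrable (fun u : ℝ => min 1 (u ^ 2)) ν)
    (hν' : Integrable (fun u : ℝ => |u|) (ν.restrict {u : ℝ | 1 < |u|}))
    (β : ℝ) (μ : Measure ℝ) [IsProbabilityMeasure μ]
    (hcf : ∀ t : ℝ, ∫ x : ℝ, Complex.exp (Complex.I * t * x) ∂μ =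
      Complex.exp (Complex.I * t * β +
        ∫ u : ℝ, (Complex.exp (Complex.I * t * u) - 1 -
          (if |u| ≤ 1 then Complex.I * t * u else 0)) ∂ν))
    (g : SchwartzMap ℝ ℝ) :
    Integrable (fun x : ℝ => (x - β) * g x) μ ∧
    (∀ x : ℝ, Integrable (fun u : ℝ => u * (g (x + u) - (if |u| ≤ 1 then g x else 0))) ν) ∧
    Integrable (fun x : ℝ =>
      ∫ u : ℝ, u * (g (x + u) - (if |u| ≤ 1 then g x else 0)) ∂ν) μ ∧
    ∫ x : ℝ, (x - β) * g x ∂μ =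
      ∫ x : ℝ, ∫ u : ℝ, u * (g (x + u) - (if |u| ≤ 1 then g x else 0)) ∂ν ∂μ := by
  have hk := stk_integrable ν hν hν'
  have := st_sigmaFinite ν hν0 hk
  obtain ⟨C0, hC0p, hC0⟩ := g.decay 0 0
  obtain ⟨C1, hC1p, hC1⟩ := g.decay 1 0
  obtain ⟨C2, hC2p, hC2⟩ := g.decay 0 1
  simp only [pow_zero, one_mul, pow_one, norm_iteratedFDeriv_zero] at hC0 hC1
  have hD : ∀ x, ‖deriv g x‖ ≤ C2 := fun x => by
    have := hC2 x
    rwa [norm_iteratedFDeriv_eq_norm_iteratedDeriv, iteratedDeriv_one, pow_zero, one_mul] at this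
  have hLip : ∀ x u : ℝ, ‖g (x + u) - g x‖ ≤ C2 * |u| := fun x u => by
    have := convex_univ.norm_image_sub_le_of_norm_deriv_le (f := g) (C := C2) (x := x) (y := x + u)
      (fun y _ => g.differentiableAt) (fun y _ => hD y) trivial trivial
    simpa using this
  have bound : ∀ x u : ℝ, ‖u * (g (x + u) - (if |u| ≤ 1 then g x else 0))‖ ≤ (C0 + C2) * stk u := by
    intro x u
    rw [norm_mul, Real.norm_eq_abs u]
    unfold stk
    split_ifs
    · calc _ ≤ |u| * (C2 * |u|) := by gcongr; exact hLip x u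
        _ = C2 * u ^ 2 := by rw [← sq_abs u]; ring
        _ ≤ _ := by gcongr; linarith
    · rw [sub_zero]
      calc _ ≤ |u| * C0 := by gcongr; exact hC0 _
        _ ≤ _ := by rw [mul_comm]; gcongr; linarith
  have meas : ∀ x : ℝ, Measurable (fun u : ℝ => u * (g (x + u) - (if |u| ≤ 1 then g x else 0))) := by
    intro x
    refine measurable_id.mul ((g.continuous.measurable.comp (measurable_const_add x)).sub ?_)
    exact Measurable.ite (measurableSet_le (by fun_prop) (by fun_prop)) (by fun_prop) (by fun_prop)
  have hkc := hk.const_mul (C0 + C2)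
  have hgi : Integrable g μ := Integrable.of_bound g.continuous.aestronglyMeasurable C0
    (Filter.Eventually.of_forall hC0)
  have hxg : Integrable (fun x : ℝ => x * g x) μ :=
    Integrable.of_bound (continuous_id.mul g.continuous).aestronglyMeasurable C1
      (Filter.Eventually.of_forall fun x => by simpa using hC1 x)
  have hcont : Continuous (fun x : ℝ =>
      ∫ u : ℝ, u * (g (x + u) - (if |u| ≤ 1 then g x else 0)) ∂ν) := by
    refine continuous_of_dominated (fun x => (meas x).aestronglyMeasurable)
      (fun x => Filter.Eventually.of_forall (bound x)) hkc (Filter.Eventually.of_forall fun u => ?_)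
    have := g.continuous
    split_ifs <;> fun_prop
  have hi : Integrable (fun x : ℝ => (x - β) * g x) μ :=
    (hxg.sub (hgi.const_mul β)).congr (Filter.Eventually.of_forall fun x => by simp; ring)
  refine ⟨hi, fun x => hkc.mono' (meas x).aestronglyMeasurable
      (Filter.Eventually.of_forall (bound x)), ?_, ?_⟩
  · exact Integrable.of_bound hcont.aestronglyMeasurable (∫ u, (C0 + C2) * stk u ∂ν)
      (Filter.Eventually.of_forall fun x =>
        norm_integral_le_of_norm_le hkc (Filter.Eventually.of_forall (bound x)))
  · have main := st_complex hk β hcf (g.postcompCLM (𝕜 := ℝ) Complex.ofRealCLM)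
    simp only [SchwartzMap.postcompCLM_apply, Complex.ofRealCLM_apply] at main
    have e : ∀ x u : ℝ, (u : ℂ) * ((g (x + u) : ℂ) - if |u| ≤ 1 then (g x : ℂ) else 0) =
        ((u * (g (x + u) - (if |u| ≤ 1 then g x else 0)) : ℝ) : ℂ) := by
      intro x u; split_ifs <;> push_cast <;> rfl
    simp only [e, ← Complex.ofReal_mul, integral_complex_ofReal] at main
    rw [← Complex.ofReal_add, Complex.ofReal_inj] at main
    rw [← sub_eq_iff_eq_add'] at main
    rw [← main, ← integral_const_mul, ← integral_sub hxg (hgi.const_mul β)]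
    refine integral_congr_ae (Filter.Eventually.of_forall fun x => ?_)
    simp only []; ring
end

section
/- (Stein identity for stable laws with α ∈ (0,1).) Let α ∈ (0,1), m₁, m₂ ∈ [0,∞) with m₁ + m₂ > 0, β ∈ ℝ, and let μ be a Borel probability measure on ℝ whose characteristic function satisfies ∫_ℝ e^{itx} dμ(x) = ψ_α(t) for all t ∈ ℝ. Then for every real-valued Schwartz function g on ℝ, ∫_ℝ [(x - Γ_α) g(x) - m₁ ∫₀^∞ g(x+u) u^{-α} du + m₂ ∫₀^∞ g(x-u) u^{-α} du] dμ(x) = 0, all integrals being absolutely convergent. -/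
open MeasureTheory

open Filter Topology

open scoped FourierTransform in
lemma exists_fourier_rep (g : SchwartzMap ℝ ℝ) :
    ∃ h : SchwartzMap ℝ ℂ, ∀ x : ℝ, (g x : ℂ) = ∫ t : ℝ, h t * Complex.exp (Complex.I * t * x) := by
  let gc : SchwartzMap ℝ ℂ := g.postcompCLM Complex.ofRealCLM
  let e : ℝ ≃L[ℝ] ℝ := ContinuousLinearEquiv.unitsEquivAut ℝ
    (Units.mk0 (2 * Real.pi) (by positivity))
  let gt : SchwartzMap ℝ ℂ := SchwartzMap.compCLMOfContinuousLinearEquiv ℂ e gc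
  refine ⟨𝓕 gt, fun x => ?_⟩
  have h1 : gt (x / (2 * Real.pi)) = (g x : ℂ) := by
    have : e (x / (2 * Real.pi)) = x := by
      simp [e]
    change gc (e _) = _
    rw [this]; rfl
  have h2 : gt = 𝓕⁻ (𝓕 gt) := (FourierTransform.fourierInv_fourier_eq gt).symm
  rw [← h1]
  conv_lhs => rw [h2]
  rw [SchwartzMap.fourierInv_coe, Real.fourierInv_eq']
  refine integral_congr_ae (Eventually.of_forall fun t => ?_)
  simp only [smul_eq_mul]
  rw [mul_comm]
  congr 2
  have : (Real.pi : ℂ) ≠ 0 := by exact_mod_cast Real.pi_ne_zero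
  simp
  field_simp

lemma norm_exp_I (t x : ℝ) : ‖Complex.exp (Complex.I * t * x)‖ = 1 := by
  rw [show Complex.I * t * x = ((t * x : ℝ) : ℂ) * Complex.I by push_cast; ring]
  exact Complex.norm_exp_ofReal_mul_I _

lemma schwartz_mul_integrable (h : SchwartzMap ℝ ℂ) (F : ℝ → ℂ) (hF : Continuous F) (M : ℝ)
    (hM : ∀ t, ‖F t‖ ≤ M) : Integrable (fun t => h t * F t) :=
  h.integrable.mul_bdd (c := M) hF.aestronglyMeasurable (Eventually.of_forall hM)

lemma ibp (h : SchwartzMap ℝ ℂ) (F F' : ℝ → ℂ) (hF : ∀ t, HasDerivAt F (F' t) t)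
    (hF' : Continuous F') (M M' : ℝ) (hM : ∀ t, ‖F t‖ ≤ M) (hM' : ∀ t, ‖F' t‖ ≤ M') :
    ∫ t, SchwartzMap.derivCLM ℂ ℂ h t * F t = - ∫ t, h t * F' t := by
  have hFc : Continuous F := continuous_iff_continuousAt.2 fun t => (hF t).continuousAt
  rw [integral_mul_deriv_eq_deriv_mul_of_integrable (u := h) (v' := F') (u' := SchwartzMap.derivCLM ℂ ℂ h) (v := F)]
  · simp
  · intro x _
    exact h.differentiableAt.hasDerivAt
  · intro x _; exact hF x
  · exact schwartz_mul_integrable h F' hF' M' hM'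
  · exact schwartz_mul_integrable _ F hFc M hM
  · exact schwartz_mul_integrable _ F hFc M hM

lemma fubini_mu (μ : Measure ℝ) [IsProbabilityMeasure μ] (k : ℝ → ℂ) (hk : Integrable k) :
    ∫ x, (∫ t : ℝ, k t * Complex.exp (Complex.I * t * x)) ∂μ =
      ∫ t : ℝ, k t * ∫ x : ℝ, Complex.exp (Complex.I * t * x) ∂μ := by
  rw [integral_integral_swap]
  · simp_rw [integral_const_mul]
  · have h1 : Integrable (fun p : ℝ × ℝ => k p.2) (μ.prod volume) := hk.comp_snd μ
    refine h1.mul_bdd (c := 1) ?_ (Eventually.of_forall fun p => ?_)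
    · exact Continuous.aestronglyMeasurable (by fun_prop)
    · exact (norm_exp_I _ _).le

/-- exponential damping factor -/
noncomputable def damp (ε u : ℝ) : ℂ := ((Real.exp (-ε * |u|) : ℝ) : ℂ)

/-- damped first-moment transform -/
noncomputable def Ldamp (ν : Measure ℝ) (ε t : ℝ) : ℂ :=
  ∫ u : ℝ, (u : ℂ) * damp ε u * Complex.exp (Complex.I * t * u) ∂ν

/-- damped exponent -/
noncomputable def Phidamp (ν : Measure ℝ) (ε t : ℝ) : ℂ :=
  ∫ u : ℝ, (Complex.exp (Complex.I * t * u) - 1) * damp ε u ∂ν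

lemma damp_cont (ε : ℝ) : Continuous (damp ε) := by unfold damp; fun_prop

lemma norm_damp (ε u : ℝ) : ‖damp ε u‖ = Real.exp (-ε * |u|) := by
  unfold damp; rw [Complex.norm_real, Real.norm_of_nonneg (Real.exp_pos _).le]

lemma norm_damp_le (ε u : ℝ) (hε : 0 < ε) : ‖damp ε u‖ ≤ 1 := by
  rw [norm_damp, Real.exp_le_one_iff]
  have := abs_nonneg u
  nlinarith

lemma damp_tendsto (u : ℝ) : Tendsto (fun ε => damp ε u) (𝓝[>] 0) (𝓝 1) := by
  have : Continuous fun ε => damp ε u := by unfold damp; fun_prop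
  have h := this.tendsto 0
  simp only [damp, neg_zero, zero_mul, Real.exp_zero, Complex.ofReal_one] at h
  exact h.mono_left nhdsWithin_le_nhds

lemma u_damp_bound (ε u : ℝ) (hε : 0 < ε) : ‖(u : ℂ) * damp ε u‖ ≤ (1 + 1 / ε) * min 1 |u| := by
  rw [norm_mul, norm_damp, Complex.norm_real, Real.norm_eq_abs]
  have hu := abs_nonneg u
  have he : Real.exp (-ε * |u|) ≤ 1 := by
    rw [Real.exp_le_one_iff]; nlinarith
  have hp := Real.exp_pos (-ε * |u|)
  have h2 : 0 < 1 / ε := by positivity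
  rcases le_total 1 |u| with h | h
  · rw [min_eq_left h, mul_one]
    have h1 : ε * |u| * Real.exp (-(ε * |u|)) ≤ 1 := by
      have := Real.add_one_le_exp (ε * |u|)
      rw [Real.exp_neg, ← div_eq_mul_inv, div_le_one (Real.exp_pos _)]
      linarith
    have h3 : |u| * Real.exp (-ε * |u|) ≤ 1 / ε := by
      rw [le_div_iff₀ hε, neg_mul]; linarith
    linarith
  · rw [min_eq_right h]
    nlinarith [mul_nonneg hu h2.le]

lemma exp_sub_one_bound (t u : ℝ) :
    ‖Complex.exp (Complex.I * t * u) - 1‖ ≤ (2 + |t|) * min 1 |u| := by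
  have h0 := abs_nonneg t
  rcases le_total 1 |u| with h | h
  · rw [min_eq_left h, mul_one]
    have := norm_sub_le (Complex.exp (Complex.I * t * u)) 1
    rw [norm_exp_I, norm_one] at this
    linarith
  · rw [min_eq_right h]
    have := Real.norm_exp_I_mul_ofReal_sub_one_le (x := t * u)
    rw [show Complex.I * t * u = Complex.I * ((t * u : ℝ) : ℂ) by push_cast; ring]
    refine this.trans ?_
    rw [Real.norm_eq_abs, abs_mul]
    nlinarith [abs_nonneg u]

lemma u_damp_int (ν : Measure ℝ) (hν : Integrable (fun u : ℝ => min 1 |u|) ν)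
    (ε : ℝ) (hε : 0 < ε) : Integrable (fun u : ℝ => (u : ℂ) * damp ε u) ν := by
  refine (hν.const_mul (1 + 1 / ε)).mono' ?_ (Eventually.of_forall fun u => u_damp_bound ε u hε)
  have := damp_cont ε
  exact Continuous.aestronglyMeasurable (by fun_prop)

lemma Ldamp_bound (ν : Measure ℝ) (ε : ℝ) (t : ℝ) :
    ‖Ldamp ν ε t‖ ≤ ∫ u : ℝ, ‖(u : ℂ) * damp ε u‖ ∂ν := by
  refine (norm_integral_le_integral_norm _).trans (le_of_eq ?_)
  congr 1; ext u; rw [norm_mul _ (Complex.exp _), norm_exp_I, mul_one]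

lemma Ldamp_cont (ν : Measure ℝ) (hν : Integrable (fun u : ℝ => min 1 |u|) ν)
    (ε : ℝ) (hε : 0 < ε) : Continuous (Ldamp ν ε) := by
  have := damp_cont ε
  refine continuous_of_dominated (bound := fun u => ‖(u : ℂ) * damp ε u‖) ?_ ?_ ?_ ?_
  · intro t; exact Continuous.aestronglyMeasurable (by fun_prop)
  · intro t; refine Eventually.of_forall fun u => ?_
    rw [norm_mul _ (Complex.exp _), norm_exp_I, mul_one]
  · exact (u_damp_int ν hν ε hε).norm
  · refine Eventually.of_forall fun u => ?_
    fun_prop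

lemma Phi_int (ν : Measure ℝ) (hν : Integrable (fun u : ℝ => min 1 |u|) ν)
    (ε : ℝ) (hε : 0 < ε) (t : ℝ) :
    Integrable (fun u : ℝ => (Complex.exp (Complex.I * t * u) - 1) * damp ε u) ν := by
  have := damp_cont ε
  refine (hν.const_mul (2 + |t|)).mono' (Continuous.aestronglyMeasurable (by fun_prop))
    (Eventually.of_forall fun u => ?_)
  rw [norm_mul]
  have h1 := exp_sub_one_bound t u
  have h2 := norm_damp_le ε u hε
  nlinarith [norm_nonneg (damp ε u), norm_nonneg (Complex.exp (Complex.I * t * u) - 1)]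

lemma Phi_deriv (ν : Measure ℝ) (hν : Integrable (fun u : ℝ => min 1 |u|) ν)
    (ε : ℝ) (hε : 0 < ε) (t : ℝ) :
    HasDerivAt (Phidamp ν ε) (Complex.I * Ldamp ν ε t) t := by
  have hc := damp_cont ε
  have := (hasDerivAt_integral_of_dominated_loc_of_deriv_le (μ := ν) (s := Set.univ) (x₀ := t)
    (F := fun (t u : ℝ) => (Complex.exp (Complex.I * t * u) - 1) * damp ε u)
    (F' := fun (t u : ℝ) => Complex.I * ((u : ℂ) * damp ε u * Complex.exp (Complex.I * t * u)))
    (bound := fun u => ‖(u : ℂ) * damp ε u‖) Filter.univ_mem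
    (Eventually.of_forall fun t => Continuous.aestronglyMeasurable (by fun_prop))
    (Phi_int ν hν ε hε t) (Continuous.aestronglyMeasurable (by fun_prop))
    (Eventually.of_forall fun u s _ => ?_) (u_damp_int ν hν ε hε).norm
    (Eventually.of_forall fun u s _ => ?_)).2
  · rw [integral_const_mul] at this
    exact this
  · rw [norm_mul, Complex.norm_I, one_mul, norm_mul _ (Complex.exp _), norm_exp_I, mul_one]
  · have h1 : HasDerivAt (fun s : ℝ => Complex.I * (s : ℂ) * u) (Complex.I * 1 * u) s :=
      ((Complex.ofRealCLM.hasDerivAt (x := s)).const_mul Complex.I).mul_const (u : ℂ)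
    refine ((h1.cexp.sub_const 1).mul_const (damp ε u)).congr_deriv ?_
    ring

lemma Phi_re (ν : Measure ℝ) (hν : Integrable (fun u : ℝ => min 1 |u|) ν)
    (ε : ℝ) (hε : 0 < ε) (t : ℝ) : (Phidamp ν ε t).re ≤ 0 := by
  unfold Phidamp
  rw [← RCLike.re_eq_complex_re, ← integral_re (Phi_int ν hν ε hε t)]
  refine integral_nonpos fun u => ?_
  rw [RCLike.re_eq_complex_re, damp, Complex.re_mul_ofReal]
  have h1 : (Complex.exp (Complex.I * t * u)).re ≤ 1 :=
    (Complex.re_le_norm _).trans (norm_exp_I _ _).le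
  simp only [Complex.sub_re, Complex.one_re, Pi.zero_apply]
  exact mul_nonpos_of_nonpos_of_nonneg (by linarith) (Real.exp_pos _).le

lemma Phi_tendsto (ν : Measure ℝ) (hν : Integrable (fun u : ℝ => min 1 |u|) ν) (t : ℝ) : Tendsto (fun ε => Phidamp ν ε t) (𝓝[>] 0)
    (𝓝 (∫ u : ℝ, (Complex.exp (Complex.I * t * u) - 1) ∂ν)) := by
  refine tendsto_integral_filter_of_dominated_convergence (fun u => (2 + |t|) * min 1 |u|) ?_ ?_
    (hν.const_mul _) ?_
  · refine Eventually.of_forall fun ε => ?_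
    have := damp_cont ε
    exact Continuous.aestronglyMeasurable (by fun_prop)
  · filter_upwards [self_mem_nhdsWithin] with ε hε
    refine Eventually.of_forall fun u => ?_
    rw [norm_mul]
    have h1 := exp_sub_one_bound t u
    have h2 := norm_damp_le ε u hε
    nlinarith [norm_nonneg (damp ε u), norm_nonneg (Complex.exp (Complex.I * t * u) - 1)]
  · refine Eventually.of_forall fun u => ?_
    simpa using (damp_tendsto u).const_mul (Complex.exp (Complex.I * t * u) - 1)

/-- damped characteristic function -/
noncomputable def psidamp (ν : Measure ℝ) (c ε t : ℝ) : ℂ :=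
  Complex.exp (Complex.I * t * c + Phidamp ν ε t)

lemma psidamp_norm (ν : Measure ℝ) (hν : Integrable (fun u : ℝ => min 1 |u|) ν)
    (c ε : ℝ) (hε : 0 < ε) (t : ℝ) : ‖psidamp ν c ε t‖ ≤ 1 := by
  unfold psidamp
  rw [Complex.exp_add, norm_mul, norm_exp_I, one_mul, Complex.norm_exp, Real.exp_le_one_iff]
  exact Phi_re ν hν ε hε t

lemma psidamp_deriv (ν : Measure ℝ) (hν : Integrable (fun u : ℝ => min 1 |u|) ν)
    (c ε : ℝ) (hε : 0 < ε) (t : ℝ) : HasDerivAt (psidamp ν c ε)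
      (Complex.I * (c * psidamp ν c ε t + psidamp ν c ε t * Ldamp ν ε t)) t := by
  have h1 : HasDerivAt (fun s : ℝ => Complex.I * (s : ℂ) * c) (Complex.I * 1 * c) t :=
      ((Complex.ofRealCLM.hasDerivAt (x := t)).const_mul Complex.I).mul_const (c : ℂ)
  refine (h1.add (Phi_deriv ν hν ε hε t)).cexp.congr_deriv ?_
  simp only [psidamp, Pi.add_apply]
  ring

lemma psidamp_tendsto (ν : Measure ℝ) (hν : Integrable (fun u : ℝ => min 1 |u|) ν)
    (c t : ℝ) : Tendsto (fun ε => psidamp ν c ε t) (𝓝[>] 0)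
      (𝓝 (Complex.exp (Complex.I * t * c +
        ∫ u : ℝ, (Complex.exp (Complex.I * t * u) - 1) ∂ν))) :=
  ((Phi_tendsto ν hν t).const_add _).cexp

lemma cf_cont (μ : Measure ℝ) [IsProbabilityMeasure μ] :
    Continuous fun t : ℝ => ∫ x : ℝ, Complex.exp (Complex.I * t * x) ∂μ := by
  refine continuous_of_dominated (bound := fun _ => (1 : ℝ)) ?_ ?_ (integrable_const _) ?_
  · intro t; exact Continuous.aestronglyMeasurable (by fun_prop)
  · intro t; exact Eventually.of_forall fun u => (norm_exp_I _ _).le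
  · refine Eventually.of_forall fun u => ?_
    fun_prop

lemma cf_norm (μ : Measure ℝ) [IsProbabilityMeasure μ] (t : ℝ) :
    ‖∫ x : ℝ, Complex.exp (Complex.I * t * x) ∂μ‖ ≤ 1 := by
  refine (norm_integral_le_integral_norm _).trans (le_of_eq ?_)
  simp_rw [norm_exp_I]
  simp

theorem core (ν : Measure ℝ) [SFinite ν] (hν : Integrable (fun u : ℝ => min 1 |u|) ν)
    (μ : Measure ℝ) [IsProbabilityMeasure μ] (c : ℝ)
    (hcf : ∀ t : ℝ, ∫ x : ℝ, Complex.exp (Complex.I * t * x) ∂μ =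
      Complex.exp (Complex.I * t * c + ∫ u : ℝ, (Complex.exp (Complex.I * t * u) - 1) ∂ν))
    (h : SchwartzMap ℝ ℂ) (G : ℝ → ℂ) (hGc : Continuous G)
    (hG : ∀ x : ℝ, G x = ∫ t : ℝ, h t * Complex.exp (Complex.I * t * x))
    (B : ℝ → ℝ) (hB : ∀ ε > 0, ∀ t ≠ 0, ‖Ldamp ν ε t‖ ≤ B t)
    (hBi : Integrable (fun t => ‖h t‖ * B t))
    (hD : ∀ x, Integrable (fun u : ℝ => (u : ℂ) * G (x + u)) ν)
    (C : ℝ) (hC : ∀ x, ∫ u : ℝ, ‖(u : ℂ) * G (x + u)‖ ∂ν ≤ C)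
    (hx : Integrable (fun x : ℝ => (x : ℂ) * G x) μ) (hGi : Integrable G μ) :
    Integrable (fun x => ∫ u : ℝ, (u : ℂ) * G (x + u) ∂ν) μ ∧
    ∫ x : ℝ, ((x : ℂ) - c) * G x ∂μ = ∫ x, (∫ u : ℝ, (u : ℂ) * G (x + u) ∂ν) ∂μ := by
  set φ : ℝ → ℂ := fun t => ∫ x : ℝ, Complex.exp (Complex.I * t * x) ∂μ with hφ
  have hφc : Continuous φ := cf_cont μ
  have hψt : ∀ t, Tendsto (fun ε => psidamp ν c ε t) (𝓝[>] 0) (𝓝 (φ t)) := fun t => by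
    rw [hφ]; simp only; rw [hcf t]; exact psidamp_tendsto ν hν c t
  have hψc : ∀ ε > 0, Continuous (psidamp ν c ε) := fun ε hε =>
    continuous_iff_continuousAt.2 fun t => (psidamp_deriv ν hν c ε hε t).continuousAt
  have hne : ∀ᵐ t : ℝ, t ≠ 0 := by
    simp [ae_iff]
  -- measurability
  have hmeas : AEStronglyMeasurable (fun x => ∫ u : ℝ, (u : ℂ) * G (x + u) ∂ν) μ := by
    have : StronglyMeasurable (Function.uncurry fun x u : ℝ => (u : ℂ) * G (x + u)) :=
      Continuous.stronglyMeasurable (by unfold Function.uncurry; fun_prop)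
    exact this.integral_prod_right.aestronglyMeasurable
  have hmeas' : ∀ ε, AEStronglyMeasurable
      (fun x => ∫ u : ℝ, (u : ℂ) * damp ε u * G (x + u) ∂ν) μ := by
    intro ε
    have hd := damp_cont ε
    have : StronglyMeasurable (Function.uncurry fun x u : ℝ => (u : ℂ) * damp ε u * G (x + u)) :=
      Continuous.stronglyMeasurable (by unfold Function.uncurry; fun_prop)
    exact this.integral_prod_right.aestronglyMeasurable
  refine ⟨(integrable_const C).mono' hmeas (Eventually.of_forall fun x =>
    (norm_integral_le_integral_norm _).trans (hC x)), ?_⟩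
  have hle : ∀ ε > 0, ∀ x u : ℝ, ‖(u : ℂ) * damp ε u * G (x + u)‖ ≤ ‖(u : ℂ) * G (x + u)‖ := by
    intro ε hε x u
    rw [mul_right_comm, norm_mul _ (damp ε u)]
    exact mul_le_of_le_one_right (norm_nonneg _) (norm_damp_le ε u hε)
  -- (1) limit of the damped integral
  have T1 : Tendsto (fun ε => ∫ x, (∫ u : ℝ, (u : ℂ) * damp ε u * G (x + u) ∂ν) ∂μ) (𝓝[>] 0)
      (𝓝 (∫ x, (∫ u : ℝ, (u : ℂ) * G (x + u) ∂ν) ∂μ)) := by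
    refine tendsto_integral_filter_of_dominated_convergence (fun _ => C)
      (Eventually.of_forall hmeas') ?_ (integrable_const _) (Eventually.of_forall fun x => ?_)
    · filter_upwards [self_mem_nhdsWithin] with ε hε
      refine Eventually.of_forall fun x => ?_
      refine (norm_integral_le_integral_norm _).trans (le_trans ?_ (hC x))
      exact integral_mono_of_nonneg (Eventually.of_forall fun u => norm_nonneg _) (hD x).norm
        (Eventually.of_forall fun u => hle ε hε x u)
    · refine tendsto_integral_filter_of_dominated_convergence (fun u => ‖(u : ℂ) * G (x + u)‖)
        ?_ ?_ (hD x).norm (Eventually.of_forall fun u => ?_)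
      · refine Eventually.of_forall fun ε => ?_
        have hd := damp_cont ε
        exact Continuous.aestronglyMeasurable (by fun_prop)
      · filter_upwards [self_mem_nhdsWithin] with ε hε
        exact Eventually.of_forall fun u => hle ε hε x u
      · simpa using ((damp_tendsto u).const_mul (u : ℂ)).mul_const (G (x + u))
  -- (2) Fubini
  have T2 : ∀ ε > 0, ∫ x, (∫ u : ℝ, (u : ℂ) * damp ε u * G (x + u) ∂ν) ∂μ =
      ∫ t, h t * Ldamp ν ε t * φ t := by
    intro ε hε
    have hd := damp_cont ε
    have hui := u_damp_int ν hν ε hε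
    have e1 : ∀ x : ℝ, ∫ u : ℝ, (u : ℂ) * damp ε u * G (x + u) ∂ν =
        ∫ t : ℝ, (h t * Ldamp ν ε t) * Complex.exp (Complex.I * t * x) := by
      intro x
      have : ∀ u : ℝ, (u : ℂ) * damp ε u * G (x + u) =
          ∫ t : ℝ, ((u : ℂ) * damp ε u) * (h t * Complex.exp (Complex.I * t * (x + u))) := by
        intro u
        rw [hG, ← integral_const_mul]
        push_cast
        rfl
      simp_rw [this]
      rw [integral_integral_swap]
      · congr 1; ext t
        rw [Ldamp, mul_assoc, mul_left_comm, ← mul_assoc, mul_comm, ← integral_mul_const,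
          ← integral_mul_const]
        congr 1; ext u
        rw [mul_add, Complex.exp_add]
        ring
      · have := (hui.mul_prod h.integrable (ν := volume)).mul_bdd (c := 1)
          (g := fun p : ℝ × ℝ => Complex.exp (Complex.I * p.2 * (x + p.1)))
          (Continuous.aestronglyMeasurable (by fun_prop)) (Eventually.of_forall fun p => by
            have := norm_exp_I p.2 (x + p.1)
            push_cast at this
            exact this.le)
        refine this.congr (Eventually.of_forall fun p => ?_)
        simp only [Function.uncurry]
        ring
    simp_rw [e1]
    rw [fubini_mu]
    exact schwartz_mul_integrable h _ (Ldamp_cont ν hν ε hε) _ (Ldamp_bound ν ε)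
  -- (3) differences vanish
  have T3 : Tendsto (fun ε => ∫ t, h t * Ldamp ν ε t * (φ t - psidamp ν c ε t)) (𝓝[>] 0)
      (𝓝 0) := by
    have hz : (0 : ℂ) = ∫ t : ℝ, (0 : ℂ) := by simp
    rw [hz]
    refine tendsto_integral_filter_of_dominated_convergence (fun t => (‖h t‖ * B t) * 2)
      ?_ ?_ (hBi.mul_const 2) ?_
    · filter_upwards [self_mem_nhdsWithin] with ε hε
      have := hψc ε hε
      have := Ldamp_cont ν hν ε hε
      have := h.continuous
      exact Continuous.aestronglyMeasurable (by fun_prop)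
    · filter_upwards [self_mem_nhdsWithin] with ε hε
      filter_upwards [hne] with t ht
      rw [norm_mul, norm_mul]
      have h1 := hB ε hε t ht
      have h2 : ‖φ t - psidamp ν c ε t‖ ≤ 2 := by
        have := norm_sub_le (φ t) (psidamp ν c ε t)
        have h3 := cf_norm μ t
        have h4 := psidamp_norm ν hν c ε hε t
        simp only [hφ] at *
        linarith
      have h5 : 0 ≤ B t := (norm_nonneg _).trans h1
      gcongr
    · filter_upwards [hne] with t ht
      have hz : Tendsto (fun ε => φ t - psidamp ν c ε t) (𝓝[>] 0) (𝓝 0) := by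
        simpa using (hψt t).const_sub (φ t)
      refine squeeze_zero_norm' (a := fun ε => ‖h t‖ * B t * ‖φ t - psidamp ν c ε t‖) ?_ ?_
      · filter_upwards [self_mem_nhdsWithin] with ε hε
        rw [norm_mul, norm_mul]
        have h1 := hB ε hε t ht
        gcongr
      · simpa using hz.norm.const_mul (‖h t‖ * B t)
  -- (4) bounded convergence for a Schwartz weight
  have T4 : ∀ k : SchwartzMap ℝ ℂ, Tendsto (fun ε => ∫ t, k t * psidamp ν c ε t) (𝓝[>] 0)
      (𝓝 (∫ t, k t * φ t)) := by
    intro k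
    refine tendsto_integral_filter_of_dominated_convergence (fun t => ‖k t‖)
      ?_ ?_ k.integrable.norm (Eventually.of_forall fun t => (hψt t).const_mul _)
    · filter_upwards [self_mem_nhdsWithin] with ε hε
      have := hψc ε hε
      have := k.continuous
      exact Continuous.aestronglyMeasurable (by fun_prop)
    · filter_upwards [self_mem_nhdsWithin] with ε hε
      refine Eventually.of_forall fun t => ?_
      rw [norm_mul]
      exact mul_le_of_le_one_right (norm_nonneg _) (psidamp_norm ν hν c ε hε t)
  -- (5) integrated identities
  have E1 : ∫ x, G x ∂μ = ∫ t, h t * φ t := by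
    simp_rw [hG]
    exact fubini_mu μ h h.integrable
  have E2 : -Complex.I * ∫ x : ℝ, (x : ℂ) * G x ∂μ =
      ∫ t, SchwartzMap.derivCLM ℂ ℂ h t * φ t := by
    rw [← fubini_mu μ _ (SchwartzMap.integrable _), ← integral_const_mul]
    congr 1; ext x
    rw [ibp h (fun t : ℝ => Complex.exp (Complex.I * t * x))
      (fun t : ℝ => Complex.I * x * Complex.exp (Complex.I * t * x)) ?_ (by fun_prop) 1 |x|
      (fun t => (norm_exp_I t x).le) ?_]
    · rw [hG, ← integral_const_mul, ← integral_const_mul, ← integral_neg]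
      congr 1; ext t; ring
    · intro t
      have h1 : HasDerivAt (fun s : ℝ => Complex.I * (s : ℂ) * x) (Complex.I * 1 * x) t :=
        ((Complex.ofRealCLM.hasDerivAt (x := t)).const_mul Complex.I).mul_const (x : ℂ)
      refine h1.cexp.congr_deriv ?_
      ring
    · intro t
      rw [norm_mul, norm_exp_I]; simp
  have E3 : ∀ ε > 0, ∫ t, SchwartzMap.derivCLM ℂ ℂ h t * psidamp ν c ε t =
      -Complex.I * (c * (∫ t, h t * psidamp ν c ε t) +
        ∫ t, h t * Ldamp ν ε t * psidamp ν c ε t) := by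
    intro ε hε
    have hc1 := hψc ε hε
    have hc2 := Ldamp_cont ν hν ε hε
    have hb : ∀ t, ‖psidamp ν c ε t * Ldamp ν ε t‖ ≤ 1 * ∫ u : ℝ, ‖(u : ℂ) * damp ε u‖ ∂ν := by
      intro t
      rw [norm_mul]
      exact mul_le_mul (psidamp_norm ν hν c ε hε t) (Ldamp_bound ν ε t) (norm_nonneg _) zero_le_one
    have i1 := schwartz_mul_integrable h _ (hψc ε hε) 1 (psidamp_norm ν hν c ε hε)
    have i2 : Integrable (fun t => h t * (psidamp ν c ε t * Ldamp ν ε t)) :=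
      schwartz_mul_integrable h _ (hc1.mul hc2) _ hb
    rw [ibp h _ _ (psidamp_deriv ν hν c ε hε) (by fun_prop) 1
      (|c| * 1 + 1 * ∫ u : ℝ, ‖(u : ℂ) * damp ε u‖ ∂ν) (psidamp_norm ν hν c ε hε) ?_]
    · rw [neg_mul, neg_inj, ← integral_const_mul]
      have : ∀ t, h t * Ldamp ν ε t * psidamp ν c ε t =
          h t * (psidamp ν c ε t * Ldamp ν ε t) := fun t => by ring
      simp_rw [this]
      rw [← integral_add (i1.const_mul _) i2, ← integral_const_mul]
      congr 1; ext t; ring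
    · intro t
      rw [norm_mul, Complex.norm_I, one_mul]
      refine (norm_add_le _ _).trans (add_le_add ?_ (hb t))
      rw [norm_mul, Complex.norm_real, Real.norm_eq_abs]
      gcongr
      exact psidamp_norm ν hν c ε hε t
  -- conclusion
  have T5 : Tendsto (fun ε => ∫ t, h t * Ldamp ν ε t * psidamp ν c ε t) (𝓝[>] 0)
      (𝓝 (∫ x : ℝ, (x : ℂ) * G x ∂μ - c * ∫ x, G x ∂μ)) := by
    have a1 := (T4 (SchwartzMap.derivCLM ℂ ℂ h)).const_mul Complex.I
    rw [← E2] at a1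
    have a2 := a1.sub ((T4 h).const_mul (c : ℂ))
    rw [← E1, ← mul_assoc, mul_neg, Complex.I_mul_I, neg_neg, one_mul] at a2
    refine a2.congr' ?_
    filter_upwards [self_mem_nhdsWithin] with ε hε
    rw [E3 ε hε, ← mul_assoc, mul_neg, Complex.I_mul_I, neg_neg, one_mul]
    ring
  have T6 : Tendsto (fun ε => ∫ t, h t * Ldamp ν ε t * φ t) (𝓝[>] 0)
      (𝓝 (∫ x, (∫ u : ℝ, (u : ℂ) * G (x + u) ∂ν) ∂μ)) := by
    refine T1.congr' ?_
    filter_upwards [self_mem_nhdsWithin] with ε hε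
    exact T2 ε hε
  have T7 := T3.add T5
  rw [zero_add] at T7
  have T8 : Tendsto (fun ε => ∫ t, h t * Ldamp ν ε t * φ t) (𝓝[>] 0)
      (𝓝 (∫ x : ℝ, (x : ℂ) * G x ∂μ - c * ∫ x, G x ∂μ)) := by
    refine T7.congr' ?_
    filter_upwards [self_mem_nhdsWithin] with ε hε
    have hc1 := hψc ε hε
    have hc2 := Ldamp_cont ν hν ε hε
    have j := schwartz_mul_integrable h _ hc2 _ (Ldamp_bound ν ε)
    rw [← integral_add]
    · congr 1; ext t; ring
    · refine j.mul_bdd (c := 2) (Continuous.aestronglyMeasurable (by fun_prop))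
        (Eventually.of_forall fun t => ?_)
      have := norm_sub_le (φ t) (psidamp ν c ε t)
      have h3 := cf_norm μ t
      have h4 := psidamp_norm ν hν c ε hε t
      simp only [hφ] at *
      linarith
    · exact j.mul_bdd (c := 1) (Continuous.aestronglyMeasurable (by fun_prop))
        (Eventually.of_forall fun t => psidamp_norm ν hν c ε hε t)
  rw [tendsto_nhds_unique T6 T8]
  simp_rw [sub_mul]
  rw [integral_sub hx (hGi.const_mul _), integral_const_mul]

/-- the density of the Lévy measure -/
noncomputable def dens (α m₁ m₂ u : ℝ) : ℝ :=
  if 0 < u then m₁ * u ^ (-α - 1) else if u < 0 then m₂ * |u| ^ (-α - 1) else 0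

lemma dens_meas (α m₁ m₂ : ℝ) : Measurable (dens α m₁ m₂) := by
  unfold dens
  refine Measurable.ite measurableSet_Ioi (by fun_prop) ?_
  exact Measurable.ite measurableSet_Iio (by fun_prop) (by fun_prop)

lemma dens_nonneg (α m₁ m₂ u : ℝ) (hm₁ : 0 ≤ m₁) (hm₂ : 0 ≤ m₂) : 0 ≤ dens α m₁ m₂ u := by
  unfold dens
  split_ifs <;> positivity

lemma dens_le (α m₁ m₂ u : ℝ) (hm₁ : 0 ≤ m₁) (hm₂ : 0 ≤ m₂) :
    dens α m₁ m₂ u ≤ (m₁ + m₂) * |u| ^ (-α - 1) := by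
  have := Real.rpow_nonneg (abs_nonneg u) (-α - 1)
  unfold dens
  split_ifs with h h'
  · rw [abs_of_pos h] at *
    nlinarith
  · nlinarith
  · positivity

lemma nu_eq (α m₁ m₂ : ℝ) : nuStable α m₁ m₂ =
    (volume : Measure ℝ).withDensity fun u => ENNReal.ofReal (dens α m₁ m₂ u) := rfl

instance (α m₁ m₂ : ℝ) : SFinite (nuStable α m₁ m₂) := by
  rw [nu_eq]; infer_instance

lemma nu_integrable {E : Type*} [NormedAddCommGroup E] [NormedSpace ℝ E] (α m₁ m₂ : ℝ)
    (hm₁ : 0 ≤ m₁) (hm₂ : 0 ≤ m₂) (f : ℝ → E) : Integrable f (nuStable α m₁ m₂) ↔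
      Integrable (fun u => dens α m₁ m₂ u • f u) := by
  rw [nu_eq, integrable_withDensity_iff_integrable_smul' (dens_meas α m₁ m₂).ennreal_ofReal
    (Eventually.of_forall fun u => ENNReal.ofReal_lt_top)]
  simp_rw [ENNReal.toReal_ofReal (dens_nonneg α m₁ m₂ _ hm₁ hm₂)]

lemma nu_integral {E : Type*} [NormedAddCommGroup E] [NormedSpace ℝ E] (α m₁ m₂ : ℝ)
    (hm₁ : 0 ≤ m₁) (hm₂ : 0 ≤ m₂) (f : ℝ → E) : ∫ u, f u ∂(nuStable α m₁ m₂) =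
      ∫ u, dens α m₁ m₂ u • f u := by
  rw [nu_eq, integral_withDensity_eq_integral_toReal_smul (dens_meas α m₁ m₂).ennreal_ofReal
    (Eventually.of_forall fun u => ENNReal.ofReal_lt_top)]
  simp_rw [ENNReal.toReal_ofReal (dens_nonneg α m₁ m₂ _ hm₁ hm₂)]

lemma nu_split (α m₁ m₂ : ℝ) (hm₁ : 0 ≤ m₁) (hm₂ : 0 ≤ m₂) (f : ℝ → ℂ)
    (hf : Integrable f (nuStable α m₁ m₂)) : ∫ u, f u ∂(nuStable α m₁ m₂) =
      m₁ * (∫ u in Set.Ioi (0 : ℝ), ((u ^ (-α - 1) : ℝ) : ℂ) * f u) +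
      m₂ * ∫ u in Set.Ioi (0 : ℝ), ((u ^ (-α - 1) : ℝ) : ℂ) * f (-u) := by
  rw [nu_integrable α m₁ m₂ hm₁ hm₂] at hf
  rw [nu_integral α m₁ m₂ hm₁ hm₂, ← intervalIntegral.integral_Iic_add_Ioi (b := 0)
    hf.integrableOn hf.integrableOn, add_comm]
  congr 1
  · rw [← integral_const_mul]
    refine setIntegral_congr_fun measurableSet_Ioi fun u hu => ?_
    have hu' : 0 < u := hu
    simp [dens, hu', mul_assoc]
  · rw [← neg_zero, ← integral_comp_neg_Ioi, neg_zero, ← integral_const_mul]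
    refine setIntegral_congr_fun measurableSet_Ioi fun u hu => ?_
    have hu' : 0 < u := hu
    simp [dens, hu', hu'.le, not_lt.2 hu'.le, mul_assoc, abs_of_pos hu']

lemma integrable_abs (f : ℝ → ℝ) (hf : IntegrableOn f (Set.Ioi 0)) :
    Integrable (fun u => f |u|) := by
  have h1 : IntegrableOn (fun u => f |u|) (Set.Ioi 0) :=
    hf.congr_fun (fun u hu => by simp only [abs_of_pos (Set.mem_Ioi.1 hu)]) measurableSet_Ioi
  have h2 : IntegrableOn (fun u => f |u|) (Set.Iic 0) := by
    rw [integrableOn_Iic_iff_integrableOn_Iio]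
    have := h1.comp_neg
    simpa using this
  rw [← integrableOn_univ, ← Set.Iic_union_Ioi (a := (0 : ℝ))]
  exact h2.union h1

lemma low_int (a : ℝ) (ha : 0 < a) (ha1 : a < 1) :
    Integrable (fun u : ℝ => |u| ^ (-a - 1) * min 1 |u|) := by
  refine integrable_abs (fun u => u ^ (-a - 1) * min 1 u) ?_
  rw [← Set.Ioc_union_Ioi_eq_Ioi (zero_le_one' ℝ)]
  refine IntegrableOn.union ?_ ?_
  · have h1 : IntegrableOn (fun u : ℝ => u ^ (-a)) (Set.Ioc 0 1) := by
      rw [← intervalIntegrable_iff_integrableOn_Ioc_of_le zero_le_one]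
      exact intervalIntegral.intervalIntegrable_rpow' (by linarith)
    refine h1.congr_fun (fun u hu => ?_) measurableSet_Ioc
    simp only
    rw [min_eq_right hu.2, Real.rpow_sub_one hu.1.ne', div_mul_cancel₀ _ hu.1.ne']
  · refine (integrableOn_Ioi_rpow_of_lt (a := -a - 1) (by linarith) zero_lt_one).congr_fun
      (fun u hu => ?_) measurableSet_Ioi
    simp only
    rw [min_eq_left (Set.mem_Ioi.1 hu).le, mul_one]

lemma pt_bound (a M y u : ℝ) (ha : 0 < a) (hy : 0 ≤ y) (hM : y ≤ M) :
    |u| ^ (-a - 1) * (|u| * y) ≤ M * (|u| ^ (-a - 1) * min 1 |u|) + y := by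
  have h0 := Real.rpow_nonneg (abs_nonneg u) (-a - 1)
  have hu := abs_nonneg u
  rcases le_total 1 |u| with h | h
  · rw [min_eq_left h]
    have h1 : |u| ^ (-a - 1) * |u| ≤ 1 := by
      rw [Real.rpow_sub_one (by positivity), div_mul_cancel₀ _ (by positivity)]
      exact Real.rpow_le_one_of_one_le_of_nonpos h (by linarith)
    nlinarith
  · rw [min_eq_right h]
    nlinarith [mul_nonneg h0 hu]

lemma unif (a M : ℝ) (ha : 0 < a) (ha1 : a < 1) (f : ℝ → ℂ) (hf : Integrable f)
    (hM : ∀ u, ‖f u‖ ≤ M) :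
    Integrable (fun u : ℝ => |u| ^ (-a - 1) * (|u| * ‖f u‖)) ∧
    ∫ u : ℝ, |u| ^ (-a - 1) * (|u| * ‖f u‖) ≤
      M * (∫ u : ℝ, |u| ^ (-a - 1) * min 1 |u|) + ∫ u, ‖f u‖ := by
  have h1 := (low_int a ha ha1).const_mul M
  have hb : ∀ u : ℝ, |u| ^ (-a - 1) * (|u| * ‖f u‖) ≤
    M * (|u| ^ (-a - 1) * min 1 |u|) + ‖f u‖ := fun u => pt_bound a M _ u ha (norm_nonneg _) (hM u)
  have hi : Integrable (fun u : ℝ => |u| ^ (-a - 1) * (|u| * ‖f u‖)) := by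
    refine (h1.add hf.norm).mono' ?_ (Eventually.of_forall fun u => ?_)
    · refine AEStronglyMeasurable.mul ?_ (AEStronglyMeasurable.mul ?_ hf.1.norm)
      · exact Measurable.aestronglyMeasurable (by fun_prop)
      · exact Measurable.aestronglyMeasurable (by fun_prop)
    · rw [Real.norm_of_nonneg (by positivity)]
      exact hb u
  refine ⟨hi, ?_⟩
  rw [← integral_const_mul, ← integral_add h1 hf.norm]
  exact integral_mono hi (h1.add hf.norm) hb

lemma nu_low (α m₁ m₂ : ℝ) (hα : 0 < α) (hα1 : α < 1) (hm₁ : 0 ≤ m₁) (hm₂ : 0 ≤ m₂) :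
    Integrable (fun u : ℝ => min 1 |u|) (nuStable α m₁ m₂) := by
  rw [nu_integrable α m₁ m₂ hm₁ hm₂]
  refine ((low_int α hα hα1).const_mul (m₁ + m₂)).mono' ?_ (Eventually.of_forall fun u => ?_)
  · exact ((dens_meas α m₁ m₂).smul (by fun_prop)).aestronglyMeasurable
  · have h1 := dens_nonneg α m₁ m₂ u hm₁ hm₂
    have h2 := dens_le α m₁ m₂ u hm₁ hm₂
    have h3 : 0 ≤ min 1 |u| := by positivity
    rw [smul_eq_mul, Real.norm_of_nonneg (by positivity), ← mul_assoc]
    gcongr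

lemma nu_D (α m₁ m₂ M : ℝ) (hα : 0 < α) (hα1 : α < 1) (hm₁ : 0 ≤ m₁) (hm₂ : 0 ≤ m₂)
    (f : ℝ → ℂ) (hf : Integrable f) (hM : ∀ u, ‖f u‖ ≤ M) :
    Integrable (fun u : ℝ => (u : ℂ) * f u) (nuStable α m₁ m₂) ∧
    ∫ u : ℝ, ‖(u : ℂ) * f u‖ ∂(nuStable α m₁ m₂) ≤
     (m₁ + m₂) * (M * (∫ u : ℝ, |u| ^ (-α - 1) * min 1 |u|) + ∫ u, ‖f u‖) := by
  obtain ⟨h1, h2⟩ := unif α M hα hα1 f hf hM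
  have hb : ∀ u : ℝ, dens α m₁ m₂ u * ‖(u : ℂ) * f u‖ ≤
      (m₁ + m₂) * (|u| ^ (-α - 1) * (|u| * ‖f u‖)) := by
    intro u
    rw [norm_mul, Complex.norm_real, Real.norm_eq_abs, ← mul_assoc]
    have := dens_le α m₁ m₂ u hm₁ hm₂
    rw [← mul_assoc (m₁ + m₂)]
    rw [mul_assoc]
    gcongr
  have hi : Integrable (fun u : ℝ => (u : ℂ) * f u) (nuStable α m₁ m₂) := by
    rw [nu_integrable α m₁ m₂ hm₁ hm₂]
    refine (h1.const_mul (m₁ + m₂)).mono' ?_ (Eventually.of_forall fun u => ?_)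
    · refine (dens_meas α m₁ m₂).aestronglyMeasurable.smul (AEStronglyMeasurable.mul ?_ hf.1)
      exact Measurable.aestronglyMeasurable (by fun_prop)
    · rw [norm_smul, Real.norm_of_nonneg (dens_nonneg α m₁ m₂ u hm₁ hm₂)]
      exact hb u
  refine ⟨hi, ?_⟩
  have hn := hi.norm
  rw [nu_integrable α m₁ m₂ hm₁ hm₂] at hn
  rw [nu_integral α m₁ m₂ hm₁ hm₂]
  refine (integral_mono hn (h1.const_mul (m₁ + m₂)) hb).trans ?_
  rw [integral_const_mul]
  gcongr

lemma near_far (α T : ℝ) (r : ℂ) (hα : 0 < α) (hα1 : α < 1) (hT : 0 < T) (hr : 0 < r.re) :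
    ‖∫ u in Set.Ioi (0 : ℝ), ((u ^ (-α) : ℝ) : ℂ) * Complex.exp (-(r * u))‖ ≤
      T ^ (1 - α) / (1 - α) + 2 * (T ^ (-α) / ‖r‖) := by
  have hr0 : r ≠ 0 := by rintro rfl; simp at hr
  have hrn : 0 < ‖r‖ := norm_pos_iff.2 hr0
  have hw : ∀ u : ℝ, ‖Complex.exp (-(r * u))‖ = Real.exp (-r.re * u) := by
    intro u; rw [Complex.norm_exp]; simp
  have hw1 : ∀ u : ℝ, 0 ≤ u → ‖Complex.exp (-(r * u))‖ ≤ 1 := by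
    intro u hu
    rw [hw, Real.exp_le_one_iff]; nlinarith
  have hmeas : ∀ s : ℝ, Measurable fun u : ℝ => ((u ^ s : ℝ) : ℂ) * Complex.exp (-(r * u)) := by
    intro s; fun_prop
  have hnear : IntegrableOn (fun u : ℝ => u ^ (-α)) (Set.Ioc 0 T) := by
    rw [← intervalIntegrable_iff_integrableOn_Ioc_of_le hT.le]
    exact intervalIntegral.intervalIntegrable_rpow' (by linarith)
  have bnear : ∀ᵐ u ∂(volume.restrict (Set.Ioc 0 T)),
      ‖((u ^ (-α) : ℝ) : ℂ) * Complex.exp (-(r * u))‖ ≤ u ^ (-α) := by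
    refine (ae_restrict_mem measurableSet_Ioc).mono fun u hu => ?_
    have h0 := Real.rpow_nonneg hu.1.le (-α)
    rw [norm_mul, Complex.norm_real, Real.norm_of_nonneg h0]
    exact mul_le_of_le_one_right h0 (hw1 u hu.1.le)
  have inear : IntegrableOn (fun u : ℝ => ((u ^ (-α) : ℝ) : ℂ) * Complex.exp (-(r * u)))
      (Set.Ioc 0 T) := hnear.mono' (hmeas _).aestronglyMeasurable bnear
  have ifar : IntegrableOn (fun u : ℝ => ((u ^ (-α) : ℝ) : ℂ) * Complex.exp (-(r * u)))
      (Set.Ioi T) := by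
    refine ((exp_neg_integrableOn_Ioi T hr).const_mul (T ^ (-α))).mono'
      (hmeas _).aestronglyMeasurable ?_
    refine (ae_restrict_mem measurableSet_Ioi).mono fun u hu => ?_
    have hu' : T < u := hu
    have h0 := Real.rpow_nonneg (hT.trans hu').le (-α)
    rw [norm_mul, Complex.norm_real, Real.norm_of_nonneg h0, hw]
    have hneg : -α ≤ 0 := by linarith
    exact mul_le_mul_of_nonneg_right (Real.rpow_le_rpow_of_nonpos hT hu'.le hneg)
      (Real.exp_pos _).le
  have hpow : IntegrableOn (fun u : ℝ => u ^ (-α - 1)) (Set.Ioi T) :=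
    integrableOn_Ioi_rpow_of_lt (by linarith) hT
  have bfar : ∀ᵐ u ∂(volume.restrict (Set.Ioi T)),
      ‖((u ^ (-α - 1) : ℝ) : ℂ) * Complex.exp (-(r * u))‖ ≤ u ^ (-α - 1) := by
    refine (ae_restrict_mem measurableSet_Ioi).mono fun u hu => ?_
    have hu' : 0 < u := hT.trans hu
    have h0 := Real.rpow_nonneg hu'.le (-α - 1)
    rw [norm_mul, Complex.norm_real, Real.norm_of_nonneg h0]
    exact mul_le_of_le_one_right h0 (hw1 u hu'.le)
  have ifar' : IntegrableOn (fun u : ℝ => ((u ^ (-α - 1) : ℝ) : ℂ) * Complex.exp (-(r * u)))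
      (Set.Ioi T) := hpow.mono' (hmeas _).aestronglyMeasurable bfar
  rw [← Set.Ioc_union_Ioi_eq_Ioi hT.le, setIntegral_union
    (Set.Ioc_disjoint_Ioi le_rfl) measurableSet_Ioi inear ifar]
  refine (norm_add_le _ _).trans (add_le_add ?_ ?_)
  · refine (norm_integral_le_of_norm_le hnear bnear).trans (le_of_eq ?_)
    rw [← intervalIntegral.integral_of_le hT.le, integral_rpow (Or.inl (by linarith)),
      show -α + 1 = 1 - α by ring, Real.zero_rpow (by linarith), sub_zero]
  · have ftc := integral_Ioi_of_hasDerivAt_of_tendsto' (a := T) (m := 0)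
      (f := fun u : ℝ => ((u ^ (-α) : ℝ) : ℂ) * Complex.exp (-(r * u)) * (-r⁻¹))
      (f' := fun u : ℝ => ((u ^ (-α) : ℝ) : ℂ) * Complex.exp (-(r * u)) +
        (α * r⁻¹) * (((u ^ (-α - 1) : ℝ) : ℂ) * Complex.exp (-(r * u)))) ?_
        (ifar.add (ifar'.const_mul _)) ?_
    · rw [integral_add ifar (ifar'.const_mul _), integral_const_mul, zero_sub] at ftc
      rw [eq_sub_of_add_eq ftc]
      have hTn : 0 ≤ T ^ (-α) := Real.rpow_nonneg hT.le _
      have b1 : ‖-(((T ^ (-α) : ℝ) : ℂ) * Complex.exp (-(r * T)) * (-r⁻¹))‖ ≤ T ^ (-α) / ‖r‖ := by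
        rw [norm_neg, norm_mul, norm_mul, norm_neg, norm_inv, Complex.norm_real,
          Real.norm_of_nonneg hTn, ← div_eq_mul_inv]
        gcongr
        exact mul_le_of_le_one_right hTn (hw1 T hT.le)
      have b2 : ‖(α * r⁻¹ : ℂ) * ∫ u in Set.Ioi T,
          ((u ^ (-α - 1) : ℝ) : ℂ) * Complex.exp (-(r * u))‖ ≤ T ^ (-α) / ‖r‖ := by
        have h3 := norm_integral_le_of_norm_le hpow bfar
        rw [integral_Ioi_rpow_of_lt (by linarith) hT, show -α - 1 + 1 = -α by ring] at h3
        rw [norm_mul, norm_mul, Complex.norm_real, Real.norm_of_nonneg hα.le, norm_inv]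
        calc α * ‖r‖⁻¹ * _ ≤ α * ‖r‖⁻¹ * (-T ^ (-α) / -α) := by gcongr
          _ = T ^ (-α) / ‖r‖ := by field_simp
      refine (norm_sub_le _ _).trans ?_
      linarith
    · intro u hu
      have hu' : 0 < u := hT.trans_le hu
      have d1 : HasDerivAt (fun u : ℝ => ((u ^ (-α) : ℝ) : ℂ))
          (((-α) * u ^ (-α - 1) : ℝ) : ℂ) u :=
        (Real.hasDerivAt_rpow_const (Or.inl hu'.ne')).ofReal_comp
      have d2 : HasDerivAt (fun u : ℝ => -(r * (u : ℂ))) (-(r * 1)) u :=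
        ((Complex.ofRealCLM.hasDerivAt (x := u)).const_mul r).neg
      refine ((d1.mul d2.cexp).mul_const (-r⁻¹)).congr_deriv ?_
      push_cast
      field_simp
      ring
    · refine squeeze_zero_norm' (a := fun u : ℝ => u ^ (-α) * ‖r‖⁻¹) ?_ ?_
      · filter_upwards [eventually_gt_atTop 0] with u hu
        have h0 := Real.rpow_nonneg hu.le (-α)
        rw [norm_mul, norm_mul, norm_neg, norm_inv, Complex.norm_real, Real.norm_of_nonneg h0]
        gcongr
        exact mul_le_of_le_one_right h0 (hw1 u hu.le)
      · simpa using (tendsto_rpow_neg_atTop hα).mul_const ‖r‖⁻¹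

lemma half_bound (α ε t : ℝ) (hα : 0 < α) (hα1 : α < 1) (hε : 0 < ε) (ht : t ≠ 0) :
    ‖∫ u in Set.Ioi (0 : ℝ), ((u ^ (-α - 1) : ℝ) : ℂ) *
      ((u : ℂ) * damp ε u * Complex.exp (Complex.I * t * u))‖ ≤
    (1 / (1 - α) + 2) * |t| ^ (-(1 - α)) := by
  have ht' := abs_pos.2 ht
  have key := near_far α |t|⁻¹ ((ε : ℂ) - Complex.I * t) hα hα1 (by positivity) (by simpa using hε)
  have e : ∫ u in Set.Ioi (0 : ℝ), ((u ^ (-α - 1) : ℝ) : ℂ) *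
      ((u : ℂ) * damp ε u * Complex.exp (Complex.I * t * u)) =
      ∫ u in Set.Ioi (0 : ℝ), ((u ^ (-α) : ℝ) : ℂ) *
        Complex.exp (-(((ε : ℂ) - Complex.I * t) * u)) := by
    refine setIntegral_congr_fun measurableSet_Ioi fun u hu => ?_
    have hu' : 0 < u := hu
    have h1 : ((u ^ (-α) : ℝ) : ℂ) = ((u ^ (-α - 1) : ℝ) : ℂ) * u := by
      rw [Real.rpow_sub_one hu'.ne', ← Complex.ofReal_mul, div_mul_cancel₀ _ hu'.ne']
    have h2 : Complex.exp (-(((ε : ℂ) - Complex.I * t) * u)) =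
        damp ε u * Complex.exp (Complex.I * t * u) := by
      rw [damp, Complex.ofReal_exp, ← Complex.exp_add, abs_of_pos hu']
      congr 1; push_cast; ring
    rw [h1, h2]; ring
  rw [e]
  refine key.trans ?_
  have hn : |t| ≤ ‖(ε : ℂ) - Complex.I * t‖ := by
    have := Complex.abs_im_le_norm ((ε : ℂ) - Complex.I * t)
    simpa using this
  have e1 : |t|⁻¹ ^ (1 - α) = |t| ^ (-(1 - α)) := by
    rw [Real.inv_rpow ht'.le, ← Real.rpow_neg ht'.le]
  have e2 : |t|⁻¹ ^ (-α) / |t| = |t| ^ (-(1 - α)) := by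
    rw [Real.inv_rpow ht'.le, ← Real.rpow_neg ht'.le, ← Real.rpow_sub_one ht'.ne']
    congr 1; ring
  have e3 : |t|⁻¹ ^ (-α) / ‖(ε : ℂ) - Complex.I * t‖ ≤ |t|⁻¹ ^ (-α) / |t| := by
    gcongr
  rw [e2] at e3
  rw [e1, add_mul, one_div, div_eq_mul_inv, mul_comm]
  linarith

lemma Ldamp_nu (α m₁ m₂ ε t : ℝ) (hα : 0 < α) (hα1 : α < 1) (hm₁ : 0 ≤ m₁) (hm₂ : 0 ≤ m₂)
    (hε : 0 < ε) (ht : t ≠ 0) : ‖Ldamp (nuStable α m₁ m₂) ε t‖ ≤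
      (m₁ + m₂) * ((1 / (1 - α) + 2) * |t| ^ (-(1 - α))) := by
  unfold Ldamp
  have hIntg : Integrable (fun u : ℝ => (u : ℂ) * damp ε u * Complex.exp (Complex.I * t * u))
      (nuStable α m₁ m₂) :=
    (u_damp_int _ (nu_low α m₁ m₂ hα hα1 hm₁ hm₂) ε hε).mul_bdd (c := 1)
      (Continuous.aestronglyMeasurable (by fun_prop))
      (Eventually.of_forall fun u => (norm_exp_I _ _).le)
  rw [nu_split α m₁ m₂ hm₁ hm₂ _ hIntg]
  have b1 := half_bound α ε t hα hα1 hε ht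
  have b2 := half_bound α ε (-t) hα hα1 hε (neg_ne_zero.2 ht)
  have e2 : ∀ u : ℝ, ((u ^ (-α - 1) : ℝ) : ℂ) *
      (((-u : ℝ) : ℂ) * damp ε (-u) * Complex.exp (Complex.I * t * ((-u : ℝ) : ℂ))) =
      - (((u ^ (-α - 1) : ℝ) : ℂ) *
      ((u : ℂ) * damp ε u * Complex.exp (Complex.I * ((-t : ℝ) : ℂ) * u))) := by
    intro u
    simp [damp]
  simp_rw [e2]
  rw [integral_neg, add_mul]
  refine (norm_add_le _ _).trans (add_le_add ?_ ?_)
  · rw [norm_mul, Complex.norm_real, Real.norm_of_nonneg hm₁]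
    gcongr
  · rw [norm_mul, Complex.norm_real, Real.norm_of_nonneg hm₂, norm_neg]
    rw [abs_neg] at b2
    gcongr

lemma half_int (α : ℝ) (hα : 0 < α) (hα1 : α < 1) (f : ℝ → ℝ) (hf : Integrable f) (M : ℝ)
    (hM : ∀ u, ‖f u‖ ≤ M) : IntegrableOn (fun u : ℝ => f u * u ^ (-α)) (Set.Ioi 0) := by
  have h := (unif α M hα hα1 (fun u => (f u : ℂ)) hf.ofReal (by simpa using hM)).1
  refine (h.integrableOn (s := Set.Ioi 0)).mono' ?_ ?_
  · refine (hf.1.restrict).mul ?_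
    exact Measurable.aestronglyMeasurable (by fun_prop)
  · refine (ae_restrict_mem measurableSet_Ioi).mono fun u hu => ?_
    have hu' : 0 < u := hu
    rw [norm_mul, Real.norm_of_nonneg (Real.rpow_nonneg hu'.le _), abs_of_pos hu',
      Complex.norm_real, Real.rpow_sub_one hu'.ne']
    apply le_of_eq; field_simp

theorem stmt_7 (α m₁ m₂ β : ℝ) (hα : 0 < α) (hα1 : α < 1)
    (hm₁ : 0 ≤ m₁) (hm₂ : 0 ≤ m₂) (hm : 0 < m₁ + m₂)
    (μ : Measure ℝ) [IsProbabilityMeasure μ]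
    (hcf : ∀ t : ℝ, ∫ x : ℝ, Complex.exp (Complex.I * t * x) ∂μ = psi01 α m₁ m₂ β t)
    (g : SchwartzMap ℝ ℝ) :
    (∀ x : ℝ, IntegrableOn (fun u : ℝ => g (x + u) * u ^ (-α)) (Set.Ioi 0)) ∧
    (∀ x : ℝ, IntegrableOn (fun u : ℝ => g (x - u) * u ^ (-α)) (Set.Ioi 0)) ∧
    Integrable (fun x : ℝ => (x - Gamma01 α m₁ m₂ β) * g x -
      m₁ * (∫ u in Set.Ioi (0 : ℝ), g (x + u) * u ^ (-α)) +
      m₂ * ∫ u in Set.Ioi (0 : ℝ), g (x - u) * u ^ (-α)) μ ∧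
    ∫ x : ℝ, ((x - Gamma01 α m₁ m₂ β) * g x -
      m₁ * (∫ u in Set.Ioi (0 : ℝ), g (x + u) * u ^ (-α)) +
      m₂ * ∫ u in Set.Ioi (0 : ℝ), g (x - u) * u ^ (-α)) ∂μ = 0 := by
  have hbdd : ∀ {F : Type} [NormedAddCommGroup F] [NormedSpace ℝ F] (k : SchwartzMap ℝ F),
      ∃ M, ∀ x, ‖k x‖ ≤ M := by
    intro F _ _ k
    obtain ⟨M, hM⟩ := k.decay 0 0
    exact ⟨M, fun x => by simpa using hM.2 x⟩
  obtain ⟨M, hM⟩ := hbdd g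
  have hgc := g.continuous
  refine ⟨fun x => half_int α hα hα1 (fun u => g (x + u)) (g.integrable.comp_add_left x) M
    (fun u => hM _), fun x => half_int α hα hα1 (fun u => g (x - u))
    (g.integrable.comp_sub_left x) M (fun u => hM _), ?_⟩
  obtain ⟨h, hh⟩ := exists_fourier_rep g
  obtain ⟨Mh, hMh⟩ := hbdd h
  set c := Gamma01 α m₁ m₂ β with hc
  set G : ℝ → ℂ := fun x => (g x : ℂ) with hGdef
  have hGi : Integrable G := g.integrable.ofReal
  have hD : ∀ x, Integrable (fun u : ℝ => (u : ℂ) * G (x + u)) (nuStable α m₁ m₂) ∧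
    ∫ u : ℝ, ‖(u : ℂ) * G (x + u)‖ ∂(nuStable α m₁ m₂) ≤
     (m₁ + m₂) * (M * (∫ u : ℝ, |u| ^ (-α - 1) * min 1 |u|) + ∫ u, ‖G u‖) := by
    intro x
    have := nu_D α m₁ m₂ M hα hα1 hm₁ hm₂ (fun u => G (x + u)) (hGi.comp_add_left x)
      (fun u => by simpa [hGdef] using hM (x + u))
    rw [integral_add_left_eq_self (fun u => ‖G u‖) x] at this
    exact this
  have hxg : Integrable (fun x : ℝ => x * g x) μ := by
    obtain ⟨K, hK⟩ := g.decay 1 0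
    refine (integrable_const K).mono' (Continuous.aestronglyMeasurable (by fun_prop))
      (Eventually.of_forall fun x => ?_)
    simpa using hK.2 x
  have hgμ : Integrable (fun x : ℝ => g x) μ :=
    (integrable_const M).mono' hgc.aestronglyMeasurable (Eventually.of_forall hM)
  have hBi : Integrable (fun t : ℝ => ‖h t‖ *
      ((m₁ + m₂) * ((1 / (1 - α) + 2) * |t| ^ (-(1 - α))))) := by
    have h1 := (unif (1 - α) Mh (by linarith) (by linarith) h h.integrable hMh).1
    refine (h1.const_mul ((m₁ + m₂) * (1 / (1 - α) + 2))).congr ?_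
    have hne : ∀ᵐ t : ℝ, t ≠ 0 := by simp [ae_iff]
    filter_upwards [hne] with t ht
    have ht' := abs_pos.2 ht
    rw [Real.rpow_sub_one ht'.ne']
    field_simp
  obtain ⟨c1, c2⟩ := core (nuStable α m₁ m₂) (nu_low α m₁ m₂ hα hα1 hm₁ hm₂) μ c hcf h G
    (by fun_prop) hh _ (fun ε hε t ht => Ldamp_nu α m₁ m₂ ε t hα hα1 hm₁ hm₂ hε ht) hBi
    (fun x => (hD x).1) _ (fun x => (hD x).2)
    (by have := hxg.ofReal (𝕜 := ℂ); simpa using this) hgμ.ofReal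
  have e : ∀ x : ℝ, ∫ u : ℝ, (u : ℂ) * G (x + u) ∂(nuStable α m₁ m₂) =
      ((m₁ * (∫ u in Set.Ioi (0 : ℝ), g (x + u) * u ^ (-α)) -
        m₂ * ∫ u in Set.Ioi (0 : ℝ), g (x - u) * u ^ (-α) : ℝ) : ℂ) := by
    intro x
    rw [nu_split α m₁ m₂ hm₁ hm₂ _ (hD x).1]
    have h1 : ∫ u in Set.Ioi (0 : ℝ), ((u ^ (-α - 1) : ℝ) : ℂ) * ((u : ℂ) * G (x + u)) =
        ∫ u in Set.Ioi (0 : ℝ), ((g (x + u) * u ^ (-α) : ℝ) : ℂ) := by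
      refine setIntegral_congr_fun measurableSet_Ioi fun u hu => ?_
      have hu' : 0 < u := hu
      have : (u : ℂ) ≠ 0 := by exact_mod_cast hu'.ne'
      simp only [hGdef]
      rw [Real.rpow_sub_one hu'.ne']
      push_cast
      field_simp
    have h2 : ∫ u in Set.Ioi (0 : ℝ), ((u ^ (-α - 1) : ℝ) : ℂ) *
          (((-u : ℝ) : ℂ) * G (x + -u)) =
        -∫ u in Set.Ioi (0 : ℝ), ((g (x - u) * u ^ (-α) : ℝ) : ℂ) := by
      rw [← integral_neg]
      refine setIntegral_congr_fun measurableSet_Ioi fun u hu => ?_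
      have hu' : 0 < u := hu
      have : (u : ℂ) ≠ 0 := by exact_mod_cast hu'.ne'
      simp only [hGdef]
      rw [Real.rpow_sub_one hu'.ne', ← sub_eq_add_neg x u]
      push_cast
      field_simp
    rw [h1, h2, Complex.ofReal_sub, Complex.ofReal_mul, Complex.ofReal_mul,
      ← integral_complex_ofReal, ← integral_complex_ofReal]
    ring
  simp_rw [e] at c1 c2
  have i1 : Integrable (fun x : ℝ => m₁ * (∫ u in Set.Ioi (0 : ℝ), g (x + u) * u ^ (-α)) -
        m₂ * ∫ u in Set.Ioi (0 : ℝ), g (x - u) * u ^ (-α)) μ := by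
    have := c1.re
    simpa using this
  have i2 : Integrable (fun x : ℝ => (x - c) * g x) μ := by
    simp_rw [sub_mul]
    exact hxg.sub (hgμ.const_mul c)
  have c3 : ∫ x : ℝ, (x - c) * g x ∂μ =
      ∫ x : ℝ, (m₁ * (∫ u in Set.Ioi (0 : ℝ), g (x + u) * u ^ (-α)) -
        m₂ * ∫ u in Set.Ioi (0 : ℝ), g (x - u) * u ^ (-α)) ∂μ := by
    rw [integral_complex_ofReal] at c2
    apply Complex.ofReal_injective
    rw [← c2, ← integral_complex_ofReal]
    congr 1; ext x
    simp [hGdef]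
  have e2 : (fun x : ℝ => (x - c) * g x -
      m₁ * (∫ u in Set.Ioi (0 : ℝ), g (x + u) * u ^ (-α)) +
      m₂ * ∫ u in Set.Ioi (0 : ℝ), g (x - u) * u ^ (-α)) =
      fun x : ℝ => (x - c) * g x - (m₁ * (∫ u in Set.Ioi (0 : ℝ), g (x + u) * u ^ (-α)) -
        m₂ * ∫ u in Set.Ioi (0 : ℝ), g (x - u) * u ^ (-α)) := by
    ext x; ring
  rw [e2]
  refine ⟨i2.sub i1, ?_⟩
  rw [integral_sub i2 i1, c3, sub_self]
end

section
/- (Stein identity for stable laws with α ∈ [1,2).) Let α ∈ [1,2), m₁, m₂ ∈ [0,∞) with m₁ + m₂ > 0, β ∈ ℝ, and let μ be a Borel probability measure on ℝ whose characteristic function satisfies ∫_ℝ e^{itx} dμ(x) = ψ_α(t) for all t ∈ ℝ. Then for every real-valued Schwartz function g on ℝ, ∫_ℝ (x - Γ_α) g(x) dμ(x) = ∫_ℝ ∫_ℝ u (g(x+u) - g(x)·1_{|u|≤1}) ν_α(du) dμ(x), all integrals being absolutely convergent. -/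
open MeasureTheory

/-- Location parameter for `α ∈ [1,2)`:
`Γ_α = β + 2(m₁-m₂)∫₀^1 u^{2-α}(1+u²)^{-1} du - (m₁-m₂)∫₀^∞ min(1,u²) u^{-α}(1+u²)^{-1} du`. -/
noncomputable def Gamma12 (α m₁ m₂ β : ℝ) : ℝ :=
  β + 2 * (m₁ - m₂) * (∫ u in Set.Ioc (0 : ℝ) 1, u ^ (2 - α) / (1 + u ^ 2)) -
    (m₁ - m₂) * ∫ u in Set.Ioi (0 : ℝ), min 1 (u ^ 2) * u ^ (-α) / (1 + u ^ 2)

/-- Characteristic function of the `α`-stable law, `α ∈ [1,2)`: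
`ψ_α(t) = exp(itΓ_α + ∫_ℝ (e^{itu} - 1 - itu·1_{|u|≤1}) ν_α(du))`. -/
noncomputable def psi12 (α m₁ m₂ β : ℝ) (t : ℝ) : ℂ :=
  Complex.exp (Complex.I * t * (Gamma12 α m₁ m₂ β) +
    ∫ u : ℝ, (Complex.exp (Complex.I * t * u) - 1 -
      (if |u| ≤ 1 then Complex.I * t * u else 0)) ∂(nuStable α m₁ m₂))

open Filter Topology

lemma aux_rep (g : SchwartzMap ℝ ℝ) : ∃ f : SchwartzMap ℝ ℂ, ∀ x : ℝ,
    (g x : ℂ) = ∫ t : ℝ, f t * Complex.exp (Complex.I * t * x) := by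
  let G : SchwartzMap ℝ ℂ := SchwartzMap.postcompCLM (𝕜 := ℝ) Complex.ofRealCLM g
  let φ : SchwartzMap ℝ ℂ := FourierTransform.fourier G
  have h2 : (2 * Real.pi) ≠ 0 := by positivity
  let e : ℝ ≃L[ℝ] ℝ := ContinuousLinearEquiv.unitsEquivAut ℝ (Units.mk0 (2 * Real.pi)⁻¹ (inv_ne_zero h2))
  have he : ∀ x, e x = x * (2 * Real.pi)⁻¹ := fun x => by simp [e]
  refine ⟨((2 * Real.pi)⁻¹ : ℝ) • SchwartzMap.compCLMOfContinuousLinearEquiv ℝ e φ, fun x => ?_⟩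
  have h1 : FourierTransformInv.fourierInv φ = G := FourierTransform.fourierInv_fourier_eq G
  have h3 : (g x : ℂ) = FourierTransformInv.fourierInv φ x := by rw [h1]; simp [G]
  rw [h3, SchwartzMap.fourierInv_coe, Real.fourierInv_eq']
  have := Measure.integral_comp_mul_left (fun t : ℝ => ((2 * Real.pi)⁻¹ : ℝ) • φ (e t) * Complex.exp (Complex.I * t * x)) (2 * Real.pi)
  simp only [smul_apply, SchwartzMap.compCLMOfContinuousLinearEquiv_apply, Function.comp]
  have h4 : ∫ t : ℝ, ((2 * Real.pi)⁻¹ : ℝ) • φ (e t) * Complex.exp (Complex.I * t * x) = (2 * Real.pi) • ∫ t : ℝ, ((2 * Real.pi)⁻¹ : ℝ) • φ (e (2 * Real.pi * t)) * Complex.exp (Complex.I * (2 * Real.pi * t : ℝ) * x) := by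
    rw [this, smul_smul, abs_of_pos (by positivity), mul_inv_cancel₀ h2, one_smul]
  rw [h4, ← integral_smul]
  congr 1
  ext t
  have : e (2 * Real.pi * t) = t := by rw [he]; field_simp
  rw [this, smul_mul_assoc, smul_smul, mul_inv_cancel₀ h2, one_smul, smul_eq_mul, mul_comm]
  congr 2
  simp
  ring

lemma aux_nu_integrable (α m₁ m₂ : ℝ) (hm₁ : 0 ≤ m₁) (hm₂ : 0 ≤ m₂) {F : ℝ → ℝ} (hF : Measurable F)
    (hi : Integrable (fun u => |u| ^ (-α - 1) * F u)) :
    Integrable F (nuStable α m₁ m₂) ∧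
    ∫ u, |F u| ∂(nuStable α m₁ m₂) ≤ (m₁ + m₂) * ∫ u, |u| ^ (-α - 1) * |F u| := by
  set d : ℝ → ℝ := fun u => (if 0 < u then m₁ * u ^ (-α - 1) else if u < 0 then m₂ * |u| ^ (-α - 1) else 0) with hd
  have hdm : Measurable d := by
    refine Measurable.ite measurableSet_Ioi (by fun_prop) (Measurable.ite measurableSet_Iio (by fun_prop) (by fun_prop))
  have hd0 : ∀ u, 0 ≤ d u := by
    intro u
    simp only [hd]
    split_ifs with h
    · exact mul_nonneg hm₁ (Real.rpow_nonneg h.le _)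
    · positivity
    · exact le_rfl
  have hd1 : ∀ u, d u ≤ (m₁ + m₂) * |u| ^ (-α - 1) := by
    intro u
    have : 0 ≤ |u| ^ (-α - 1) := by positivity
    simp only [hd]
    split_ifs with h
    · rw [abs_of_pos h] at *
      nlinarith
    · nlinarith
    · positivity
  have hmeas : Measurable fun u => ENNReal.ofReal (d u) := hdm.ennreal_ofReal
  have hν : nuStable α m₁ m₂ = volume.withDensity (fun u => ENNReal.ofReal (d u)) := rfl
  have hi2 : Integrable (fun u => (m₁ + m₂) * (|u| ^ (-α - 1) * |F u|)) := by
    have := (hi.norm).const_mul (m₁ + m₂)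
    refine this.congr (Eventually.of_forall fun u => ?_)
    simp only [norm_mul, Real.norm_eq_abs]
    rw [abs_of_nonneg (a := |u| ^ (-α - 1)) (by positivity)]
  have key : Integrable (fun u => d u * F u) := by
    refine hi2.mono' (by fun_prop) (Eventually.of_forall fun u => ?_)
    rw [norm_mul, Real.norm_of_nonneg (hd0 u), Real.norm_eq_abs, ← mul_assoc]
    gcongr
    exact hd1 u
  constructor
  · rw [hν, integrable_withDensity_iff_integrable_smul' hmeas (Eventually.of_forall fun u => by simp)]
    refine key.congr (Eventually.of_forall fun u => ?_)
    simp [hd0 u]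
  · rw [hν, integral_withDensity_eq_integral_toReal_smul hmeas (Eventually.of_forall fun u => by simp),
      ← integral_const_mul]
    refine integral_mono_of_nonneg (Eventually.of_forall fun u => by dsimp; positivity) hi2 (Eventually.of_forall fun u => ?_)
    simp only [smul_eq_mul, ENNReal.toReal_ofReal (hd0 u)]
    rw [← mul_assoc]
    gcongr
    exact hd1 u

lemma aux_comp_abs {f : ℝ → ℝ} (hf : IntegrableOn f (Set.Ioi 0)) :
    Integrable (fun u : ℝ => f |u|) := by
  have h1 : IntegrableOn (fun u : ℝ => f |u|) (Set.Ioi 0) :=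
    hf.congr_fun (fun u hu => by rw [abs_of_pos hu]) measurableSet_Ioi
  have h2 : IntegrableOn (fun u : ℝ => f |u|) (Set.Iic 0) := by
    rw [← Measure.map_neg_eq_self (volume : Measure ℝ)]
    let m : MeasurableEmbedding fun x : ℝ => -x := (Homeomorph.neg ℝ).measurableEmbedding
    rw [m.integrableOn_map_iff]
    simp_rw [Function.comp_def, abs_neg, Set.neg_preimage, Set.neg_Iic, neg_zero]
    exact Iff.mpr integrableOn_Ici_iff_integrableOn_Ioi h1
  rw [← integrableOn_univ, ← Set.Iic_union_Ioi (a := (0 : ℝ))]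
  exact h2.union h1

lemma aux_w (α m₁ m₂ : ℝ) (hα : 1 ≤ α) (hα2 : α < 2) (hm₁ : 0 ≤ m₁) (hm₂ : 0 ≤ m₂) :
    Integrable (fun u : ℝ => if |u| ≤ 1 then u ^ 2 else |u| ^ (3 / 4 : ℝ)) (nuStable α m₁ m₂) := by
  refine (aux_nu_integrable α m₁ m₂ hm₁ hm₂ ?_ ?_).1
  · exact Measurable.ite (measurableSet_le (by fun_prop) (by fun_prop)) (by fun_prop) (by fun_prop)
  · have h := aux_comp_abs (f := fun u : ℝ => u ^ (-α - 1) * (if u ≤ 1 then u ^ 2 else u ^ (3 / 4 : ℝ))) ?_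
    · simpa only [sq_abs] using h
    · rw [← Set.Ioc_union_Ioi_eq_Ioi (zero_le_one (α := ℝ))]
      refine IntegrableOn.union ?_ ?_
      · have : IntegrableOn (fun u : ℝ => u ^ (1 - α)) (Set.Ioc 0 1) := by
          rw [← intervalIntegrable_iff_integrableOn_Ioc_of_le zero_le_one]
          exact intervalIntegral.intervalIntegrable_rpow' (by linarith)
        refine this.congr_fun (fun u hu => ?_) measurableSet_Ioc
        simp only [hu.2, if_true]
        rw [← Real.rpow_natCast u 2, ← Real.rpow_add hu.1]
        congr 1; push_cast; ring
      · have := integrableOn_Ioi_rpow_of_lt (a := -α - 1 + 3 / 4) (c := 1) (by linarith) one_pos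
        refine this.congr_fun (fun u hu => ?_) measurableSet_Ioi
        have hu' : (1 : ℝ) < u := hu
        simp only [not_le.2 hu', if_false]
        rw [← Real.rpow_add (by linarith)]

lemma aux_H (α m₁ m₂ : ℝ) (hα : 1 ≤ α) (hα2 : α < 2) (hm₁ : 0 ≤ m₁) (hm₂ : 0 ≤ m₂)
    (g : SchwartzMap ℝ ℝ) : ∃ B : ℝ, ∀ x : ℝ,
      Integrable (fun u : ℝ => u * (g (x + u) - (if |u| ≤ 1 then g x else 0))) (nuStable α m₁ m₂) ∧
      ∫ u, ‖u * (g (x + u) - (if |u| ≤ 1 then g x else 0))‖ ∂(nuStable α m₁ m₂) ≤ B := by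
  obtain ⟨C, hC⟩ : ∃ C, ∀ x y, ‖g x - g y‖ ≤ C * ‖x - y‖ := by
    obtain ⟨C, hC0, hC⟩ := (SchwartzMap.derivCLM ℝ ℝ g).decay 0 0
    refine ⟨C, fun x y => ?_⟩
    refine Convex.norm_image_sub_le_of_norm_deriv_le (s := Set.univ) (fun z _ => g.differentiableAt) (fun z _ => ?_) convex_univ trivial trivial
    simpa using hC z
  set w : ℝ → ℝ := (fun u : ℝ => if |u| ≤ 1 then u ^ 2 else |u| ^ (3 / 4 : ℝ)) with hw
  have hwi : Integrable w (nuStable α m₁ m₂) := aux_w α m₁ m₂ hα hα2 hm₁ hm₂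
  have hC0 : 0 ≤ C := by have := hC 0 1; simp at this; exact (abs_nonneg _).trans this
  have hw0 : ∀ u, 0 ≤ w u := by intro u; simp only [hw]; split_ifs <;> positivity
  let G : ℝ → ℝ → ℝ := fun x u => if |u| ≤ 1 then 0 else u * g (x + u)
  have hGm : ∀ x, Measurable (G x) := fun x =>
    Measurable.ite (measurableSet_le (by fun_prop) (by fun_prop)) (by fun_prop)
      (measurable_id.mul (g.continuous.measurable.comp (measurable_const_add x)))
  have hGb : ∀ x u, |u| ^ (-α - 1) * |G x u| ≤ |g (x + u)| := by
    intro x u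
    simp only [G]
    split_ifs with h
    · simp
    · push Not at h
      rw [abs_mul, ← mul_assoc]
      have : |u| ^ (-α - 1) * |u| ≤ 1 := by
        rw [← Real.rpow_add_one (by linarith : |u| ≠ 0)]
        exact Real.rpow_le_one_of_one_le_of_nonpos h.le (by linarith)
      exact mul_le_of_le_one_left (abs_nonneg _) this
  have hgi : ∀ x, Integrable (fun u => |g (x + u)|) := fun x => (g.integrable.comp_add_left x).norm
  have hG1 : ∀ x, Integrable (fun u => |u| ^ (-α - 1) * |G x u|) := fun x =>
    (hgi x).mono' (by have := hGm x; fun_prop) (Eventually.of_forall fun u => by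
      rw [Real.norm_of_nonneg (by positivity)]; exact hGb x u)
  have hG := fun x => aux_nu_integrable α m₁ m₂ hm₁ hm₂ (hGm x) (by
    refine (hG1 x).mono (by have := hGm x; fun_prop) (Eventually.of_forall fun u => by simp))
  have hGB : ∀ x, ∫ u, |G x u| ∂(nuStable α m₁ m₂) ≤ (m₁ + m₂) * ∫ u, |g u| := by
    intro x
    refine (hG x).2.trans ?_
    refine mul_le_mul_of_nonneg_left ?_ (by positivity)
    rw [← integral_add_left_eq_self (fun u => |g u|) x]
    exact integral_mono (hG1 x) (hgi x) (hGb x)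
  have hbd : ∀ x u, ‖u * (g (x + u) - (if |u| ≤ 1 then g x else 0))‖ ≤ C * w u + |G x u| := by
    intro x u
    simp only [hw, G]
    split_ifs with h
    · have := hC (x + u) x
      rw [norm_mul, abs_zero, add_zero, ← sq_abs]
      simp only [add_sub_cancel_left] at this
      rw [Real.norm_eq_abs u] at *
      nlinarith [abs_nonneg u]
    · rw [sub_zero, Real.norm_eq_abs]
      have : 0 ≤ C * |u| ^ (3 / 4 : ℝ) := by positivity
      linarith
  have hm : ∀ x, Measurable (fun u : ℝ => u * (g (x + u) - (if |u| ≤ 1 then g x else 0))) := fun x =>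
    measurable_id.mul ((g.continuous.measurable.comp (measurable_const_add x)).sub
      (Measurable.ite (measurableSet_le (by fun_prop) (by fun_prop)) (by fun_prop) (by fun_prop)))
  have hbi : ∀ x, Integrable (fun u => C * w u + |G x u|) (nuStable α m₁ m₂) := fun x =>
    (hwi.const_mul C).add (hG x).1.abs
  refine ⟨C * ∫ u, w u ∂(nuStable α m₁ m₂) + (m₁ + m₂) * ∫ u, |g u|, fun x => ?_⟩
  have hint := (hbi x).mono' (hm x).aestronglyMeasurable (Eventually.of_forall (hbd x))
  refine ⟨hint, ?_⟩
  refine (integral_mono hint.norm (hbi x) (hbd x)).trans ?_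
  rw [integral_add (hwi.const_mul C) (hG x).1.abs, integral_const_mul]
  gcongr
  exact hGB x

noncomputable def auxW (u : ℝ) : ℝ := if |u| ≤ 1 then u ^ 2 else |u| ^ (3 / 4 : ℝ)
noncomputable def auxE (t u : ℝ) : ℂ := Complex.exp (Complex.I * t * u) - 1 -
      (if |u| ≤ 1 then Complex.I * t * u else 0)
noncomputable def auxD (t u : ℝ) : ℂ := u * (Complex.exp (Complex.I * t * u) -
      (if |u| ≤ 1 then 1 else 0))
noncomputable def auxS (n : ℕ) : Set ℝ := {u | |u| ≤ (n : ℝ)}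

lemma auxS_meas (n : ℕ) : MeasurableSet (auxS n) := measurableSet_le (by fun_prop) (by fun_prop)

lemma auxW_nonneg (u : ℝ) : 0 ≤ auxW u := by
  unfold auxW; split_ifs <;> positivity

lemma auxE_meas (t : ℝ) : Measurable (auxE t) := by
  unfold auxE
  exact Measurable.sub (by fun_prop) (Measurable.ite (measurableSet_le (by fun_prop) (by fun_prop))
    (by fun_prop) (by fun_prop))

lemma auxD_meas : Measurable (fun p : ℝ × ℝ => auxD p.1 p.2) := by
  unfold auxD
  refine Measurable.mul (by fun_prop) (Measurable.sub (by fun_prop) (Measurable.ite (measurableSet_le (by fun_prop) (by fun_prop))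
    (by fun_prop) (by fun_prop)))

lemma auxExp_norm (t u : ℝ) : ‖Complex.exp (Complex.I * t * u)‖ = 1 := by
  have : Complex.I * t * u = ((t * u : ℝ) : ℂ) * Complex.I := by push_cast; ring
  rw [this, Complex.norm_exp_ofReal_mul_I]

lemma auxExp_bd1 (t u : ℝ) : ‖Complex.exp (Complex.I * t * u) - 1‖ ≤ |t| * |u| := by
  have : Complex.I * t * u = Complex.I * ((t * u : ℝ) : ℂ) := by push_cast; ring
  rw [this, ← abs_mul]
  exact Real.norm_exp_I_mul_ofReal_sub_one_le

lemma auxExp_bd1' (t u : ℝ) : ‖Complex.exp (Complex.I * t * u) - 1‖ ≤ 2 := by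
  refine (norm_sub_le _ _).trans ?_
  rw [auxExp_norm]; simp; norm_num

lemma auxExp_bd2 (t u : ℝ) : ‖Complex.exp (Complex.I * t * u) - 1 - Complex.I * t * u‖ ≤ 3 * (t ^ 2 * u ^ 2) := by
  have hn : ‖Complex.I * t * u‖ = |t * u| := by simp [abs_mul]
  have h0 : t ^ 2 * u ^ 2 = |t * u| ^ 2 := by rw [sq_abs]; ring
  rw [h0]
  rcases le_total |t * u| 1 with h | h
  · have := Complex.norm_exp_sub_one_sub_id_le (x := Complex.I * t * u) (by rw [hn]; exact h)
    rw [hn] at this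
    nlinarith [sq_nonneg |t * u|]
  · refine (norm_sub_le _ _).trans ?_
    have := auxExp_bd1' t u
    rw [hn]
    nlinarith

lemma auxW_ge_one {u : ℝ} (hu : ¬ |u| ≤ 1) : 1 ≤ auxW u := by
  unfold auxW; rw [if_neg hu]; push Not at hu
  exact Real.one_le_rpow hu.le (by norm_num)

lemma auxE_bd (t u : ℝ) : ‖auxE t u‖ ≤ 3 * (1 + t ^ 2) * auxW u := by
  by_cases hu : |u| ≤ 1
  · simp only [auxE, auxW, if_pos hu]
    have := auxExp_bd2 t u
    nlinarith [sq_nonneg u]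
  · have h1 := auxW_ge_one hu
    simp only [auxE, if_neg hu, sub_zero]
    have := auxExp_bd1' t u
    nlinarith [sq_nonneg t]

lemma auxD_bd {n : ℕ} (hn : 1 ≤ n) (t : ℝ) {u : ℝ} (hu' : u ∈ auxS n) :
    ‖auxD t u‖ ≤ (n : ℝ) ^ (1 / 4 : ℝ) * (1 + |t|) * auxW u := by
  have hn' : (1 : ℝ) ≤ n := by exact_mod_cast hn
  have h1 : 1 ≤ (n : ℝ) ^ (1 / 4 : ℝ) := Real.one_le_rpow hn' (by norm_num)
  by_cases hu : |u| ≤ 1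
  · simp only [auxD, auxW, if_pos hu, norm_mul, Complex.norm_real, Real.norm_eq_abs]
    have := auxExp_bd1 t u
    have h2 : |u| * ‖Complex.exp (Complex.I * t * u) - 1‖ ≤ |t| * u ^ 2 := by
      rw [← sq_abs u]; nlinarith [abs_nonneg u]
    refine h2.trans ?_
    have : |t| ≤ (n : ℝ) ^ (1 / 4 : ℝ) * (1 + |t|) := by nlinarith [abs_nonneg t]
    gcongr
  · simp only [auxD, auxW, if_neg hu, norm_mul, Complex.norm_real, Real.norm_eq_abs, sub_zero]
    push Not at hu
    rw [auxExp_norm, mul_one]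
    calc |u| = |u| ^ (1 / 4 : ℝ) * |u| ^ (3 / 4 : ℝ) := by
          rw [← Real.rpow_add (by linarith)]; norm_num
      _ ≤ (n : ℝ) ^ (1 / 4 : ℝ) * |u| ^ (3 / 4 : ℝ) := by
          gcongr; exact hu'
      _ ≤ _ := by
          gcongr
          nlinarith [abs_nonneg t]

lemma auxE_tail {n : ℕ} (hn : 1 ≤ n) (t : ℝ) {u : ℝ} (hu' : u ∉ auxS n) :
    ‖auxE t u‖ ≤ 2 * (n : ℝ) ^ (-(3 / 4) : ℝ) * auxW u := by
  have hn' : (1 : ℝ) ≤ n := by exact_mod_cast hn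
  have hu1 : (n : ℝ) < |u| := by simpa [auxS] using hu'
  have hu : ¬ |u| ≤ 1 := by push Not; linarith
  simp only [auxE, auxW, if_neg hu, sub_zero]
  refine (auxExp_bd1' t u).trans ?_
  rw [mul_assoc]
  have : 1 ≤ (n : ℝ) ^ (-(3 / 4) : ℝ) * |u| ^ (3 / 4 : ℝ) := by
    rw [Real.rpow_neg (by linarith), inv_mul_eq_div, one_le_div (by positivity)]
    gcongr
  linarith

section
variable {ν : Measure ℝ}

lemma auxE_int (hw : Integrable auxW ν) (t : ℝ) : Integrable (auxE t) ν :=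
  (hw.const_mul (3 * (1 + t ^ 2))).mono' (auxE_meas t).aestronglyMeasurable
    (Eventually.of_forall (auxE_bd t))

lemma auxD_int (hw : Integrable auxW ν) {n : ℕ} (hn : 1 ≤ n) (t : ℝ) :
    IntegrableOn (auxD t) (auxS n) ν :=
  ((hw.const_mul ((n : ℝ) ^ (1 / 4 : ℝ) * (1 + |t|))).integrableOn).mono'
    (auxD_meas.comp measurable_prodMk_left).aestronglyMeasurable
    ((ae_restrict_iff' (auxS_meas n)).2 (Eventually.of_forall fun _ hu => auxD_bd hn t hu))

noncomputable def auxK (ν : Measure ℝ) (n : ℕ) (t : ℝ) : ℂ := ∫ u in auxS n, auxD t u ∂ν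
noncomputable def auxA (ν : Measure ℝ) (c : ℝ) (n : ℕ) (t : ℝ) : ℂ :=
  Complex.I * t * c + ∫ u in auxS n, auxE t u ∂ν

lemma auxK_bd (hw : Integrable auxW ν) {n : ℕ} (hn : 1 ≤ n) (t : ℝ) :
    ‖auxK ν n t‖ ≤ (n : ℝ) ^ (1 / 4 : ℝ) * (1 + |t|) * ∫ u, auxW u ∂ν := by
  have hi := (hw.const_mul ((n : ℝ) ^ (1 / 4 : ℝ) * (1 + |t|)))
  refine (norm_integral_le_of_norm_le hi.integrableOn ((ae_restrict_iff' (auxS_meas n)).2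
    (Eventually.of_forall fun _ hu => auxD_bd hn t hu))).trans ?_
  rw [← integral_const_mul]
  refine setIntegral_le_integral hi (Eventually.of_forall fun u => ?_)
  have := auxW_nonneg u
  dsimp
  positivity

lemma auxK_meas [SFinite ν] (n : ℕ) : StronglyMeasurable (auxK ν n) :=
  auxD_meas.stronglyMeasurable.integral_prod_right

lemma auxA_deriv (hw : Integrable auxW ν) (c : ℝ) {n : ℕ} (hn : 1 ≤ n) (t : ℝ) :
    HasDerivAt (auxA ν c n) (Complex.I * (c + auxK ν n t)) t := by
  have h1 : HasDerivAt (fun t : ℝ => ∫ u in auxS n, auxE t u ∂ν)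
      (∫ u in auxS n, Complex.I * auxD t u ∂ν) t := by
    refine (hasDerivAt_integral_of_dominated_loc_of_deriv_le (s := Metric.ball t 1)
      (bound := fun u => (n : ℝ) ^ (1 / 4 : ℝ) * (2 + |t|) * auxW u)
      (F' := fun t u => Complex.I * auxD t u)
      (Metric.ball_mem_nhds t one_pos)
      (Eventually.of_forall fun t => (auxE_meas t).aestronglyMeasurable)
      (auxE_int hw t).integrableOn
      ((auxD_int hw hn t).1.const_mul _) ?_ (hw.const_mul _).integrableOn ?_).2
    · refine (ae_restrict_iff' (auxS_meas n)).2 (Eventually.of_forall fun u hu s hs => ?_)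
      rw [norm_mul, Complex.norm_I, one_mul]
      refine (auxD_bd hn s hu).trans ?_
      have : |s| ≤ 1 + |t| := by
        have h1 : |s - t| < 1 := by simpa [Real.dist_eq] using hs
        have h2 := abs_sub_abs_le_abs_sub s t
        linarith
      have := auxW_nonneg u
      refine mul_le_mul_of_nonneg_right (mul_le_mul_of_nonneg_left ?_ (by positivity)) this
      linarith
    · refine Eventually.of_forall fun u s _ => ?_
      have h0 : HasDerivAt (fun s : ℝ => Complex.I * (s : ℂ) * u) (Complex.I * u) s := by
        simpa using ((Complex.ofRealCLM.hasDerivAt (x := s)).const_mul Complex.I).mul_const (u : ℂ)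
      simp only [auxE, auxD]
      split_ifs
      · convert! (h0.cexp.sub_const 1).sub h0 using 1
        ring
      · convert! (h0.cexp.sub_const 1).sub_const 0 using 1
        ring
  have h0 : HasDerivAt (fun s : ℝ => Complex.I * (s : ℂ) * c) (Complex.I * c) t := by
    simpa using ((Complex.ofRealCLM.hasDerivAt (x := t)).const_mul Complex.I).mul_const (c : ℂ)
  rw [integral_const_mul] at h1
  rw [mul_add]
  exact h0.add h1

lemma auxA_norm (hw : Integrable auxW ν) (c : ℝ) (n : ℕ) (t : ℝ) :
    ‖Complex.exp (auxA ν c n t)‖ ≤ 1 := by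
  rw [Complex.norm_exp, Real.exp_le_one_iff]
  have h := integral_re (𝕜 := ℂ) (auxE_int hw t).integrableOn (μ := ν.restrict (auxS n))
  simp only [RCLike.re_to_complex] at h
  simp only [auxA, Complex.add_re]
  rw [← h]
  have h2 : (Complex.I * t * c).re = 0 := by simp
  rw [h2, zero_add]
  refine integral_nonpos fun u => ?_
  have e : Complex.I * t * u = ((t * u : ℝ) : ℂ) * Complex.I := by push_cast; ring
  have h3 : (if |u| ≤ 1 then Complex.I * t * u else 0).re = 0 := by
    split_ifs <;> simp
  simp only [auxE, Complex.sub_re, h3, Pi.zero_apply, Complex.one_re]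
  rw [e, Complex.exp_ofReal_mul_I_re]
  linarith [Real.cos_le_one (t * u)]

lemma auxA_tail (hw : Integrable auxW ν) (c : ℝ) {n : ℕ} (hn : 1 ≤ n) (t : ℝ)
    (hs : 2 * (n : ℝ) ^ (-(3 / 4) : ℝ) * ∫ u, auxW u ∂ν ≤ 1) :
    ‖Complex.exp (Complex.I * t * c + ∫ u, auxE t u ∂ν) - Complex.exp (auxA ν c n t)‖ ≤
      4 * (n : ℝ) ^ (-(3 / 4) : ℝ) * ∫ u, auxW u ∂ν := by
  have hsplit := integral_add_compl (auxS_meas n) (auxE_int hw t)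
  have hT : ‖∫ u in (auxS n)ᶜ, auxE t u ∂ν‖ ≤ 2 * (n : ℝ) ^ (-(3 / 4) : ℝ) * ∫ u, auxW u ∂ν := by
    have hi := (hw.const_mul (2 * (n : ℝ) ^ (-(3 / 4) : ℝ)))
    refine (norm_integral_le_of_norm_le hi.integrableOn ((ae_restrict_iff' (auxS_meas n).compl).2
      (Eventually.of_forall fun _ hu => auxE_tail hn t hu))).trans ?_
    rw [← integral_const_mul]
    refine setIntegral_le_integral hi (Eventually.of_forall fun u => ?_)
    have := auxW_nonneg u
    dsimp
    positivity
  rw [← hsplit, ← add_assoc]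
  change ‖Complex.exp (auxA ν c n t + _) - _‖ ≤ _
  rw [Complex.exp_add]
  have e : ∀ a b : ℂ, a * b - a = a * (b - 1) := fun a b => by ring
  rw [e, norm_mul]
  have h1 := auxA_norm hw c n t
  have h2 := Complex.norm_exp_sub_one_le (hT.trans hs)
  calc _ ≤ 1 * (2 * ‖∫ u in (auxS n)ᶜ, auxE t u ∂ν‖) := by gcongr
    _ ≤ _ := by linarith

end

section
variable {ν : Measure ℝ}

noncomputable def auxP (ν : Measure ℝ) (c : ℝ) (f : SchwartzMap ℝ ℂ) (n : ℕ) (t : ℝ) : ℂ :=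
  Complex.I * deriv f t - f t * (c + auxK ν n t)

noncomputable def auxQ (ν : Measure ℝ) (c : ℝ) (f : SchwartzMap ℝ ℂ) (t : ℝ) : ℝ :=
  ‖deriv f t‖ + (|c| + ∫ u, auxW u ∂ν) * ‖f t‖ + (∫ u, auxW u ∂ν) * (|t| * ‖f t‖)

lemma auxDeriv_int (f : SchwartzMap ℝ ℂ) : Integrable (deriv f) :=
  (SchwartzMap.derivCLM ℝ ℂ f).integrable

lemma auxQ_int (c : ℝ) (f : SchwartzMap ℝ ℂ) : Integrable (auxQ ν c f) := by
  refine ((auxDeriv_int f).norm.add (f.integrable.norm.const_mul _)).add (Integrable.const_mul ?_ _)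
  simpa using f.integrable_pow_mul volume 1

lemma auxP_bd (hw : Integrable auxW ν) (c : ℝ) (f : SchwartzMap ℝ ℂ) {n : ℕ} (hn : 1 ≤ n) (t : ℝ) :
    ‖auxP ν c f n t‖ ≤ (n : ℝ) ^ (1 / 4 : ℝ) * auxQ ν c f t := by
  have hn' : (1 : ℝ) ≤ n := by exact_mod_cast hn
  have h1 : 1 ≤ (n : ℝ) ^ (1 / 4 : ℝ) := Real.one_le_rpow hn' (by norm_num)
  have h2 := auxK_bd hw hn t
  have hJ : 0 ≤ ∫ u, auxW u ∂ν := integral_nonneg auxW_nonneg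
  set J := ∫ u, auxW u ∂ν with hJd
  set a := (n : ℝ) ^ (1 / 4 : ℝ)
  have h3 : ‖(c : ℂ) + auxK ν n t‖ ≤ |c| + a * (1 + |t|) * J := by
    refine (norm_add_le _ _).trans ?_
    rw [Complex.norm_real, Real.norm_eq_abs]
    linarith
  have h4 : ‖auxP ν c f n t‖ ≤ ‖deriv f t‖ + ‖f t‖ * (|c| + a * (1 + |t|) * J) := by
    refine (norm_sub_le _ _).trans ?_
    rw [norm_mul, norm_mul, Complex.norm_I, one_mul]
    gcongr
  refine h4.trans ?_
  unfold auxQ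
  rw [← hJd]
  have e1 : ‖deriv f t‖ ≤ a * ‖deriv f t‖ := le_mul_of_one_le_left (norm_nonneg _) h1
  have e2 : |c| * ‖f t‖ ≤ a * (|c| * ‖f t‖) := le_mul_of_one_le_left (by positivity) h1
  nlinarith

lemma auxP_int [SFinite ν] (hw : Integrable auxW ν) (c : ℝ) (f : SchwartzMap ℝ ℂ) {n : ℕ} (hn : 1 ≤ n) :
    Integrable (auxP ν c f n) := by
  refine ((auxQ_int (ν := ν) c f).const_mul ((n : ℝ) ^ (1 / 4 : ℝ))).mono' ?_
    (Eventually.of_forall (auxP_bd hw c f hn))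
  exact ((auxDeriv_int f).1.const_mul _).sub (f.integrable.1.mul
    (aestronglyMeasurable_const.add (auxK_meas n).aestronglyMeasurable))

lemma auxP_ibp [SFinite ν] (hw : Integrable auxW ν) (c : ℝ) (f : SchwartzMap ℝ ℂ) {n : ℕ} (hn : 1 ≤ n) :
    Integrable (fun t => auxP ν c f n t * Complex.exp (auxA ν c n t)) ∧
    ∫ t, auxP ν c f n t * Complex.exp (auxA ν c n t) = 0 := by
  have hc : Continuous (fun t => Complex.exp (auxA ν c n t)) :=
    Complex.continuous_exp.comp
      (continuous_iff_continuousAt.2 fun t => (auxA_deriv hw c hn t).continuousAt)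
  have hi : Integrable (fun t => auxP ν c f n t * Complex.exp (auxA ν c n t)) :=
    (auxP_int hw c f hn).mul_bdd (c := 1) hc.aestronglyMeasurable (Eventually.of_forall (auxA_norm hw c n))
  refine ⟨hi, ?_⟩
  refine integral_eq_zero_of_hasDerivAt_of_integrable
    (f := fun t => Complex.I * (f t * Complex.exp (auxA ν c n t))) (fun t => ?_) hi ?_
  · convert! ((f.hasDerivAt t).mul (auxA_deriv hw c hn t).cexp).const_mul Complex.I using 1
    unfold auxP
    linear_combination (-(f t * (c + auxK ν n t)) * Complex.exp (auxA ν c n t)) * Complex.I_mul_I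
  · exact (f.integrable.mul_bdd (c := 1) hc.aestronglyMeasurable
      (Eventually.of_forall (auxA_norm hw c n))).const_mul _

lemma auxP_lim [SFinite ν] (hw : Integrable auxW ν) (c : ℝ) (f : SchwartzMap ℝ ℂ) (ψ : ℝ → ℂ)
    (hψm : AEStronglyMeasurable ψ) (hψb : ∀ t, ‖ψ t‖ ≤ 1)
    (hψ : ∀ t, ψ t = Complex.exp (Complex.I * t * c + ∫ u, auxE t u ∂ν)) :
    Tendsto (fun n : ℕ => ∫ t, auxP ν c f n t * ψ t) atTop (𝓝 0) := by
  have hJ : 0 ≤ ∫ u, auxW u ∂ν := integral_nonneg auxW_nonneg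
  set J := ∫ u, auxW u ∂ν with hJd
  have ht : ∀ s : ℝ, 0 < s → Tendsto (fun n : ℕ => (n : ℝ) ^ (-s)) atTop (𝓝 0) := fun s hs =>
    (tendsto_rpow_neg_atTop hs).comp tendsto_natCast_atTop_atTop
  have hev : ∀ᶠ n : ℕ in atTop, 2 * (n : ℝ) ^ (-(3 / 4) : ℝ) * J ≤ 1 := by
    have h := ((ht (3 / 4) (by norm_num)).const_mul 2).mul_const J
    simp only [mul_zero, zero_mul] at h
    exact h.eventually_le_const one_pos
  have hlim : Tendsto (fun n : ℕ => (n : ℝ) ^ (-(1 / 2) : ℝ) * (4 * J * ∫ t, auxQ ν c f t)) atTop (𝓝 0) := by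
    simpa using (ht (1 / 2) (by norm_num)).mul_const (4 * J * ∫ t, auxQ ν c f t)
  refine squeeze_zero_norm' ?_ hlim
  filter_upwards [hev, eventually_ge_atTop 1] with n hn1 hn
  have hn' : (0 : ℝ) < n := by exact_mod_cast hn
  obtain ⟨hi, h0⟩ := auxP_ibp hw c f hn
  have hi2 : Integrable (fun t => auxP ν c f n t * ψ t) :=
    (auxP_int hw c f hn).mul_bdd (c := 1) hψm (Eventually.of_forall hψb)
  have h1 : ∫ t, auxP ν c f n t * ψ t =
      ∫ t, auxP ν c f n t * (ψ t - Complex.exp (auxA ν c n t)) := by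
    simp_rw [mul_sub]
    rw [integral_sub hi2 hi, h0, sub_zero]
  rw [h1]
  have h2 : ∀ t, ‖auxP ν c f n t * (ψ t - Complex.exp (auxA ν c n t))‖ ≤
      (n : ℝ) ^ (-(1 / 2) : ℝ) * (4 * J) * auxQ ν c f t := by
    intro t
    have a1 := auxP_bd hw c f hn t
    have a2 := auxA_tail hw c hn t hn1
    rw [← hψ] at a2
    rw [norm_mul]
    have e : (n : ℝ) ^ (-(1 / 2) : ℝ) = (n : ℝ) ^ (1 / 4 : ℝ) * (n : ℝ) ^ (-(3 / 4) : ℝ) := by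
      rw [← Real.rpow_add hn']; norm_num
    calc _ ≤ ((n : ℝ) ^ (1 / 4 : ℝ) * auxQ ν c f t) * (4 * (n : ℝ) ^ (-(3 / 4) : ℝ) * J) :=
          mul_le_mul a1 a2 (norm_nonneg _) ((norm_nonneg _).trans a1)
      _ = _ := by rw [e]; ring
  refine (norm_integral_le_of_norm_le ((auxQ_int (ν := ν) c f).const_mul _)
    (Eventually.of_forall h2)).trans ?_
  rw [integral_const_mul, mul_assoc]

lemma auxExp_cont (x : ℝ) : Continuous (fun t : ℝ => Complex.exp (Complex.I * t * x)) := by fun_prop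

lemma aux_x (f : SchwartzMap ℝ ℂ) (x : ℝ) :
    ∫ t : ℝ, Complex.I * deriv f t * Complex.exp (Complex.I * t * x) =
      x * ∫ t : ℝ, f t * Complex.exp (Complex.I * t * x) := by
  have hb : ∀ᵐ t : ℝ, ‖Complex.exp (Complex.I * t * x)‖ ≤ 1 :=
    Eventually.of_forall fun t => (auxExp_norm t x).le
  have i1 : Integrable (fun t : ℝ => f t * Complex.exp (Complex.I * t * x)) :=
    f.integrable.mul_bdd (c := 1) (auxExp_cont x).aestronglyMeasurable hb
  have i2 : Integrable (fun t : ℝ => Complex.I * deriv f t * Complex.exp (Complex.I * t * x)) :=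
    ((auxDeriv_int f).const_mul _).mul_bdd (c := 1) (auxExp_cont x).aestronglyMeasurable hb
  have h0 := integral_eq_zero_of_hasDerivAt_of_integrable
    (f := fun t : ℝ => Complex.I * (f t * Complex.exp (Complex.I * t * x)))
    (f' := fun t : ℝ => Complex.I * deriv f t * Complex.exp (Complex.I * t * x) -
      x * (f t * Complex.exp (Complex.I * t * x))) (fun t => ?_)
    (i2.sub (i1.const_mul _)) (i1.const_mul _)
  · rw [integral_sub i2 (i1.const_mul _), integral_const_mul, sub_eq_zero] at h0
    exact h0
  · have h1 : HasDerivAt (fun s : ℝ => Complex.I * (s : ℂ) * x) (Complex.I * x) t := by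
      simpa using ((Complex.ofRealCLM.hasDerivAt (x := t)).const_mul Complex.I).mul_const (x : ℂ)
    convert! ((f.hasDerivAt t).mul h1.cexp).const_mul Complex.I using 1
    linear_combination (-(f t * x) * Complex.exp (Complex.I * t * x)) * Complex.I_mul_I

lemma aux_k [SFinite ν] (hw : Integrable auxW ν) (g : SchwartzMap ℝ ℝ) (f : SchwartzMap ℝ ℂ)
    (hf : ∀ x : ℝ, (g x : ℂ) = ∫ t : ℝ, f t * Complex.exp (Complex.I * t * x))
    {n : ℕ} (hn : 1 ≤ n) (x : ℝ) :
    ∫ t : ℝ, f t * auxK ν n t * Complex.exp (Complex.I * t * x) =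
      ((∫ u in auxS n, u * (g (x + u) - (if |u| ≤ 1 then g x else 0)) ∂ν : ℝ) : ℂ) := by
  have hint : ∀ y : ℝ, Integrable (fun t : ℝ => f t * Complex.exp (Complex.I * t * y)) := fun y =>
    f.integrable.mul_bdd (c := 1) (auxExp_cont y).aestronglyMeasurable
      (Eventually.of_forall fun t => (auxExp_norm t y).le)
  have h1 : ∀ t : ℝ, f t * auxK ν n t * Complex.exp (Complex.I * t * x) =
      ∫ u in auxS n, f t * Complex.exp (Complex.I * t * x) * auxD t u ∂ν := by
    intro t
    rw [integral_const_mul, auxK]; ring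
  simp_rw [h1]
  rw [integral_integral_swap, ← integral_complex_ofReal]
  · congr 1
    ext u
    have e : ∀ t : ℝ, f t * Complex.exp (Complex.I * t * x) * auxD t u =
        u * (f t * Complex.exp (Complex.I * t * (x + u : ℝ)) -
          (if |u| ≤ 1 then 1 else 0) * (f t * Complex.exp (Complex.I * t * x))) := by
      intro t
      have : Complex.I * t * (x + u : ℝ) = Complex.I * t * x + Complex.I * t * u := by
        push_cast; ring
      rw [auxD, this, Complex.exp_add]
      ring
    simp_rw [e]
    rw [integral_const_mul, integral_sub (hint _) ((hint _).const_mul _), integral_const_mul,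
      ← hf, ← hf]
    push_cast
    split_ifs <;> simp
  · have hq : Integrable (fun t : ℝ => (1 + |t|) * ‖f t‖) := by
      have := f.integrable.norm.add (by simpa using f.integrable_pow_mul volume 1 :
        Integrable (fun t : ℝ => |t| * ‖f t‖))
      refine this.congr (Eventually.of_forall fun t => ?_)
      simp only [Pi.add_apply]
      ring
    have hp : Integrable (fun p : ℝ × ℝ => ((1 + |p.1|) * ‖f p.1‖) *
        ((n : ℝ) ^ (1 / 4 : ℝ) * auxW p.2)) (volume.prod (ν.restrict (auxS n))) :=
      hq.mul_prod (hw.integrableOn.const_mul _)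
    refine hp.mono' ?_ ?_
    · have : Measurable f := f.continuous.measurable
      have := auxD_meas
      simp only [Function.uncurry_def]
      refine Measurable.aestronglyMeasurable ?_
      fun_prop
    · have : ∀ᵐ p : ℝ × ℝ ∂((volume : Measure ℝ).prod (ν.restrict (auxS n))), p.2 ∈ auxS n :=
        Measure.quasiMeasurePreserving_snd.ae (ae_restrict_mem (auxS_meas n))
      filter_upwards [this] with p hp
      simp only [Function.uncurry_def]
      rw [norm_mul, norm_mul, auxExp_norm, mul_one]
      calc _ ≤ ‖f p.1‖ * ((n : ℝ) ^ (1 / 4 : ℝ) * (1 + |p.1|) * auxW p.2) := by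
            gcongr; exact auxD_bd hn p.1 hp
        _ = _ := by ring

lemma auxP_x [SFinite ν] (hw : Integrable auxW ν) (c : ℝ) (g : SchwartzMap ℝ ℝ) (f : SchwartzMap ℝ ℂ)
    (hf : ∀ x : ℝ, (g x : ℂ) = ∫ t : ℝ, f t * Complex.exp (Complex.I * t * x))
    {n : ℕ} (hn : 1 ≤ n) (x : ℝ) :
    ∫ t : ℝ, auxP ν c f n t * Complex.exp (Complex.I * t * x) =
      (((x - c) * g x -
        ∫ u in auxS n, u * (g (x + u) - (if |u| ≤ 1 then g x else 0)) ∂ν : ℝ) : ℂ) := by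
  have hb : ∀ᵐ t : ℝ, ‖Complex.exp (Complex.I * t * x)‖ ≤ 1 :=
    Eventually.of_forall fun t => (auxExp_norm t x).le
  have i1 : Integrable (fun t : ℝ => f t * Complex.exp (Complex.I * t * x)) :=
    f.integrable.mul_bdd (c := 1) (auxExp_cont x).aestronglyMeasurable hb
  have i2 : Integrable (fun t : ℝ => Complex.I * deriv f t * Complex.exp (Complex.I * t * x)) :=
    ((auxDeriv_int f).const_mul _).mul_bdd (c := 1) (auxExp_cont x).aestronglyMeasurable hb
  have i3 : Integrable (fun t : ℝ => auxP ν c f n t * Complex.exp (Complex.I * t * x)) :=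
    (auxP_int hw c f hn).mul_bdd (c := 1) (auxExp_cont x).aestronglyMeasurable hb
  have e : ∀ t : ℝ, f t * auxK ν n t * Complex.exp (Complex.I * t * x) =
      Complex.I * deriv f t * Complex.exp (Complex.I * t * x) -
        c * (f t * Complex.exp (Complex.I * t * x)) -
        auxP ν c f n t * Complex.exp (Complex.I * t * x) := by
    intro t; unfold auxP; ring
  have hk := aux_k hw g f hf hn x
  simp_rw [e] at hk
  have i4 : Integrable (fun t : ℝ => Complex.I * deriv f t * Complex.exp (Complex.I * t * x) -
        c * (f t * Complex.exp (Complex.I * t * x))) := i2.sub (i1.const_mul _)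
  rw [integral_sub i4 i3, integral_sub i2 (i1.const_mul _),
    integral_const_mul, aux_x, ← hf] at hk
  push_cast at hk ⊢
  linear_combination -hk
end

theorem stmt_8 (α m₁ m₂ β : ℝ) (hα : 1 ≤ α) (hα2 : α < 2)
    (hm₁ : 0 ≤ m₁) (hm₂ : 0 ≤ m₂) (hm : 0 < m₁ + m₂)
    (μ : Measure ℝ) [IsProbabilityMeasure μ]
    (hcf : ∀ t : ℝ, ∫ x : ℝ, Complex.exp (Complex.I * t * x) ∂μ = psi12 α m₁ m₂ β t)
    (g : SchwartzMap ℝ ℝ) :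
    Integrable (fun x : ℝ => (x - Gamma12 α m₁ m₂ β) * g x) μ ∧
    (∀ x : ℝ, Integrable (fun u : ℝ => u * (g (x + u) - (if |u| ≤ 1 then g x else 0)))
      (nuStable α m₁ m₂)) ∧
    Integrable (fun x : ℝ => ∫ u : ℝ, u * (g (x + u) - (if |u| ≤ 1 then g x else 0))
      ∂(nuStable α m₁ m₂)) μ ∧
    ∫ x : ℝ, (x - Gamma12 α m₁ m₂ β) * g x ∂μ =
      ∫ x : ℝ, ∫ u : ℝ, u * (g (x + u) - (if |u| ≤ 1 then g x else 0))
        ∂(nuStable α m₁ m₂) ∂μ := by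
  obtain ⟨B, hB⟩ := aux_H α m₁ m₂ hα hα2 hm₁ hm₂ g
  obtain ⟨f, hf⟩ := aux_rep g
  have hw : Integrable auxW (nuStable α m₁ m₂) := aux_w α m₁ m₂ hα hα2 hm₁ hm₂
  have hsf : SFinite (nuStable α m₁ m₂) := by unfold nuStable; infer_instance
  set c := Gamma12 α m₁ m₂ β with hc
  set ν := nuStable α m₁ m₂ with hν
  set H : ℝ → ℝ → ℝ := fun x u => u * (g (x + u) - (if |u| ≤ 1 then g x else 0)) with hH
  have hHm : Measurable (fun p : ℝ × ℝ => H p.1 p.2) := by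
    have : Measurable g := g.continuous.measurable
    refine Measurable.mul (by fun_prop) (Measurable.sub (by fun_prop)
      (Measurable.ite (measurableSet_le (by fun_prop) (by fun_prop)) (by fun_prop) (by fun_prop)))
  have hTm : ∀ s : Set ℝ, StronglyMeasurable (fun x => ∫ u in s, H x u ∂ν) := fun s =>
    hHm.stronglyMeasurable.integral_prod_right
  have hTb : ∀ (s : Set ℝ) (x : ℝ), ‖∫ u in s, H x u ∂ν‖ ≤ B := fun s x =>
    (norm_integral_le_integral_norm _).trans
      ((setIntegral_le_integral (hB x).1.norm (Eventually.of_forall fun u => norm_nonneg _)).trans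
        (hB x).2)
  have hTi : ∀ s : Set ℝ, Integrable (fun x => ∫ u in s, H x u ∂ν) μ := fun s =>
    (integrable_const B).mono' (hTm s).aestronglyMeasurable (Eventually.of_forall (hTb s))
  have hTi' : Integrable (fun x => ∫ u, H x u ∂ν) μ := by
    simpa using hTi Set.univ
  have hL : Integrable (fun x : ℝ => (x - c) * g x) μ := by
    obtain ⟨C0, -, hC0⟩ := g.decay 0 0
    obtain ⟨C1, -, hC1⟩ := g.decay 1 0
    have hg := g.continuous
    refine (integrable_const (C1 + |c| * C0)).mono'
      (by fun_prop : Continuous fun x : ℝ => (x - c) * g x).aestronglyMeasurable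
      (Eventually.of_forall fun x => ?_)
    have a := hC0 x
    have b := hC1 x
    simp only [pow_zero, pow_one, one_mul, norm_iteratedFDeriv_zero] at a b
    rw [sub_mul]
    refine (norm_sub_le _ _).trans ?_
    rw [norm_mul, norm_mul, Real.norm_eq_abs c]
    gcongr
  refine ⟨hL, fun x => (hB x).1, hTi', ?_⟩
  -- the characteristic function
  set ψ : ℝ → ℂ := fun t => ∫ x : ℝ, Complex.exp (Complex.I * t * x) ∂μ with hψd
  have hψm : StronglyMeasurable ψ := by
    refine StronglyMeasurable.integral_prod_right (f := fun t x : ℝ => Complex.exp (Complex.I * t * x)) ?_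
    exact (by fun_prop : Continuous fun p : ℝ × ℝ => Complex.exp (Complex.I * p.1 * p.2)).stronglyMeasurable
  have hψb : ∀ t, ‖ψ t‖ ≤ 1 := fun t => by
    refine (norm_integral_le_of_norm_le (integrable_const (1 : ℝ))
      (Eventually.of_forall fun x => (auxExp_norm t x).le)).trans ?_
    simp
  have hlim := auxP_lim hw c f ψ hψm.aestronglyMeasurable hψb (fun t => hcf t)
  have hfub : ∀ᶠ n : ℕ in atTop, ∫ t, auxP ν c f n t * ψ t =
      ((∫ x, (x - c) * g x ∂μ - ∫ x, ∫ u in auxS n, H x u ∂ν ∂μ : ℝ) : ℂ) := by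
    filter_upwards [eventually_ge_atTop 1] with n hn
    have e1 : ∀ t, auxP ν c f n t * ψ t =
        ∫ x : ℝ, auxP ν c f n t * Complex.exp (Complex.I * t * x) ∂μ := fun t => by
      rw [integral_const_mul]
    simp_rw [e1]
    rw [integral_integral_swap]
    · simp_rw [auxP_x hw c g f hf hn]
      rw [integral_complex_ofReal, integral_sub hL (hTi _)]
    · have h1 : Integrable (fun p : ℝ × ℝ => auxP ν c f n p.1 * (1 : ℂ)) (volume.prod μ) :=
        (auxP_int hw c f hn).mul_prod (integrable_const (1 : ℂ))
      simp only [mul_one] at h1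
      exact h1.mul_bdd (c := 1) (by fun_prop : Continuous fun p : ℝ × ℝ => Complex.exp (Complex.I * p.1 * p.2)).aestronglyMeasurable
        (Eventually.of_forall fun p => (auxExp_norm p.1 p.2).le)
  have hT : Tendsto (fun n : ℕ => ∫ x, ∫ u in auxS n, H x u ∂ν ∂μ) atTop
      (𝓝 (∫ x, ∫ u, H x u ∂ν ∂μ)) := by
    refine tendsto_integral_of_dominated_convergence (fun _ => B)
      (fun n => (hTm _).aestronglyMeasurable) (integrable_const B)
      (fun n => Eventually.of_forall (hTb _)) (Eventually.of_forall fun x => ?_)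
    have hU : (⋃ n, auxS n) = Set.univ := by
      refine Set.eq_univ_of_forall fun u => Set.mem_iUnion.2 ?_
      exact exists_nat_ge |u|
    have := tendsto_setIntegral_of_monotone (μ := ν) (f := H x) (s := auxS) auxS_meas
      (fun a b hab u hu => le_trans (show |u| ≤ (a : ℝ) from hu) (Nat.cast_le.2 hab)) (hB x).1.integrableOn
    simpa [hU] using this
  have h2 := (tendsto_congr' hfub).1 hlim
  have h3 : Tendsto (fun n : ℕ => ((∫ x, (x - c) * g x ∂μ - ∫ x, ∫ u in auxS n, H x u ∂ν ∂μ : ℝ) : ℂ))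
      atTop (𝓝 ((∫ x, (x - c) * g x ∂μ - ∫ x, ∫ u, H x u ∂ν ∂μ : ℝ) : ℂ)) :=
    (Complex.continuous_ofReal.tendsto _).comp (tendsto_const_nhds.sub hT)
  have h4 := tendsto_nhds_unique h3 h2
  have h5 : (∫ x, (x - c) * g x ∂μ - ∫ x, ∫ u, H x u ∂ν ∂μ) = 0 := by exact_mod_cast h4
  exact sub_eq_zero.1 h5
end

section
/- (Stein identity for symmetric stable laws.) Let α ∈ (0,2), m > 0, and let μ be a Borel probability measure on ℝ whose characteristic function satisfies ∫_ℝ e^{itx} dμ(x) = exp(2m ∫₀^∞ (cos(tu) - 1) u^{-1-α} du) for all t ∈ ℝ. Then for every real-valued Schwartz function g on ℝ, ∫_ℝ x g(x) dμ(x) = m ∫_ℝ ∫₀^∞ (g(x+u) - g(x-u)) u^{-α} du dμ(x), all integrals being absolutely convergent. -/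
open MeasureTheory
open scoped FourierTransform SchwartzMap ContDiff

/-- A Schwartz function with zero integral has a Schwartz antiderivative. -/
lemma exists_antideriv (g : 𝓢(ℝ, ℝ)) (h0 : ∫ x, g x = 0) :
    ∃ G : 𝓢(ℝ, ℝ), ∀ x, HasDerivAt G (g x) x := by
  set G : ℝ → ℝ := fun x => ∫ y in Set.Iic x, g y with hG
  have hgi : Integrable g := g.integrable
  have hd : ∀ x, HasDerivAt G (g x) x := by
    intro x
    have h1 : G = fun x => (∫ y in Set.Iic 0, g y) + ∫ y in (0:ℝ)..x, g y := by
      ext x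
      have := intervalIntegral.integral_Iic_sub_Iic (μ := volume) (f := g) (a := 0) (b := x)
        hgi.integrableOn hgi.integrableOn
      simp only [hG]
      linarith
    rw [h1]
    exact (g.continuous.integral_hasStrictDerivAt 0 x).hasDerivAt.const_add _
  have hderiv : deriv G = g := by ext x; exact (hd x).deriv
  have hsmooth : ContDiff ℝ ∞ G := by
    rw [contDiff_infty_iff_deriv]
    refine ⟨fun x => (hd x).differentiableAt, ?_⟩
    rw [hderiv]; exact g.smooth'
  refine ⟨⟨G, hsmooth, ?_⟩, hd⟩
  intro k n
  rcases n with _ | n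
  · refine ⟨∫ y, ‖y‖ ^ k * ‖g y‖, fun x => ?_⟩
    have hint : Integrable (fun y => ‖y‖ ^ k * ‖g y‖) := g.integrable_pow_mul volume k
    have key : ∀ s : Set ℝ, MeasurableSet s → (∀ y ∈ s, ‖x‖ ≤ ‖y‖) →
        ‖x‖ ^ k * ‖∫ y in s, g y‖ ≤ ∫ y, ‖y‖ ^ k * ‖g y‖ := by
      intro s hs hxs
      calc ‖x‖ ^ k * ‖∫ y in s, g y‖ ≤ ‖x‖ ^ k * ∫ y in s, ‖g y‖ := by
            gcongr; exact norm_integral_le_integral_norm _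
        _ = ∫ y in s, ‖x‖ ^ k * ‖g y‖ := (integral_const_mul _ _).symm
        _ ≤ ∫ y in s, ‖y‖ ^ k * ‖g y‖ := by
            refine setIntegral_mono_on (hgi.norm.const_mul _).integrableOn hint.integrableOn hs ?_
            intro y hy
            have := hxs y hy
            gcongr
        _ ≤ ∫ y, ‖y‖ ^ k * ‖g y‖ :=
            setIntegral_le_integral hint (Filter.Eventually.of_forall fun y => by positivity)
    rw [norm_iteratedFDeriv_zero]
    rcases le_total x 0 with hx | hx
    · refine key _ measurableSet_Iic fun y hy => ?_
      rw [Set.mem_Iic] at hy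
      rw [Real.norm_eq_abs, Real.norm_eq_abs, abs_of_nonpos hx, abs_of_nonpos (hy.trans hx)]
      linarith
    · have h2 : G x = - ∫ y in Set.Ioi x, g y := by
        have := intervalIntegral.integral_Iic_add_Ioi (μ := volume) (f := g) (b := x)
          hgi.integrableOn hgi.integrableOn
        simp only [hG]
        linarith
      rw [h2, norm_neg]
      refine key _ measurableSet_Ioi fun y hy => ?_
      rw [Set.mem_Ioi] at hy
      rw [Real.norm_eq_abs, Real.norm_eq_abs, abs_of_nonneg hx, abs_of_nonneg (hx.trans hy.le)]
      exact hy.le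
  · obtain ⟨C, hC⟩ := g.decay' k n
    refine ⟨C, fun x => ?_⟩
    rw [norm_iteratedFDeriv_eq_norm_iteratedDeriv, iteratedDeriv_succ', hderiv,
      ← norm_iteratedFDeriv_eq_norm_iteratedDeriv]
    exact hC x

/-- The (negative of the) Lévy exponent integral. -/
noncomputable def KK (α t : ℝ) : ℝ :=
  ∫ u in Set.Ioi (0 : ℝ), (Real.cos (t * u) - 1) * u ^ (-1 - α)

lemma KK_scale (α s t : ℝ) (hs : 0 < s) : KK α (s * t) = s ^ α * KK α t := by
  unfold KK
  have h := integral_comp_mul_left_Ioi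
    (fun u : ℝ => (Real.cos (t * u) - 1) * u ^ (-1 - α)) 0 hs
  rw [mul_zero] at h
  have h2 : ∫ u in Set.Ioi (0 : ℝ), (Real.cos (s * t * u) - 1) * u ^ (-1 - α)
      = s ^ (1 + α) * ∫ u in Set.Ioi (0 : ℝ),
        (Real.cos (t * (s * u)) - 1) * (s * u) ^ (-1 - α) := by
    rw [← integral_const_mul]
    refine setIntegral_congr_fun measurableSet_Ioi fun u hu => ?_
    have hu' : (0:ℝ) < u := hu
    rw [Real.mul_rpow hs.le hu'.le]
    have : s ^ (1 + α) * s ^ (-1 - α) = 1 := by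
      rw [← Real.rpow_add hs]; simp
    have e : t * (s * u) = s * t * u := by ring
    rw [e]
    linear_combination (-(Real.cos (s * t * u) - 1) * u ^ (-1 - α)) * this
  rw [h2, h, smul_eq_mul, ← mul_assoc]
  congr 1
  rw [Real.rpow_add hs, Real.rpow_one]
  field_simp

lemma KK_neg (α t : ℝ) : KK α (-t) = KK α t := by
  unfold KK
  simp [Real.cos_neg]

lemma KK_nonpos (α t : ℝ) : KK α t ≤ 0 := by
  unfold KK
  refine setIntegral_nonpos measurableSet_Ioi fun u hu => ?_
  have hu' : (0:ℝ) < u := hu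
  exact mul_nonpos_of_nonpos_of_nonneg (by linarith [Real.cos_le_one (t * u)])
    (Real.rpow_nonneg hu'.le _)

lemma KK_eq (α t : ℝ) (hα : 0 < α) : KK α t = |t| ^ α * KK α 1 := by
  rcases eq_or_ne t 0 with rfl | ht
  · simp [KK, Real.zero_rpow hα.ne']
  · have h1 : KK α t = KK α |t| := by
      rcases abs_choice t with h | h
      · rw [h]
      · rw [h, KK_neg]
    rw [h1, ← KK_scale _ _ _ (abs_pos.mpr ht), mul_one]

lemma KK_continuous (α : ℝ) (hα : 0 < α) : Continuous (KK α) := by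
  have : KK α = fun t => |t| ^ α * KK α 1 := by ext t; exact KK_eq α t hα
  rw [this]
  exact (continuous_abs.rpow_const fun _ => Or.inr hα.le).mul continuous_const

lemma KK_bound (α : ℝ) (hα : 0 < α) (hα2 : α < 2) (t : ℝ) :
    |KK α t| ≤ |KK α 1| * (1 + t ^ 2) := by
  rw [KK_eq α t hα, abs_mul, mul_comm]
  gcongr
  rw [abs_of_nonneg (Real.rpow_nonneg (abs_nonneg t) _)]
  rcases le_total |t| 1 with h | h
  · have := Real.rpow_le_one (abs_nonneg t) h hα.le
    nlinarith [sq_nonneg t]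
  · have := Real.rpow_le_rpow_of_exponent_le h hα2.le
    rw [Real.rpow_two, sq_abs] at this
    linarith

/-- Integrating a Fourier integral against `μ`. -/
lemma fourier_mu (μ : Measure ℝ) [IsProbabilityMeasure μ] (f : ℝ → ℂ) (hf : Integrable f) (s : ℝ) :
    ∫ x, (∫ v : ℝ, Complex.exp ((2 * Real.pi * (v * (s * x)) : ℝ) * Complex.I) * f v) ∂μ =
      ∫ v : ℝ, (∫ x, Complex.exp (Complex.I * ((2 * Real.pi * (s * v) : ℝ) : ℂ) * x) ∂μ) * f v := by
  rw [integral_integral_swap]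
  · congr 1
    ext v
    rw [← integral_mul_const]
    congr 1
    ext x
    congr 2
    push_cast; ring
  · have h1 : Integrable (fun p : ℝ × ℝ => f p.2) (μ.prod volume) := hf.comp_snd μ
    refine h1.norm.mono' ?_ ?_
    · refine AEStronglyMeasurable.mul ?_ h1.1
      apply Continuous.aestronglyMeasurable
      fun_prop
    · refine Filter.Eventually.of_forall fun p => ?_
      simp only [Function.uncurry]
      rw [norm_mul, Complex.norm_exp_ofReal_mul_I, one_mul]

lemma ww_integrable (α : ℝ) (hα : 0 < α) (hα2 : α < 2) :
    IntegrableOn (fun u : ℝ => min 1 (u ^ 2) * u ^ (-1 - α)) (Set.Ioi 0) := by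
  rw [← Set.Ioc_union_Ioi_eq_Ioi (zero_le_one : (0:ℝ) ≤ 1)]
  refine IntegrableOn.union ?_ ?_
  · have h := (intervalIntegral.intervalIntegrable_rpow' (a := 0) (b := 1)
      (r := 1 - α) (by linarith))
    rw [intervalIntegrable_iff_integrableOn_Ioc_of_le zero_le_one] at h
    refine h.congr_fun (fun u hu => ?_) measurableSet_Ioc
    simp only
    have h0 := hu.1
    rw [min_eq_right (by nlinarith [hu.1, hu.2]), ← Real.rpow_two, ← Real.rpow_add hu.1]
    congr 1; ring
  · refine (integrableOn_Ioi_rpow_of_lt (a := -1 - α) (by linarith) one_pos).congr_fun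
      (fun u hu => ?_) measurableSet_Ioi
    have hu' : (1:ℝ) < u := hu
    simp only
    rw [min_eq_left (by nlinarith), one_mul]

lemma schwartz_bdd (g : 𝓢(ℝ, ℝ)) : ∃ C, 0 ≤ C ∧ ∀ x, |g x| ≤ C := by
  obtain ⟨C, hCpos, hC⟩ := g.decay 0 0
  refine ⟨C, ?_, fun x => ?_⟩
  · exact hCpos.le
  · have := hC x
    rw [norm_iteratedFDeriv_zero] at this
    simpa using this

lemma schwartz_mul_bdd (g : 𝓢(ℝ, ℝ)) : ∃ C, 0 ≤ C ∧ ∀ x, |x * g x| ≤ C := by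
  obtain ⟨C, hCpos, hC⟩ := g.decay 1 0
  refine ⟨C, ?_, fun x => ?_⟩
  · exact hCpos.le
  · have := hC x
    rw [norm_iteratedFDeriv_zero] at this
    rw [abs_mul]
    simpa using this

lemma schwartz_lip (g : 𝓢(ℝ, ℝ)) : ∃ C, 0 ≤ C ∧ ∀ x y, |g x - g y| ≤ C * |x - y| := by
  obtain ⟨C, hCpos, hC⟩ := g.decay 0 1
  refine ⟨C, ?_, fun x y => ?_⟩
  · exact hCpos.le
  · have := Convex.norm_image_sub_le_of_norm_deriv_le (𝕜 := ℝ) (f := g) (C := C) (s := Set.univ)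
      (x := y) (y := x)
      (fun z _ => g.differentiableAt) (fun z _ => ?_) convex_univ trivial trivial
    · simpa using this
    · have := hC z
      rw [norm_iteratedFDeriv_eq_norm_iteratedDeriv, iteratedDeriv_one] at this
      simpa using this

lemma inner_integrable (α : ℝ) (hα : 0 < α) (hα2 : α < 2) (g : 𝓢(ℝ, ℝ)) :
    ∃ C, ∀ x : ℝ, IntegrableOn (fun u : ℝ => (g (x + u) - g (x - u)) * u ^ (-α)) (Set.Ioi 0) ∧
      |∫ u in Set.Ioi (0 : ℝ), (g (x + u) - g (x - u)) * u ^ (-α)| ≤ C := by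
  obtain ⟨L, hL0, hL⟩ := schwartz_lip g
  set J : ℝ → ℝ := (Set.Ioc (0:ℝ) 1).indicator (fun u => 2 * L * u ^ (1 - α)) with hJ
  have hJi : Integrable J := by
    have h := (intervalIntegral.intervalIntegrable_rpow' (a := 0) (b := 1)
      (r := 1 - α) (by linarith))
    rw [intervalIntegrable_iff_integrableOn_Ioc_of_le zero_le_one] at h
    exact (integrable_indicator_iff measurableSet_Ioc).2 (h.const_mul _)
  have hgi : Integrable g := g.integrable
  refine ⟨(∫ u, J u) + (∫ u, ‖g u‖) + ∫ u, ‖g u‖, fun x => ?_⟩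
  have h1 : Integrable (fun u => ‖g (x + u)‖) := (hgi.comp_add_left x).norm
  have h2 : Integrable (fun u => ‖g (x - u)‖) := (hgi.comp_sub_left x).norm
  have hD : Integrable (fun u => J u + ‖g (x + u)‖ + ‖g (x - u)‖) := (hJi.add h1).add h2
  have hJ0 : ∀ u, 0 ≤ J u := by
    intro u
    refine Set.indicator_nonneg (fun u hu => ?_) u
    have := Real.rpow_nonneg hu.1.le (1 - α)
    positivity
  have hb : ∀ u ∈ Set.Ioi (0:ℝ), ‖(g (x + u) - g (x - u)) * u ^ (-α)‖ ≤
      J u + ‖g (x + u)‖ + ‖g (x - u)‖ := by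
    intro u hu
    have hu' : (0:ℝ) < u := hu
    have hp := Real.rpow_nonneg hu'.le (-α)
    rw [norm_mul, Real.norm_eq_abs (u ^ (-α)), abs_of_nonneg hp]
    rcases le_or_gt u 1 with h | h
    · have e : J u = 2 * L * u ^ (1 - α) := by
        have hmem : u ∈ Set.Ioc (0:ℝ) 1 := ⟨hu', h⟩
        rw [hJ, Set.indicator_of_mem hmem]
      have e2 : u ^ (1 - α) = u * u ^ (-α) := by
        rw [sub_eq_add_neg, Real.rpow_add hu', Real.rpow_one]
      have h3 : ‖g (x + u) - g (x - u)‖ ≤ 2 * L * u := by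
        have := hL (x + u) (x - u)
        rw [show x + u - (x - u) = 2 * u by ring, abs_of_pos (by linarith : 0 < 2 * u)] at this
        rw [Real.norm_eq_abs]; linarith
      have := mul_le_mul_of_nonneg_right h3 hp
      rw [e, e2]
      have := norm_nonneg (g (x + u)); have := norm_nonneg (g (x - u))
      linarith
    · have h3 : u ^ (-α) ≤ 1 := Real.rpow_le_one_of_one_le_of_nonpos h.le (by linarith)
      have h4 := mul_le_mul_of_nonneg_left h3 (norm_nonneg (g (x + u) - g (x - u)))
      have h5 := norm_sub_le (g (x + u)) (g (x - u))
      have := hJ0 u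
      linarith
  have hb' : ∀ᵐ u ∂(volume.restrict (Set.Ioi (0:ℝ))), ‖(g (x + u) - g (x - u)) * u ^ (-α)‖ ≤
      J u + ‖g (x + u)‖ + ‖g (x - u)‖ :=
    (ae_restrict_iff' measurableSet_Ioi).2 (Filter.Eventually.of_forall hb)
  constructor
  · refine Integrable.mono' hD.integrableOn ?_ hb'
    apply Measurable.aestronglyMeasurable
    have := g.continuous.measurable
    fun_prop
  · calc _ ≤ ∫ u in Set.Ioi (0:ℝ), (J u + ‖g (x + u)‖ + ‖g (x - u)‖) :=
          norm_integral_le_of_norm_le hD.integrableOn hb'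
      _ ≤ ∫ u, (J u + ‖g (x + u)‖ + ‖g (x - u)‖) := by
          refine setIntegral_le_integral hD (Filter.Eventually.of_forall fun u => ?_)
          have := hJ0 u
          simp only [Pi.zero_apply]
          positivity
      _ = _ := by
          have h12 : Integrable (fun u => J u + ‖g (x + u)‖) := hJi.add h1
          rw [integral_add h12 h2, integral_add hJi h1,
            integral_add_left_eq_self (fun u => ‖g u‖) x,
            integral_sub_left_eq_self (fun u => ‖g u‖) volume x]

lemma inner_measurable (α : ℝ) (g : 𝓢(ℝ, ℝ)) : StronglyMeasurable
    (fun x : ℝ => ∫ u in Set.Ioi (0 : ℝ), (g (x + u) - g (x - u)) * u ^ (-α)) := by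
  refine StronglyMeasurable.integral_prod_right
    (f := fun x u : ℝ => (g (x + u) - g (x - u)) * u ^ (-α)) ?_
  apply Measurable.stronglyMeasurable
  unfold Function.uncurry
  have := g.continuous.measurable
  fun_prop

lemma second_diff_bound (g G : 𝓢(ℝ, ℝ)) (hG : ∀ x, HasDerivAt G (g x) x) :
    ∃ C, 0 ≤ C ∧ ∀ x u : ℝ, 0 ≤ u → |G (x + u) + G (x - u) - 2 * G x| ≤ C * min 1 (u ^ 2) := by
  obtain ⟨L, hL0, hL⟩ := schwartz_lip g
  obtain ⟨B, hB0, hB⟩ := schwartz_bdd G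
  refine ⟨4 * B + 2 * L, by positivity, fun x u hu => ?_⟩
  have hq : |G (x + u) + G (x - u) - 2 * G x| ≤ 2 * L * u ^ 2 := by
    have := norm_image_sub_le_of_norm_deriv_le_segment' (a := 0) (b := u)
      (f := fun u => G (x + u) + G (x - u) - 2 * G x)
      (f' := fun u => g (x + u) - g (x - u)) (C := 2 * L * u) ?_ ?_ u ⟨hu, le_rfl⟩
    · simp only [add_zero, sub_zero, Real.norm_eq_abs] at this
      rw [show G x + G x - 2 * G x = 0 by ring, sub_zero] at this
      nlinarith
    · intro t _
      have h1 := (hG (x + t)).comp_const_add x t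
      have h2 := (hG (x - t)).comp_const_sub x t
      exact (((h1.add h2).sub_const (2 * G x)).congr_deriv (by ring)).hasDerivWithinAt
    · intro t ht
      have := hL (x + t) (x - t)
      rw [show x + t - (x - t) = 2 * t by ring, abs_of_nonneg (by linarith [ht.1] : 0 ≤ 2 * t)] at this
      rw [Real.norm_eq_abs]
      nlinarith [ht.2]
  have hbd : |G (x + u) + G (x - u) - 2 * G x| ≤ 4 * B := by
    have h1 := abs_le.1 (hB (x + u)); have h2 := abs_le.1 (hB (x - u)); have h3 := abs_le.1 (hB x)
    rw [abs_le]; constructor <;> linarith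
  rcases min_choice 1 (u ^ 2) with h | h <;> rw [h] <;> nlinarith [sq_nonneg u]

lemma second_diff_integrable (α : ℝ) (hα : 0 < α) (hα2 : α < 2)
    (g G : 𝓢(ℝ, ℝ)) (hG : ∀ x, HasDerivAt G (g x) x) (x : ℝ) :
    IntegrableOn (fun u => (G (x + u) + G (x - u) - 2 * G x) * u ^ (-1 - α)) (Set.Ioi 0) := by
  obtain ⟨C, hC0, hC⟩ := second_diff_bound g G hG
  refine Integrable.mono' ((ww_integrable α hα hα2).const_mul C) ?_ ?_
  · apply Measurable.aestronglyMeasurable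
    have := G.continuous.measurable
    fun_prop
  · refine (ae_restrict_iff' measurableSet_Ioi).2 (Filter.Eventually.of_forall fun u hu => ?_)
    have hu' : (0:ℝ) < u := hu
    have hp := Real.rpow_nonneg hu'.le (-1 - α)
    rw [norm_mul, Real.norm_eq_abs (u ^ (-1 - α)), abs_of_nonneg hp, ← mul_assoc]
    exact mul_le_mul_of_nonneg_right (hC x u hu'.le) hp

lemma inner_parts (α : ℝ) (hα : 0 < α) (hα2 : α < 2)
    (g G : 𝓢(ℝ, ℝ)) (hG : ∀ x, HasDerivAt G (g x) x) (x : ℝ) :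
    ∫ u in Set.Ioi (0 : ℝ), (g (x + u) - g (x - u)) * u ^ (-α) =
      α * ∫ u in Set.Ioi (0 : ℝ), (G (x + u) + G (x - u) - 2 * G x) * u ^ (-1 - α) := by
  obtain ⟨C, hC0, hC⟩ := second_diff_bound g G hG
  obtain ⟨_, hI⟩ := inner_integrable α hα hα2 g
  have hS := second_diff_integrable α hα hα2 g G hG x
  have hbound : ∀ u : ℝ, 0 < u → ‖(G (x + u) + G (x - u) - 2 * G x) * u ^ (-α)‖ ≤
      C * min 1 (u ^ 2) * u ^ (-α) := by
    intro u hu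
    have hp := Real.rpow_nonneg hu.le (-α)
    rw [norm_mul, Real.norm_eq_abs (u ^ (-α)), abs_of_nonneg hp]
    exact mul_le_mul_of_nonneg_right (hC x u hu.le) hp
  have hmain := integral_Ioi_mul_deriv_eq_deriv_mul (a := 0) (a' := (0:ℝ)) (b' := (0:ℝ))
    (u := fun u => G (x + u) + G (x - u) - 2 * G x) (u' := fun u => g (x + u) - g (x - u))
    (v := fun u => u ^ (-α)) (v' := fun u => -α * u ^ (-α - 1)) ?_ ?_ ?_ (hI x).1 ?_ ?_
  · have e : ∫ u in Set.Ioi (0 : ℝ), (G (x + u) + G (x - u) - 2 * G x) * (-α * u ^ (-α - 1))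
        = -α * ∫ u in Set.Ioi (0 : ℝ), (G (x + u) + G (x - u) - 2 * G x) * u ^ (-1 - α) := by
      rw [← integral_const_mul]
      congr 1; ext u
      rw [show -α - 1 = -1 - α by ring]; ring
    rw [e] at hmain
    linarith
  · intro t _
    have h1 := (hG (x + t)).comp_const_add x t
    have h2 := (hG (x - t)).comp_const_sub x t
    exact ((h1.add h2).sub_const (2 * G x)).congr_deriv (by ring)
  · intro t ht
    exact Real.hasDerivAt_rpow_const (Or.inl (ne_of_gt ht))
  · refine (hS.const_mul (-α)).congr (Filter.Eventually.of_forall fun u => ?_)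
    simp only [Pi.mul_apply]
    rw [show -α - 1 = -1 - α by ring]; ring
  · have hl : Filter.Tendsto (fun u : ℝ => C * u ^ (2 - α)) (nhdsWithin 0 (Set.Ioi 0)) (nhds 0) := by
      have : ContinuousAt (fun u : ℝ => C * u ^ (2 - α)) 0 :=
        continuousAt_const.mul (Real.continuousAt_rpow_const _ _ (Or.inr (by linarith)))
      have h := this.tendsto
      simp only [Real.zero_rpow (by linarith : 2 - α ≠ 0), mul_zero] at h
      exact h.mono_left nhdsWithin_le_nhds
    refine squeeze_zero_norm' ?_ hl
    filter_upwards [self_mem_nhdsWithin] with u hu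
    have hu' : (0:ℝ) < u := hu
    refine (hbound u hu').trans ?_
    rw [sub_eq_add_neg, Real.rpow_add hu', Real.rpow_two, mul_assoc]
    have hp := Real.rpow_nonneg hu'.le (-α)
    gcongr
    exact min_le_right _ _
  · have hl : Filter.Tendsto (fun u : ℝ => C * u ^ (-α)) Filter.atTop (nhds 0) := by
      simpa using (tendsto_rpow_neg_atTop hα).const_mul C
    refine squeeze_zero_norm' ?_ hl
    filter_upwards [Filter.eventually_gt_atTop 0] with u hu'
    refine (hbound u hu').trans ?_
    have hp := Real.rpow_nonneg hu'.le (-α)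
    gcongr
    calc C * min 1 (u ^ 2) ≤ C * 1 := by gcongr; exact min_le_left _ _
      _ = C := mul_one C

lemma one_sub_cos_bound (t u : ℝ) : |Real.cos (t * u) - 1| ≤ 2 * (1 + t ^ 2) * min 1 (u ^ 2) := by
  have h1 := Real.one_sub_sq_div_two_le_cos (x := t * u)
  have h2 := Real.neg_one_le_cos (t * u)
  have h3 := Real.cos_le_one (t * u)
  rw [abs_le]
  rcases min_choice 1 (u ^ 2) with h | h <;> rw [h] <;> constructor <;>
    nlinarith [sq_nonneg u, sq_nonneg t, mul_nonneg (sq_nonneg t) (sq_nonneg u)]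

/-- The fractional second-difference operator as a Fourier multiplier. -/
lemma fourier_second_diff (α : ℝ) (hα : 0 < α) (hα2 : α < 2) (G : ℝ → ℝ) (f : ℝ → ℂ)
    (hf : Integrable f) (hf2 : Integrable (fun v : ℝ => (1 + (2 * Real.pi * v) ^ 2) * ‖f v‖))
    (hinv : ∀ y : ℝ, (G y : ℂ) =
      ∫ v : ℝ, Complex.exp ((2 * Real.pi * (v * y) : ℝ) * Complex.I) * f v) (x : ℝ) :
    ((∫ u in Set.Ioi (0 : ℝ), (G (x + u) + G (x - u) - 2 * G x) * u ^ (-1 - α) : ℝ) : ℂ) =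
      ∫ v : ℝ, Complex.exp ((2 * Real.pi * (v * x) : ℝ) * Complex.I) *
        (((2 * KK α (2 * Real.pi * v) : ℝ) : ℂ) * f v) := by
  have hei : ∀ y : ℝ, Integrable
      (fun v : ℝ => Complex.exp ((2 * Real.pi * (v * y) : ℝ) * Complex.I) * f v) := by
    intro y
    refine hf.norm.mono' ?_ ?_
    · refine AEStronglyMeasurable.mul ?_ hf.1
      apply Continuous.aestronglyMeasurable
      fun_prop
    · refine Filter.Eventually.of_forall fun p => ?_
      rw [norm_mul, Complex.norm_exp_ofReal_mul_I, one_mul]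
  have hH : ∀ u : ℝ, ((G (x + u) + G (x - u) - 2 * G x : ℝ) : ℂ) =
      ∫ v : ℝ, Complex.exp ((2 * Real.pi * (v * x) : ℝ) * Complex.I) *
        (((2 * (Real.cos (2 * Real.pi * v * u) - 1) : ℝ) : ℂ) * f v) := by
    intro u
    push_cast [hinv]
    rw [← integral_const_mul]
    have a1 := hei (x + u); have a2 := hei (x - u); have a3 := (hei x).const_mul 2
    push_cast at a1 a2 a3
    have a12 := a1.add a2
    simp only [Pi.add_def] at a12
    rw [← integral_add a1 a2, ← integral_sub a12 a3]
    congr 1; ext v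
    have e1 : Complex.exp (2 * Real.pi * (v * (x + u)) * Complex.I) =
        Complex.exp (2 * Real.pi * (v * x) * Complex.I) *
          Complex.exp ((2 * Real.pi * v * u) * Complex.I) := by
      rw [← Complex.exp_add]; congr 1; ring
    have e2 : Complex.exp (2 * Real.pi * (v * (x - u)) * Complex.I) =
        Complex.exp (2 * Real.pi * (v * x) * Complex.I) *
          Complex.exp (-(2 * Real.pi * v * u) * Complex.I) := by
      rw [← Complex.exp_add]; congr 1; ring
    rw [e1, e2, Complex.cos]
    ring
  have hswap : Integrable (Function.uncurry fun (u v : ℝ) =>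
      Complex.exp ((2 * Real.pi * (v * x) : ℝ) * Complex.I) *
        (((2 * ((Real.cos (2 * Real.pi * v * u) - 1) * u ^ (-1 - α)) : ℝ) : ℂ) * f v))
      ((volume.restrict (Set.Ioi (0:ℝ))).prod volume) := by
    have hdom := ((ww_integrable α hα hα2).const_mul 4).mul_prod (ν := volume) hf2
    refine hdom.mono' ?_ ?_
    · refine AEStronglyMeasurable.mul ?_ (AEStronglyMeasurable.mul ?_ ?_)
      · apply Continuous.aestronglyMeasurable
        fun_prop
      · apply Measurable.aestronglyMeasurable
        fun_prop
      · exact hf.1.comp_snd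
    · have : ∀ᵐ p ∂((volume.restrict (Set.Ioi (0:ℝ))).prod (volume : Measure ℝ)), p.1 ∈ Set.Ioi (0:ℝ) := 
        Measure.quasiMeasurePreserving_fst.ae (ae_restrict_mem measurableSet_Ioi)
      filter_upwards [this] with p hp
      have hp' : (0:ℝ) < p.1 := hp
      simp only [Function.uncurry]
      rw [norm_mul, Complex.norm_exp_ofReal_mul_I, one_mul, norm_mul, Complex.norm_real, norm_mul,
        norm_mul, Real.norm_eq_abs, Real.norm_eq_abs, Real.norm_eq_abs, abs_two,
        abs_of_nonneg (Real.rpow_nonneg hp'.le _)]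
      have h1 := one_sub_cos_bound (2 * Real.pi * p.2) p.1
      have h2 := mul_le_mul_of_nonneg_right h1
        (mul_nonneg (Real.rpow_nonneg hp'.le (-1 - α)) (norm_nonneg (f p.2)))
      nlinarith
  calc _ = ∫ u in Set.Ioi (0:ℝ), ∫ v : ℝ, 
        Complex.exp ((2 * Real.pi * (v * x) : ℝ) * Complex.I) *
        (((2 * ((Real.cos (2 * Real.pi * v * u) - 1) * u ^ (-1 - α)) : ℝ) : ℂ) * f v) := by
        rw [← integral_complex_ofReal]
        congr 1; ext u
        rw [Complex.ofReal_mul, hH, ← integral_mul_const]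
        congr 1; ext v
        push_cast; ring
    _ = ∫ v : ℝ, ∫ u in Set.Ioi (0:ℝ), 
        Complex.exp ((2 * Real.pi * (v * x) : ℝ) * Complex.I) *
        (((2 * ((Real.cos (2 * Real.pi * v * u) - 1) * u ^ (-1 - α)) : ℝ) : ℂ) * f v) :=
        integral_integral_swap hswap
    _ = _ := by
        congr 1; ext v
        rw [integral_const_mul, integral_mul_const, integral_complex_ofReal, integral_const_mul]
        rfl

lemma deriv_left (μ : Measure ℝ) [IsProbabilityMeasure μ]
    (g G : 𝓢(ℝ, ℝ)) (hG : ∀ x, HasDerivAt G (g x) x) :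
    HasDerivAt (fun s : ℝ => ∫ x, G (s * x) ∂μ) (∫ x, x * g x ∂μ) 1 := by
  obtain ⟨C, hC0, hC⟩ := schwartz_mul_bdd g
  obtain ⟨B, hB0, hB⟩ := schwartz_bdd G
  have h := hasDerivAt_integral_of_dominated_loc_of_deriv_le (μ := μ) (𝕜 := ℝ)
    (F := fun s x => G (s * x)) (F' := fun s x => x * g (s * x)) (x₀ := 1)
    (s := Set.Ioo (1/2) 2) (bound := fun _ => 2 * C) (Ioo_mem_nhds (by norm_num) (by norm_num))
    ?_ ?_ ?_ ?_ (integrable_const _) ?_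
  · simpa using h.2
  · refine Filter.Eventually.of_forall fun s => Continuous.aestronglyMeasurable ?_
    have := G.continuous
    fun_prop
  · refine Integrable.mono' (integrable_const B) ?_ (Filter.Eventually.of_forall fun x => hB _)
    refine Continuous.aestronglyMeasurable ?_
    have := G.continuous
    fun_prop
  · refine Continuous.aestronglyMeasurable ?_
    have := g.continuous
    fun_prop
  · refine Filter.Eventually.of_forall fun x s hs => ?_
    have h1 := hC (s * x)
    rw [mul_assoc, abs_mul, abs_of_pos (by linarith [hs.1] : 0 < s)] at h1
    rw [Real.norm_eq_abs]
    nlinarith [hs.1, abs_nonneg (x * g (s * x))]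
  · refine Filter.Eventually.of_forall fun x s hs => ?_
    have h1 : HasDerivAt (fun s : ℝ => s * x) x s := by simpa using (hasDerivAt_id s).mul_const x
    have h2 := (hG (s * x)).comp s h1
    exact h2.congr_deriv (mul_comm _ _)

lemma deriv_right (α : ℝ) (hα : 0 < α) (hα2 : α < 2) (c : ℝ → ℝ) (hc : Continuous c)
    (hc0 : ∀ v, c v ≤ 0) (f : ℝ → ℂ) (hf : Integrable f)
    (hcf : Integrable (fun v => |c v| * ‖f v‖)) :
    HasDerivAt (fun s : ℝ => ∫ v, ((Real.exp (s ^ α * c v) : ℝ) : ℂ) * f v)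
      (∫ v, ((α * c v * Real.exp (c v) : ℝ) : ℂ) * f v) 1 := by
  have h := hasDerivAt_integral_of_dominated_loc_of_deriv_le (μ := volume) (𝕜 := ℝ)
    (F := fun s v => ((Real.exp (s ^ α * c v) : ℝ) : ℂ) * f v)
    (F' := fun s v => ((Real.exp (s ^ α * c v) * (α * s ^ (α - 1) * c v) : ℝ) : ℂ) * f v) (x₀ := 1)
    (s := Set.Ioo (1/2) 2) (bound := fun v => 2 * α * (|c v| * ‖f v‖))
    (Ioo_mem_nhds (by norm_num) (by norm_num))
    ?_ ?_ ?_ ?_ (hcf.const_mul _) ?_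
  · refine h.2.congr_deriv ?_
    congr 1; ext v
    simp only [Real.one_rpow, one_mul, mul_one]
    congr 2; ring
  · refine Filter.Eventually.of_forall fun s => AEStronglyMeasurable.mul ?_ hf.1
    refine Continuous.aestronglyMeasurable ?_
    fun_prop
  · refine hf.norm.mono' (AEStronglyMeasurable.mul ?_ hf.1) ?_
    · refine Continuous.aestronglyMeasurable ?_
      fun_prop
    · refine Filter.Eventually.of_forall fun v => ?_
      rw [norm_mul, Complex.norm_real, Real.norm_eq_abs, Real.abs_exp, Real.one_rpow, one_mul]
      have : Real.exp (c v) ≤ 1 := Real.exp_le_one_iff.2 (hc0 v)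
      nlinarith [norm_nonneg (f v)]
  · refine AEStronglyMeasurable.mul ?_ hf.1
    refine Continuous.aestronglyMeasurable ?_
    fun_prop
  · refine Filter.Eventually.of_forall fun v s hs => ?_
    have hs0 : 0 < s := by linarith [hs.1]
    have hp : s ^ (α - 1) ≤ 2 := by
      rcases le_total 1 s with h1 | h1
      · calc s ^ (α - 1) ≤ s ^ (1:ℝ) := Real.rpow_le_rpow_of_exponent_le h1 (by linarith)
          _ = s := Real.rpow_one s
          _ ≤ 2 := hs.2.le
      · calc s ^ (α - 1) ≤ s ^ (-1:ℝ) :=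
              Real.rpow_le_rpow_of_exponent_ge hs0 h1 (by linarith)
          _ = s⁻¹ := Real.rpow_neg_one s
          _ ≤ (1/2)⁻¹ := by gcongr; exact hs.1.le
          _ = 2 := by norm_num
    have he : Real.exp (s ^ α * c v) ≤ 1 := Real.exp_le_one_iff.2
      (mul_nonpos_of_nonneg_of_nonpos (Real.rpow_nonneg hs0.le _) (hc0 v))
    have hp0 := Real.rpow_nonneg hs0.le (α - 1)
    rw [norm_mul, Complex.norm_real, Real.norm_eq_abs, abs_mul, abs_mul, abs_mul, Real.abs_exp,
      abs_of_pos hα, abs_of_nonneg hp0, ← mul_assoc (2 * α)]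
    refine mul_le_mul_of_nonneg_right ?_ (norm_nonneg _)
    calc Real.exp (s ^ α * c v) * (α * s ^ (α - 1) * |c v|) ≤ 1 * (α * 2 * |c v|) := by gcongr
      _ = _ := by ring
  · refine Filter.Eventually.of_forall fun v s hs => ?_
    have hs0 : 0 < s := by linarith [hs.1]
    have h1 := ((Real.hasDerivAt_rpow_const (p := α) (Or.inl hs0.ne')).mul_const (c v)).exp
    exact (h1.ofReal_comp).mul_const (f v)

/-- The Stein identity for derivatives of Schwartz functions. -/
lemma stein_deriv (α m : ℝ) (hα : 0 < α) (hα2 : α < 2) (hm : 0 < m)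
    (μ : Measure ℝ) [IsProbabilityMeasure μ]
    (hcf : ∀ t : ℝ, ∫ x : ℝ, Complex.exp (Complex.I * t * x) ∂μ =
      Complex.exp (((2 * m * KK α t : ℝ) : ℂ)))
    (g G : 𝓢(ℝ, ℝ)) (hG : ∀ x, HasDerivAt G (g x) x) :
    ∫ x : ℝ, x * g x ∂μ =
      m * ∫ x : ℝ, (∫ u in Set.Ioi (0 : ℝ), (g (x + u) - g (x - u)) * u ^ (-α)) ∂μ := by
  set Gc : 𝓢(ℝ, ℂ) := SchwartzMap.postcompCLM (𝕜 := ℝ) Complex.ofRealCLM G with hGc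
  set f : 𝓢(ℝ, ℂ) := 𝓕 Gc with hfdef
  have hinv : ∀ y : ℝ, (G y : ℂ) =
      ∫ v : ℝ, Complex.exp ((2 * Real.pi * (v * y) : ℝ) * Complex.I) * f v := by
    intro y
    have h1 : 𝓕⁻ f = Gc := FourierTransform.fourierInv_fourier_eq Gc
    have h2 : (𝓕⁻ f) y = Gc y := by rw [h1]
    rw [SchwartzMap.fourierInv_coe, Real.fourierInv_eq'] at h2
    have h3 : Gc y = (G y : ℂ) := rfl
    rw [← h3, ← h2]
    congr 1; ext v
    simp only [smul_eq_mul, RCLike.inner_apply, conj_trivial]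
    congr 4
    ring
  have hf : Integrable f := f.integrable
  have hf2 : Integrable (fun v : ℝ => (1 + (2 * Real.pi * v) ^ 2) * ‖f v‖) := by
    have h2 := (f.integrable_pow_mul volume 2).const_mul ((2 * Real.pi) ^ 2)
    refine (hf.norm.add h2).congr (Filter.Eventually.of_forall fun v => ?_)
    simp only [Pi.add_apply, Real.norm_eq_abs, sq_abs]
    ring
  set c : ℝ → ℝ := fun v => 2 * m * KK α (2 * Real.pi * v) with hc
  have hKc := KK_continuous α hα
  have hcc : Continuous c := by fun_prop
  have hc0 : ∀ v, c v ≤ 0 := fun v =>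
    mul_nonpos_of_nonneg_of_nonpos (by positivity) (KK_nonpos α _)
  have hcfi : Integrable (fun v => |c v| * ‖f v‖) := by
    refine (hf2.const_mul (2 * m * |KK α 1|)).mono' ?_ ?_
    · have := f.continuous
      exact Continuous.aestronglyMeasurable (by fun_prop)
    · refine Filter.Eventually.of_forall fun v => ?_
      have h1 := KK_bound α hα hα2 (2 * Real.pi * v)
      rw [norm_mul, norm_norm, Real.norm_eq_abs, abs_abs, ← mul_assoc]
      refine mul_le_mul_of_nonneg_right ?_ (norm_nonneg _)
      rw [hc]
      simp only
      rw [abs_mul, abs_of_pos (by positivity : 0 < 2 * m), mul_assoc (2 * m)]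
      exact mul_le_mul_of_nonneg_left h1 (by positivity)
  -- scaling identity
  have hscale : ∀ s : ℝ, 0 < s → ((∫ x, G (s * x) ∂μ : ℝ) : ℂ) =
      ∫ v, ((Real.exp (s ^ α * c v) : ℝ) : ℂ) * f v := by
    intro s hs
    rw [← integral_complex_ofReal]
    simp_rw [hinv]
    rw [fourier_mu μ f hf s]
    congr 1; ext v
    rw [hcf, Complex.ofReal_exp, hc, show 2 * Real.pi * (s * v) = s * (2 * Real.pi * v) by ring,
      KK_scale α s _ hs]
    congr 3; ring
  have hL := (deriv_left μ g G hG).ofReal_comp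
  have hR := deriv_right α hα hα2 c hcc hc0 f hf hcfi
  have hLR := hL.unique (hR.congr_of_eventuallyEq (by
    filter_upwards [lt_mem_nhds (zero_lt_one : (0:ℝ) < 1)] with s hs using hscale s hs))
  -- right-hand side
  have hw : Integrable (fun v => (((2 * KK α (2 * Real.pi * v) : ℝ) : ℂ) * f v)) := by
    refine (hcfi.const_mul m⁻¹).mono' ?_ ?_
    · have := f.continuous
      exact Continuous.aestronglyMeasurable (by fun_prop)
    · refine Filter.Eventually.of_forall fun v => ?_
      rw [norm_mul, Complex.norm_real, hc, Real.norm_eq_abs]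
      simp only [abs_mul, abs_two, abs_of_pos hm]
      apply le_of_eq
      field_simp
  have hRHS : ((m * ∫ x : ℝ, (∫ u in Set.Ioi (0 : ℝ), (g (x + u) - g (x - u)) * u ^ (-α)) ∂μ : ℝ) : ℂ)
      = ∫ v, ((α * c v * Real.exp (c v) : ℝ) : ℂ) * f v := by
    have e1 := fourier_mu μ _ hw 1
    simp only [one_mul] at e1
    simp_rw [inner_parts α hα hα2 g G hG]
    rw [integral_const_mul, Complex.ofReal_mul, Complex.ofReal_mul, ← integral_complex_ofReal]
    simp_rw [fourier_second_diff α hα hα2 G f hf hf2 hinv]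
    rw [e1, ← integral_const_mul, ← integral_const_mul]
    congr 1; ext v
    rw [hcf, hc]
    push_cast
    ring
  rw [← hRHS] at hLR
  exact_mod_cast hLR

lemma mu_symm (α m : ℝ) (μ : Measure ℝ) [IsProbabilityMeasure μ]
    (hcf : ∀ t : ℝ, ∫ x : ℝ, Complex.exp (Complex.I * t * x) ∂μ =
      Complex.exp (((2 * m * KK α t : ℝ) : ℂ))) :
    μ.map (fun x => -x) = μ := by
  have : IsProbabilityMeasure (μ.map (fun x : ℝ => -x)) :=
    Measure.isProbabilityMeasure_map measurable_neg.aemeasurable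
  refine Measure.ext_of_charFun ?_
  ext t
  have h : ∀ t : ℝ, charFun μ t = Complex.exp (((2 * m * KK α t : ℝ) : ℂ)) := by
    intro t
    rw [← hcf, charFun_apply_real]
    congr 1; ext x; congr 1; ring
  have h2 : charFun (μ.map (fun x : ℝ => -x)) t = charFun μ (-t) := by
    rw [charFun_apply_real, charFun_apply_real, integral_map measurable_neg.aemeasurable]
    · congr 1; ext x; congr 1; push_cast; ring
    · exact Continuous.aestronglyMeasurable (by fun_prop)
  rw [h2, h, h, KK_neg]

theorem stmt_9 (α m : ℝ) (hα : 0 < α) (hα2 : α < 2) (hm : 0 < m)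
    (μ : Measure ℝ) [IsProbabilityMeasure μ]
    (hcf : ∀ t : ℝ, ∫ x : ℝ, Complex.exp (Complex.I * t * x) ∂μ =
      Complex.exp (((2 * m * ∫ u in Set.Ioi (0 : ℝ),
        (Real.cos (t * u) - 1) * u ^ (-1 - α) : ℝ) : ℂ)))
    (g : SchwartzMap ℝ ℝ) :
    Integrable (fun x : ℝ => x * g x) μ ∧
    (∀ x : ℝ, IntegrableOn (fun u : ℝ => (g (x + u) - g (x - u)) * u ^ (-α)) (Set.Ioi 0)) ∧
    Integrable (fun x : ℝ =>
      ∫ u in Set.Ioi (0 : ℝ), (g (x + u) - g (x - u)) * u ^ (-α)) μ ∧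
    ∫ x : ℝ, x * g x ∂μ =
      m * ∫ x : ℝ, (∫ u in Set.Ioi (0 : ℝ), (g (x + u) - g (x - u)) * u ^ (-α)) ∂μ := by
  have hcf' : ∀ t : ℝ, ∫ x : ℝ, Complex.exp (Complex.I * t * x) ∂μ =
      Complex.exp (((2 * m * KK α t : ℝ) : ℂ)) := hcf
  have hI1 : ∀ g : 𝓢(ℝ, ℝ), Integrable (fun x : ℝ => x * g x) μ := by
    intro g
    obtain ⟨C, hC0, hC⟩ := schwartz_mul_bdd g
    have := g.continuous
    exact Integrable.mono' (integrable_const C) (Continuous.aestronglyMeasurable (by fun_prop))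
      (Filter.Eventually.of_forall hC)
  have hI2 : ∀ g : 𝓢(ℝ, ℝ), Integrable (fun x : ℝ =>
      ∫ u in Set.Ioi (0 : ℝ), (g (x + u) - g (x - u)) * u ^ (-α)) μ := by
    intro g
    obtain ⟨C, hC⟩ := inner_integrable α hα hα2 g
    exact Integrable.mono' (integrable_const C) (inner_measurable α g).aestronglyMeasurable
      (Filter.Eventually.of_forall fun x => (hC x).2)
  have hI3 : ∀ g : 𝓢(ℝ, ℝ), ∀ x : ℝ,
      IntegrableOn (fun u : ℝ => (g (x + u) - g (x - u)) * u ^ (-α)) (Set.Ioi 0) := by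
    intro g x
    obtain ⟨C, hC⟩ := inner_integrable α hα hα2 g
    exact (hC x).1
  refine ⟨hI1 g, hI3 g, hI2 g, ?_⟩
  set r : 𝓢(ℝ, ℝ) :=
    SchwartzMap.compCLMOfContinuousLinearEquiv ℝ (ContinuousLinearEquiv.neg ℝ) g with hr
  have hrx : ∀ x, r x = g (-x) := fun x => rfl
  have hodd : ∀ x, (g - r) x = g x - g (-x) := fun x => rfl
  have hint0 : ∫ x, (g - r) x = 0 := by
    simp_rw [hodd]
    rw [integral_sub g.integrable (by simpa using g.integrable.comp_neg), 
      integral_neg_eq_self (fun x => g x), sub_self]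
  obtain ⟨G, hG⟩ := exists_antideriv (g - r) hint0
  have hst := stein_deriv α m hα hα2 hm μ hcf' (g - r) G hG
  have hsym := mu_symm α m μ hcf'
  have hneg : ∀ h : ℝ → ℝ, ∫ x, h (-x) ∂μ = ∫ x, h x ∂μ := by
    intro h
    conv_rhs => rw [← hsym]
    exact ((MeasurableEquiv.neg ℝ).measurableEmbedding.integral_map h).symm
  have e1 : ∫ x, x * (g - r) x ∂μ = 2 * ∫ x, x * g x ∂μ := by
    have h1 : ∫ x, x * r x ∂μ = - ∫ x, x * g x ∂μ := by
      rw [← hneg (fun x => x * g x), ← integral_neg]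
      congr 1; ext x; rw [hrx]; ring
    have h2 : ∀ x, x * (g - r) x = x * g x - x * r x := fun x => by rw [hodd, hrx]; ring
    simp_rw [h2]
    rw [integral_sub (hI1 g) (hI1 r), h1]; ring
  have e2 : ∫ x, (∫ u in Set.Ioi (0 : ℝ), ((g - r) (x + u) - (g - r) (x - u)) * u ^ (-α)) ∂μ =
      2 * ∫ x, (∫ u in Set.Ioi (0 : ℝ), (g (x + u) - g (x - u)) * u ^ (-α)) ∂μ := by
    have h1 : ∫ x, (∫ u in Set.Ioi (0 : ℝ), (r (x + u) - r (x - u)) * u ^ (-α)) ∂μ =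
        - ∫ x, (∫ u in Set.Ioi (0 : ℝ), (g (x + u) - g (x - u)) * u ^ (-α)) ∂μ := by
      rw [← hneg (fun x => ∫ u in Set.Ioi (0 : ℝ), (g (x + u) - g (x - u)) * u ^ (-α)),
        ← integral_neg]
      congr 1; ext x
      rw [← integral_neg]
      congr 1; ext u
      rw [hrx, hrx, show -(x + u) = -x - u by ring, show -(x - u) = -x + u by ring]
      ring
    have h2 : ∀ x, (∫ u in Set.Ioi (0 : ℝ), ((g - r) (x + u) - (g - r) (x - u)) * u ^ (-α)) =
        (∫ u in Set.Ioi (0 : ℝ), (g (x + u) - g (x - u)) * u ^ (-α)) -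
        ∫ u in Set.Ioi (0 : ℝ), (r (x + u) - r (x - u)) * u ^ (-α) := by
      intro x
      rw [← integral_sub (hI3 g x) (hI3 r x)]
      congr 1; ext u
      rw [hodd, hodd, hrx, hrx]; ring
    simp_rw [h2]
    rw [integral_sub (hI2 g) (hI2 r), h1]; ring
  rw [e1, e2] at hst
  linarith
end
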